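/- For each N ≥ 1, let X₁, …, X_N and Y₁, …, Y_N be 2N independent uniform random variables on [0,1]; run the greedy algorithm closest with threshold r = ∞ (so every arriving point is matched to the nearest free offline point) with offline set {X₁, …, X_N} on the arrival sequence Y₁, Y₂, …, and let ρ_N(t) be the total length of the matching after ⌊tN⌋ arrivals, i.e., the sum over the first ⌊tN⌋ arrivals of the distance between each arriving point and the offline point it is matched to. Then for every fixed t ∈ [0,1), ρ_N(t) converges in probability, as N → ∞, to (1/2)·(1/(1−t) − 1). -/

import Mathlib

open MeasureTheory
open scoped ENNReal

/-- One step of the greedy algorithm `closest` with threshold `r ∈ (0, ∞]`. -/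
noncomputable def closestStep (r : ℝ≥0∞) (S : Finset ℝ) (y : ℝ) : Finset ℝ × Option ℝ :=
  if h : (S.filter fun x => ENNReal.ofReal |x - y| < r).Nonempty then
    let x0 := (((S.filter fun x => ENNReal.ofReal |x - y| < r)).filter
        (fun x => |x - y| =
          (S.filter fun x => ENNReal.ofReal |x - y| < r).inf' h fun x => |x - y|)).min'
      (by
        obtain ⟨b, hb, he⟩ :=
          Finset.exists_mem_eq_inf' h (fun x : ℝ => |x - y|)
        exact ⟨b, Finset.mem_filter.2 ⟨hb, he.symm⟩⟩)
    (S.erase x0, some x0)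
  else (S, none)

/-- The state of the greedy algorithm `closest` after the first `m` arrivals:
free offline points, number of matched online points, total matching length. -/
noncomputable def closestState (r : ℝ≥0∞) (X : Finset ℝ) (y : ℕ → ℝ) : ℕ → Finset ℝ × ℕ × ℝ
  | 0 => (X, 0, 0)
  | m + 1 =>
    match closestStep r (closestState r X y m).1 (y m) with
    | (S', none) => (S', (closestState r X y m).2.1, (closestState r X y m).2.2)
    | (S', some x) =>
        (S', (closestState r X y m).2.1 + 1, (closestState r X y m).2.2 + |x - y m|)

/-- Total length of the matching built by `closest` after the first `m` arrivals,
i.e. the sum over matched arrivals of the distance to the matched offline point. -/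
noncomputable def closestLength (r : ℝ≥0∞) (X : Finset ℝ) (y : ℕ → ℝ) (m : ℕ) : ℝ :=
  (closestState r X y m).2.2

/-- The product of `N` copies of the uniform distribution on `[0,1]`. -/
noncomputable def unifCube (N : ℕ) : Measure (Fin N → ℝ) :=
  Measure.pi fun _ => volume.restrict (Set.Icc 0 1)

namespace Greedy

/-- remove the `j`-th point -/
def rem (j : ℕ) (p : ℕ → ℝ) : ℕ → ℝ := fun i => if i < j then p i else p (i + 1)

def gap (p : ℕ → ℝ) (i : ℕ) : ℝ := p (i + 1) - p i

/-- reflect the `i`-th point between its neighbours -/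
def rfl' (i : ℕ) (p : ℕ → ℝ) : ℕ → ℝ := Function.update p i (p (i - 1) + p (i + 1) - p i)

structure Valid (n : ℕ) (p : ℕ → ℝ) : Prop where
  zero : p 0 = 0
  one : ∀ j, n < j → p j = 1
  lt : ∀ i, i ≤ n → p i < p (i + 1)

noncomputable def idx (n : ℕ) (p : ℕ → ℝ) (y : ℝ) : ℕ :=
  1 + ((Finset.Ico 1 n).filter (fun j => (p j + p (j + 1)) / 2 < y)).card

noncomputable def mid (n : ℕ) (p : ℕ → ℝ) (j : ℕ) : ℝ :=
  if j = 0 then 0 else if n ≤ j then 1 else (p j + p (j + 1)) / 2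

noncomputable def wt (n : ℕ) (j : ℕ) (p : ℕ → ℝ) : ℝ := mid n p j - mid n p (j - 1)

lemma Valid.mono {n : ℕ} {p : ℕ → ℝ} (h : Valid n p) : Monotone p := by
  apply monotone_nat_of_le_succ
  intro i
  by_cases hi : i ≤ n
  · exact (h.lt i hi).le
  · rw [h.one i (by omega), h.one (i+1) (by omega)]

lemma Valid.lt_of_lt {n : ℕ} {p : ℕ → ℝ} (h : Valid n p) {i j : ℕ} (hi : i ≤ n) (hij : i < j) :
    p i < p j := lt_of_lt_of_le (h.lt i hi) (h.mono hij)

lemma Valid.nonneg {n : ℕ} {p : ℕ → ℝ} (h : Valid n p) (i : ℕ) : 0 ≤ p i := by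
  rw [← h.zero]; exact h.mono (Nat.zero_le i)

lemma Valid.le_one {n : ℕ} {p : ℕ → ℝ} (h : Valid n p) (i : ℕ) : p i ≤ 1 := by
  rw [← h.one (i + n + 1) (by omega)]; exact h.mono (by omega)

lemma Valid.gap_nonneg {n : ℕ} {p : ℕ → ℝ} (h : Valid n p) (i : ℕ) : 0 ≤ gap p i :=
  sub_nonneg.2 (h.mono (Nat.le_succ i))

lemma Valid.gap_le_one {n : ℕ} {p : ℕ → ℝ} (h : Valid n p) (i : ℕ) : gap p i ≤ 1 := by
  have := h.nonneg i; have := h.le_one (i+1); unfold gap; linarith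

lemma Valid.sum_gap {n : ℕ} {p : ℕ → ℝ} (h : Valid n p) :
    ∑ i ∈ Finset.range (n + 1), gap p i = 1 := by
  unfold gap
  rw [Finset.sum_range_sub, h.zero, h.one (n+1) (by omega)]; simp

lemma Valid.rem {n : ℕ} {p : ℕ → ℝ} (h : Valid (n + 1) p) {j : ℕ} (h1 : 1 ≤ j)
    (h2 : j ≤ n + 1) : Valid n (rem j p) := by
  refine ⟨?_, ?_, ?_⟩
  · simp [Greedy.rem, h.zero]; omega
  · intro i hi
    simp only [Greedy.rem]
    rw [if_neg (by omega), h.one _ (by omega)]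
  · intro i hi
    simp only [Greedy.rem]
    split_ifs
    · exact h.lt i (by omega)
    · exact h.lt_of_lt (by omega) (by omega)
    · omega
    · exact h.lt (i+1) (by omega)

lemma Valid.mid_mono {n : ℕ} {p : ℕ → ℝ} (h : Valid n p) : Monotone (mid n p) := by
  apply monotone_nat_of_le_succ
  intro i
  have a0 := h.nonneg i
  have a1 := h.nonneg (i+1)
  have a2 := h.nonneg (i+2)
  have b0 := h.le_one i
  have b1 := h.le_one (i+1)
  have b2 := h.le_one (i+2)
  have c1 := h.mono (Nat.le_succ i)
  have c2 := h.mono (Nat.le_succ (i+1))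
  simp only [Nat.succ_eq_add_one] at c1 c2
  unfold mid
  split_ifs <;> first | contradiction | omega | linarith | skip

lemma Valid.wt_nonneg {n : ℕ} {p : ℕ → ℝ} (h : Valid n p) (j : ℕ) : 0 ≤ wt n j p :=
  sub_nonneg.2 (h.mid_mono (by omega))

lemma sum_wt {n : ℕ} (hn : 1 ≤ n) (p : ℕ → ℝ) : ∑ j ∈ Finset.Icc 1 n, wt n j p = 1 := by
  have : ∑ j ∈ Finset.range n, (mid n p (j+1) - mid n p j) = 1 := by
    rw [Finset.sum_range_sub]; simp [mid]; omega
  have h2 := Finset.sum_Ico_add' (fun j => mid n p j - mid n p (j-1)) 0 n 1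
  rw [← this, Finset.range_eq_Ico]
  simp only [Nat.add_sub_cancel] at h2
  rw [h2]
  rfl

lemma Valid.wt_le {n : ℕ} {p : ℕ → ℝ} (h : Valid n p) {j : ℕ} (h1 : 1 ≤ j) (h2 : j ≤ n) :
    wt n j p ≤ gap p (j - 1) + gap p j := by
  obtain ⟨i, rfl⟩ : ∃ i, j = i + 1 := ⟨j - 1, by omega⟩
  have c1 := h.mono (Nat.le_succ i)
  have c2 := h.mono (Nat.le_succ (i+1))
  have hz := h.zero
  have ho := h.one (i+2)
  simp only [Nat.succ_eq_add_one] at c1 c2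
  simp only [wt, mid, gap, Nat.add_sub_cancel]
  by_cases hi : i = 0
  · subst hi
    rw [hz] at *
    split_ifs <;> first | contradiction | omega | linarith | skip
    have := ho (by omega); simp at *; linarith
  · split_ifs <;> first | contradiction | omega | linarith | skip
    have := ho (by omega); linarith

lemma wt_eq {n : ℕ} {p : ℕ → ℝ} {j : ℕ} (h1 : 2 ≤ j) (h2 : j + 1 ≤ n) :
    wt n j p = (gap p (j - 1) + gap p j) / 2 := by
  obtain ⟨i, rfl⟩ : ∃ i, j = i + 1 := ⟨j - 1, by omega⟩
  simp only [wt, mid, gap, Nat.add_sub_cancel]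
  split_ifs <;> first | contradiction | omega | ring

lemma Valid.idx_eq {n : ℕ} {p : ℕ → ℝ} (h : Valid n p) {j : ℕ} (h1 : 1 ≤ j) (h2 : j ≤ n)
    {y : ℝ} (hy : y ∈ Set.Ioc (mid n p (j-1)) (mid n p j)) : idx n p y = j := by
  have : (Finset.Ico 1 n).filter (fun j => (p j + p (j + 1)) / 2 < y) = Finset.Ico 1 j := by
    ext i
    simp only [Finset.mem_filter, Finset.mem_Ico]
    constructor
    · rintro ⟨⟨a, b⟩, c⟩
      refine ⟨a, ?_⟩
      by_contra hij
      have : mid n p j ≤ mid n p i := h.mid_mono (by omega)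
      have h3 : mid n p i = (p i + p (i+1))/2 := by
        unfold mid; rw [if_neg (by omega), if_neg (by omega)]
      have := hy.2
      linarith
    · rintro ⟨a, b⟩
      refine ⟨⟨a, by omega⟩, ?_⟩
      have : mid n p i ≤ mid n p (j-1) := h.mid_mono (by omega)
      have h3 : mid n p i = (p i + p (i+1))/2 := by
        unfold mid; rw [if_neg (by omega), if_neg (by omega)]
      have := hy.1
      linarith
  unfold idx
  rw [this]; simp; omega

lemma idx_mem {n : ℕ} (hn : 1 ≤ n) (p : ℕ → ℝ) (y : ℝ) : idx n p y ∈ Finset.Icc 1 n := by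
  have := Finset.card_filter_le (Finset.Ico 1 n) (fun j => (p j + p (j + 1)) / 2 < y)
  simp only [Nat.card_Ico] at this
  simp only [Finset.mem_Icc, idx]; omega

/-- separation property of `idx` -/
lemma Valid.idx_sep {n : ℕ} {p : ℕ → ℝ} (h : Valid n p) (hn : 1 ≤ n) (y : ℝ) :
    (∀ i, 1 ≤ i → i < idx n p y → (p i + p (i+1))/2 < y) ∧
    (∀ i, idx n p y ≤ i → i < n → y ≤ (p i + p (i+1))/2) := by
  classical
  have hm : ∀ i j, i ≤ j → (p i + p (i+1))/2 ≤ (p j + p (j+1))/2 := by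
    intro i j hij
    have := h.mono hij
    have := h.mono (show i+1 ≤ j+1 by omega)
    linarith
  set T := (Finset.Ico 1 n).filter (fun j => (p j + p (j + 1)) / 2 < y) with hT
  have hidx : idx n p y = 1 + T.card := rfl
  constructor
  · intro i h1 hi
    by_contra hc
    push Not at hc
    have : T ⊆ Finset.Ico 1 i := by
      intro j hj
      simp only [hT, Finset.mem_filter, Finset.mem_Ico] at hj ⊢
      refine ⟨hj.1.1, ?_⟩
      by_contra hij
      have := hm i j (by omega)
      linarith [hj.2]
    have := Finset.card_le_card this
    simp at this; omega
  · intro i hi hin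
    by_contra hc
    push Not at hc
    have : Finset.Ico 1 (i+1) ⊆ T := by
      intro j hj
      simp only [hT, Finset.mem_filter, Finset.mem_Ico] at hj ⊢
      refine ⟨⟨hj.1, by omega⟩, ?_⟩
      have := hm j i (by omega)
      linarith
    have := Finset.card_le_card this
    simp at this; omega

/-- The greedy step in terms of positions. -/
lemma Valid.closestStep {n : ℕ} {p : ℕ → ℝ} (h : Valid n p) (hn : 1 ≤ n) (y : ℝ) :
    closestStep ⊤ ((Finset.Icc 1 n).image p) y =
      (((Finset.Icc 1 n).image p).erase (p (idx n p y)), some (p (idx n p y))) := by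
  classical
  have hJ := idx_mem hn p y
  obtain ⟨s1, s2⟩ := h.idx_sep hn y
  set J := idx n p y with hJdef
  rw [Finset.mem_Icc] at hJ
  have key : ∀ j, 1 ≤ j → j ≤ n → |p J - y| ≤ |p j - y| ∧ (|p j - y| = |p J - y| → p J ≤ p j) := by
    intro j h1 h2
    rcases lt_trichotomy j J with hlt | heq | hgt
    · have e1 := s1 (J-1) (by omega) (by omega)
      rw [show J - 1 + 1 = J by omega] at e1
      have e2 := h.mono (show j ≤ J-1 by omega)
      have e3 := h.lt_of_lt (show j ≤ n by omega) hlt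
      have : |p J - y| < |p j - y| := by
        rw [abs_lt]
        have : |p j - y| = y - p j := by rw [abs_of_nonpos] <;> linarith
        rw [this]
        constructor <;> linarith
      exact ⟨this.le, fun h' => absurd h' (ne_of_gt this)⟩
    · subst heq; exact ⟨le_rfl, fun _ => le_rfl⟩
    · have e1 := s2 J le_rfl (by omega)
      have e2 := h.mono (show J+1 ≤ j by omega)
      have e3 := h.lt_of_lt hJ.2 hgt
      refine ⟨?_, fun _ => e3.le⟩
      rw [abs_le]
      have : |p j - y| = p j - y := by rw [abs_of_nonneg]; linarith
      rw [this]
      constructor <;> linarith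
  have hf : ((Finset.Icc 1 n).image p).filter (fun x => ENNReal.ofReal |x - y| < ⊤) =
      (Finset.Icc 1 n).image p := by
    apply Finset.filter_true_of_mem
    intro x _
    exact ENNReal.ofReal_lt_top
  have hmem : p J ∈ (Finset.Icc 1 n).image p := Finset.mem_image_of_mem _ (Finset.mem_Icc.2 hJ)
  have hne : (((Finset.Icc 1 n).image p).filter (fun x => ENNReal.ofReal |x - y| < ⊤)).Nonempty := by
    rw [hf]; exact ⟨_, hmem⟩
  unfold _root_.closestStep
  rw [dif_pos hne]
  have hinf : (((Finset.Icc 1 n).image p).filter (fun x => ENNReal.ofReal |x - y| < ⊤)).inf' hne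
      (fun x => |x - y|) = |p J - y| := by
    apply le_antisymm
    · apply Finset.inf'_le (fun x => |x - y|)
      rw [hf]; exact hmem
    · apply Finset.le_inf'
      intro x hx
      rw [hf, Finset.mem_image] at hx
      obtain ⟨j, hj, rfl⟩ := hx
      rw [Finset.mem_Icc] at hj
      exact (key j hj.1 hj.2).1
  have hmin : ∀ hh, ((((Finset.Icc 1 n).image p).filter (fun x => ENNReal.ofReal |x - y| < ⊤)).filter
        (fun x => |x - y| =
          (((Finset.Icc 1 n).image p).filter (fun x => ENNReal.ofReal |x - y| < ⊤)).inf' hne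
            fun x => |x - y|)).min' hh = p J := by
    intro hh
    apply le_antisymm
    · apply Finset.min'_le
      rw [Finset.mem_filter, hinf, hf]
      exact ⟨hmem, rfl⟩
    · apply Finset.le_min'
      intro x hx
      rw [Finset.mem_filter, hinf, hf, Finset.mem_image] at hx
      obtain ⟨⟨j, hj, rfl⟩, hx⟩ := hx
      rw [Finset.mem_Icc] at hj
      exact (key j hj.1 hj.2).2 hx
  simp only [hmin]

lemma Valid.erase_image {n : ℕ} {p : ℕ → ℝ} (h : Valid (n+1) p) {j : ℕ} (h1 : 1 ≤ j)
    (h2 : j ≤ n + 1) :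
    ((Finset.Icc 1 (n+1)).image p).erase (p j) = (Finset.Icc 1 n).image (Greedy.rem j p) := by
  ext x
  simp only [Finset.mem_erase, Finset.mem_image, Finset.mem_Icc, Greedy.rem]
  constructor
  · rintro ⟨hx, i, hi, rfl⟩
    rcases lt_trichotomy i j with hlt | heq | hgt
    · exact ⟨i, by omega, by simp [hlt]⟩
    · subst heq; exact absurd rfl hx
    · refine ⟨i-1, by omega, ?_⟩
      rw [if_neg (by omega)]; congr 1; omega
  · rintro ⟨i, hi, rfl⟩
    split_ifs with hij
    · exact ⟨(h.lt_of_lt (by omega) hij).ne, i, by omega, rfl⟩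
    · exact ⟨(h.lt_of_lt (by omega) (by omega)).ne', i+1, by omega, rfl⟩

/-- initial positions -/
noncomputable def pos (N : ℕ) (x : Fin N → ℝ) : ℕ → ℝ :=
  fun j => if j = 0 then 0 else if h : j - 1 < N then x ⟨j - 1, h⟩ else 1

noncomputable def ye (N : ℕ) (y : Fin N → ℝ) : ℕ → ℝ :=
  fun i => if h : i < N then y ⟨i, h⟩ else 0

noncomputable def st (N : ℕ) (ω : (Fin N → ℝ) × (Fin N → ℝ)) : ℕ → (ℕ → ℝ)
  | 0 => pos N ω.1
  | k + 1 => rem (idx (N - k) (st N ω k) (ye N ω.2 k)) (st N ω k)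

noncomputable def dd (N : ℕ) (k : ℕ) (ω : (Fin N → ℝ) × (Fin N → ℝ)) : ℝ :=
  |st N ω k (idx (N - k) (st N ω k) (ye N ω.2 k)) - ye N ω.2 k|

lemma image_pos (N : ℕ) (x : Fin N → ℝ) :
    (Finset.Icc 1 N).image (pos N x) = Finset.image x Finset.univ := by
  ext z
  simp only [Finset.mem_image, Finset.mem_Icc, Finset.mem_univ, true_and]
  constructor
  · rintro ⟨i, hi, rfl⟩
    refine ⟨⟨i-1, by omega⟩, ?_⟩
    unfold pos
    rw [if_neg (by omega), dif_pos (by omega)]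
  · rintro ⟨i, rfl⟩
    refine ⟨i+1, by omega, ?_⟩
    unfold pos
    rw [if_neg (by omega), dif_pos (by simp)]
    simp

lemma st_valid {N : ℕ} {ω : (Fin N → ℝ) × (Fin N → ℝ)} (h : Valid N (pos N ω.1)) :
    ∀ k, k ≤ N → Valid (N - k) (st N ω k)
  | 0, _ => h
  | k + 1, hk => by
    have ih := st_valid h k (by omega)
    have e : N - k = N - (k+1) + 1 := by omega
    have hm := idx_mem (show 1 ≤ N - k by omega) (st N ω k) (ye N ω.2 k)
    rw [Finset.mem_Icc] at hm
    rw [st]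
    rw [e] at ih
    exact ih.rem hm.1 (by omega)

lemma closestState_eq {N : ℕ} {ω : (Fin N → ℝ) × (Fin N → ℝ)} (h : Valid N (pos N ω.1)) :
    ∀ k, k ≤ N →
      (closestState ⊤ (Finset.image ω.1 Finset.univ) (ye N ω.2) k).1 =
        (Finset.Icc 1 (N - k)).image (st N ω k) ∧
      (closestState ⊤ (Finset.image ω.1 Finset.univ) (ye N ω.2) k).2.2 =
        ∑ i ∈ Finset.range k, dd N i ω
  | 0, _ => by
    simp only [closestState, st, Finset.range_zero, Finset.sum_empty, and_true]
    exact (image_pos N ω.1).symm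
  | k + 1, hk => by
    obtain ⟨ih1, ih2⟩ := closestState_eq h k (by omega)
    have hv := st_valid h k (by omega)
    have hstep := hv.closestStep (by omega) (ye N ω.2 k)
    rw [closestState, ih1, hstep]
    have e : N - k = N - (k+1) + 1 := by omega
    have hm := idx_mem (show 1 ≤ N - k by omega) (st N ω k) (ye N ω.2 k)
    rw [Finset.mem_Icc] at hm
    constructor
    · simp only
      rw [st]
      rw [e] at hv
      have := hv.erase_image hm.1 (by omega)
      rw [← this, ← e]
    · simp only
      rw [ih2, Finset.sum_range_succ]; rfl

end Greedy

namespace Greedy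

@[fun_prop]
lemma measurable_gap (i : ℕ) : Measurable (fun p : ℕ → ℝ => gap p i) := by
  unfold gap; fun_prop

lemma measurable_gapv : Measurable (gap : (ℕ → ℝ) → (ℕ → ℝ)) :=
  measurable_pi_lambda _ measurable_gap

lemma measurable_rem (j : ℕ) : Measurable (rem j) := by
  refine measurable_pi_lambda _ fun i => ?_
  unfold rem; split_ifs <;> fun_prop

lemma rfl'_apply (i : ℕ) (p : ℕ → ℝ) (m : ℕ) :
    rfl' i p m = if m = i then p (i - 1) + p (i + 1) - p i else p m := by
  unfold rfl'; rw [Function.update_apply]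

lemma measurable_rfl' (i : ℕ) : Measurable (rfl' i) := by
  refine measurable_pi_lambda _ fun m => ?_
  simp only [rfl'_apply]; split_ifs <;> fun_prop

@[fun_prop]
lemma measurable_wt (n j : ℕ) : Measurable (wt n j) := by
  unfold wt mid; split_ifs <;> fun_prop

noncomputable def nextLaw (n : ℕ) (μ : Measure (ℕ → ℝ)) : Measure (ℕ → ℝ) :=
  ∑ j ∈ Finset.Icc 1 n, (μ.withDensity (fun p => ENNReal.ofReal (wt n j p))).map (rem j)

lemma lintegral_nextLaw (n : ℕ) (μ : Measure (ℕ → ℝ)) {f : (ℕ → ℝ) → ℝ≥0∞} (hf : Measurable f) :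
    ∫⁻ p, f p ∂nextLaw n μ =
      ∑ j ∈ Finset.Icc 1 n, ∫⁻ p, ENNReal.ofReal (wt n j p) * f (rem j p) ∂μ := by
  unfold nextLaw
  rw [lintegral_finsetSum_measure]
  refine Finset.sum_congr rfl fun j _ => ?_
  rw [lintegral_map hf (measurable_rem j),
    lintegral_withDensity_eq_lintegral_mul _ (by fun_prop) (show Measurable (fun p => f (rem j p)) from hf.comp (measurable_rem j))]
  rfl

def Inv (lo hi : ℕ) (μ : Measure (ℕ → ℝ)) : Prop :=
  ∀ i, lo < i → i ≤ hi → μ.map (rfl' i) = μ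

lemma wt_congr {n j : ℕ} {p q : ℕ → ℝ} (hj : 1 ≤ j) (h1 : p (j-1) = q (j-1)) (h2 : p j = q j)
    (h3 : p (j+1) = q (j+1)) : wt n j p = wt n j q := by
  obtain ⟨i, rfl⟩ : ∃ i, j = i + 1 := ⟨j - 1, by omega⟩
  simp only [Nat.add_sub_cancel] at h1
  simp only [wt, mid, Nat.add_sub_cancel, h1, h2, h3]

lemma gap_rfl' {i : ℕ} (hi : 1 ≤ i) (p : ℕ → ℝ) :
    gap (rfl' i p) = gap p ∘ Equiv.swap (i-1) i := by
  obtain ⟨i, rfl⟩ : ∃ k, i = k + 1 := ⟨i - 1, by omega⟩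
  funext m
  simp only [Function.comp, Nat.add_sub_cancel]
  rcases eq_or_ne m i with rfl | h1
  · rw [Equiv.swap_apply_left]; simp [gap, rfl'_apply]; ring
  rcases eq_or_ne m (i+1) with rfl | h2
  · rw [Equiv.swap_apply_right]; simp [gap, rfl'_apply]; ring
  rw [Equiv.swap_apply_of_ne_of_ne h1 h2]
  simp only [gap, rfl'_apply]
  rw [if_neg (by omega), if_neg h2]

lemma lift_lt {i j : ℕ} (h : j < i) (p : ℕ → ℝ) :
    rfl' i (rem j p) = rem j (rfl' (i+1) p) := by
  funext m
  simp only [rfl'_apply, rem]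
  by_cases h1 : m = i
  · subst h1
    rw [if_pos rfl, if_neg (by omega), if_neg (by omega), if_neg (by omega), if_neg (by omega), if_pos rfl]
    rw [show m - 1 + 1 = m by omega]; simp
  · rw [if_neg h1]
    split_ifs <;> first | rfl | omega

lemma lift_gt {i j : ℕ} (h : i + 1 < j) (p : ℕ → ℝ) :
    rfl' i (rem j p) = rem j (rfl' i p) := by
  funext m
  simp only [rfl'_apply, rem]
  split_ifs <;> first | rfl | omega

lemma lift_eq {i : ℕ} (h : 1 ≤ i) (p : ℕ → ℝ) :
    rfl' i (rem i p) = rem (i+1) (rfl' i (rfl' (i+1) p)) := by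
  funext m
  obtain ⟨i, rfl⟩ : ∃ k, i = k + 1 := ⟨i - 1, by omega⟩
  simp only [rfl'_apply, rem]
  split_ifs <;> first | rfl | omega | (simp; try ring)

lemma lift_eq' {i : ℕ} (h : 1 ≤ i) (p : ℕ → ℝ) :
    rfl' i (rem (i+1) p) = rem i (rfl' (i+1) (rfl' i p)) := by
  funext m
  obtain ⟨i, rfl⟩ : ∃ k, i = k + 1 := ⟨i - 1, by omega⟩
  simp only [rfl'_apply, rem]
  split_ifs <;> first | rfl | omega | (simp; try ring)

lemma wt_lift_eq {n i : ℕ} (h : 2 ≤ i) (hi : i + 2 ≤ n) (p : ℕ → ℝ) :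
    wt n i p = wt n (i+1) (rfl' i (rfl' (i+1) p)) := by
  obtain ⟨i, rfl⟩ : ∃ k, i = k + 1 := ⟨i - 1, by omega⟩
  rw [wt_eq (by omega) (by omega), wt_eq (by omega) (by omega)]
  simp only [gap, rfl'_apply, Nat.add_sub_cancel]
  split_ifs <;> first | omega | (simp; try ring)

lemma wt_lift_eq' {n i : ℕ} (h : 2 ≤ i) (hi : i + 2 ≤ n) (p : ℕ → ℝ) :
    wt n (i+1) p = wt n i (rfl' (i+1) (rfl' i p)) := by
  obtain ⟨i, rfl⟩ : ∃ k, i = k + 1 := ⟨i - 1, by omega⟩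
  rw [wt_eq (by omega) (by omega), wt_eq (by omega) (by omega)]
  simp only [gap, rfl'_apply, Nat.add_sub_cancel]
  split_ifs <;> first | omega | (simp; try ring)

lemma lintegral_inv {lo hi : ℕ} {μ : Measure (ℕ → ℝ)} (h : Inv lo hi μ) {i : ℕ} (h1 : lo < i)
    (h2 : i ≤ hi) {f : (ℕ → ℝ) → ℝ≥0∞} (hf : Measurable f) :
    ∫⁻ p, f (rfl' i p) ∂μ = ∫⁻ p, f p ∂μ := by
  conv_rhs => rw [← h i h1 h2]
  rw [lintegral_map hf (measurable_rfl' i)]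

lemma Inv.next {n : ℕ} {μ : Measure (ℕ → ℝ)} (h : Inv 1 n μ) :
    Inv 1 (n - 1) (nextLaw (n + 1) μ) := by
  intro i h1 h2
  refine Measure.ext_of_lintegral _ fun f hf => ?_
  have hm := measurable_rfl'
  have hr := measurable_rem
  rw [lintegral_map hf (hm i),
    lintegral_nextLaw _ _ (show Measurable (fun p => f (rfl' i p)) from hf.comp (hm i)),
    lintegral_nextLaw _ _ hf]
  have hg : ∀ j, Measurable (fun p => ENNReal.ofReal (wt (n+1) j p) * f (rem j p)) := fun j =>
    Measurable.mul (by fun_prop) (hf.comp (hr j))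
  refine Finset.sum_equiv (Equiv.swap i (i+1)) ?_ ?_
  · intro j
    simp only [Finset.mem_Icc]
    rcases eq_or_ne j i with rfl | h3
    · rw [Equiv.swap_apply_left]; omega
    rcases eq_or_ne j (i+1) with rfl | h4
    · rw [Equiv.swap_apply_right]; omega
    rw [Equiv.swap_apply_of_ne_of_ne h3 h4]
  · intro j hj
    rw [Finset.mem_Icc] at hj
    rcases eq_or_ne j i with rfl | h3
    · rw [Equiv.swap_apply_left]
      have e1 := lintegral_inv h (i := j) (by omega) (by omega) (hg (j+1))
      have e2 := lintegral_inv h (i := j+1) (by omega) (by omega) ((hg (j+1)).comp (hm j))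
      simp only [Function.comp] at e2
      rw [← e1, ← e2]
      refine lintegral_congr fun p => ?_
      rw [wt_lift_eq (by omega) (by omega), lift_eq (by omega)]
    rcases eq_or_ne j (i+1) with rfl | h4
    · rw [Equiv.swap_apply_right]
      have e1 := lintegral_inv h (i := i+1) (by omega) (by omega) (hg i)
      have e2 := lintegral_inv h (i := i) (by omega) (by omega) ((hg i).comp (hm (i+1)))
      simp only [Function.comp] at e2
      rw [← e1, ← e2]
      refine lintegral_congr fun p => ?_
      rw [wt_lift_eq' (by omega) (by omega), lift_eq' (by omega)]
    rw [Equiv.swap_apply_of_ne_of_ne h3 h4]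
    rcases lt_or_gt_of_ne h3 with h5 | h5
    · rw [← lintegral_inv h (i := i+1) (by omega) (by omega) (hg j)]
      refine lintegral_congr fun p => ?_
      rw [lift_lt h5]
      congr 2
      apply wt_congr hj.1 <;> rw [rfl'_apply, if_neg (by omega)]
    · rw [← lintegral_inv h (i := i) (by omega) (by omega) (hg j)]
      refine lintegral_congr fun p => ?_
      rw [lift_gt (by omega)]
      congr 2
      apply wt_congr hj.1 <;> rw [rfl'_apply, if_neg (by omega)]

/-! ### exchangeability -/

def Good (μ : Measure (ℕ → ℝ)) (σ : Equiv.Perm ℕ) : Prop :=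
  ∀ F : (ℕ → ℝ) → ℝ, Measurable F → ∫ p, F (gap p ∘ σ) ∂μ = ∫ p, F (gap p) ∂μ

lemma measurable_comp_perm (σ : Equiv.Perm ℕ) :
    Measurable (fun g : ℕ → ℝ => g ∘ σ) :=
  measurable_pi_lambda _ fun i => measurable_pi_apply (σ i)

lemma Good.mul {μ : Measure (ℕ → ℝ)} {σ τ : Equiv.Perm ℕ} (h1 : Good μ σ) (h2 : Good μ τ) :
    Good μ (σ * τ) := by
  intro F hF
  have := h1 (fun g => F (g ∘ τ)) (hF.comp (measurable_comp_perm τ))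
  rw [← h2 F hF, ← this]
  rfl

lemma Inv.good_adj {lo hi : ℕ} {μ : Measure (ℕ → ℝ)} (h : Inv lo hi μ) {i : ℕ} (h1 : lo ≤ i)
    (h2 : i + 1 ≤ hi) : Good μ (Equiv.swap i (i+1)) := by
  intro F hF
  have hF' : Measurable (fun p => F (gap p)) := hF.comp measurable_gapv
  conv_rhs => rw [← h (i+1) (by omega) h2]
  rw [integral_map (measurable_rfl' _).aemeasurable hF'.aestronglyMeasurable]
  refine integral_congr_ae (Filter.Eventually.of_forall fun p => ?_)
  simp only
  rw [gap_rfl' (by omega)]; rfl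

lemma Inv.good_swap {lo hi : ℕ} {μ : Measure (ℕ → ℝ)} (h : Inv lo hi μ) {a b : ℕ} (h1 : lo ≤ a)
    (hab : a < b) (h2 : b ≤ hi) : Good μ (Equiv.swap a b) := by
  obtain ⟨d, rfl⟩ : ∃ d, b = a + 1 + d := ⟨b - a - 1, by omega⟩
  clear hab
  induction d with
  | zero => exact h.good_adj h1 h2
  | succ d ih =>
    have h3 := h.good_adj (i := a + 1 + d) (by omega) (by omega)
    have h4 := ih (by omega)
    have : Equiv.swap a (a + 1 + (d+1)) =
        Equiv.swap (a+1+d) (a+1+d+1) * Equiv.swap a (a+1+d) * Equiv.swap (a+1+d) (a+1+d+1) := by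
      rw [Equiv.swap_mul_swap_mul_swap]
      · exact Equiv.swap_comm _ _
      · omega
      · omega
    rw [this]
    exact (h3.mul h4).mul h3

lemma Inv.good {lo hi : ℕ} {μ : Measure (ℕ → ℝ)} (h : Inv lo hi μ) {a b : ℕ} (h1 : lo ≤ a)
    (h1' : a ≤ hi) (h2' : lo ≤ b) (h2 : b ≤ hi) : Good μ (Equiv.swap a b) := by
  rcases lt_trichotomy a b with h3 | h3 | h3
  · exact h.good_swap h1 h3 h2
  · subst h3; rw [Equiv.swap_self]; intro F _; rfl
  · rw [Equiv.swap_comm]; exact h.good_swap h2' h3 h1'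

lemma Inv.weaken {lo hi lo' hi' : ℕ} {μ : Measure (ℕ → ℝ)} (h : Inv lo hi μ) (h1 : lo ≤ lo')
    (h2 : hi' ≤ hi) : Inv lo' hi' μ := fun i h3 h4 => h i (by omega) (by omega)

end Greedy

namespace Greedy

structure IsLaw (n : ℕ) (μ : Measure (ℕ → ℝ)) : Prop where
  prob : IsProbabilityMeasure μ
  valid : ∀ᵐ p ∂μ, Valid n p
  inv : Inv 1 (n - 1) μ

lemma measurableSet_valid (n : ℕ) : MeasurableSet {p | Valid n p} := by
  have : {p : ℕ → ℝ | Valid n p} =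
      {p | p 0 = 0} ∩ (⋂ j ∈ {j | n < j}, {p | p j = 1}) ∩ (⋂ i ∈ {i | i ≤ n}, {p | p i < p (i+1)}) := by
    ext p
    simp only [Set.mem_setOf_eq, Set.mem_inter_iff, Set.mem_iInter]
    exact ⟨fun h => ⟨⟨h.1, h.2⟩, h.3⟩, fun h => ⟨h.1.1, h.1.2, h.2⟩⟩
  rw [this]
  refine MeasurableSet.inter (MeasurableSet.inter ?_ ?_) ?_
  · exact measurableSet_eq_fun (by fun_prop) (by fun_prop)
  · refine MeasurableSet.biInter (Set.to_countable _) fun j _ => ?_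
    exact measurableSet_eq_fun (by fun_prop) (by fun_prop)
  · refine MeasurableSet.biInter (Set.to_countable _) fun j _ => ?_
    exact measurableSet_lt (by fun_prop) (by fun_prop)

lemma integ {n : ℕ} {μ : Measure (ℕ → ℝ)} (h : IsLaw n μ) {f : (ℕ → ℝ) → ℝ} (hf : Measurable f)
    (C : ℝ) (hC : ∀ p, Valid n p → |f p| ≤ C) : Integrable f μ := by
  have := h.prob
  refine Integrable.of_bound hf.aestronglyMeasurable C ?_
  filter_upwards [h.valid] with p hp
  exact hC p hp

lemma IsLaw.next {n : ℕ} {μ : Measure (ℕ → ℝ)} (h : IsLaw (n+1) μ) :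
    IsLaw n (nextLaw (n+1) μ) := by
  have := h.prob
  refine ⟨⟨?_⟩, ?_, Inv.next h.inv⟩
  · rw [← lintegral_one, lintegral_nextLaw _ _ measurable_const]
    rw [← lintegral_finsetSum _ (by intro j _; fun_prop)]
    rw [show (1 : ℝ≥0∞) = ∫⁻ p, 1 ∂μ by simp]
    refine lintegral_congr_ae ?_
    filter_upwards [h.valid] with p hp
    simp only [lintegral_one, measure_univ, mul_one]
    rw [← ENNReal.ofReal_sum_of_nonneg (fun j _ => hp.wt_nonneg j), sum_wt (by omega), ENNReal.ofReal_one]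
  · rw [ae_iff]
    have hm : MeasurableSet {p | ¬ Valid n p} := (measurableSet_valid n).compl
    rw [← lintegral_indicator_one hm, lintegral_nextLaw _ _ (measurable_one.indicator hm)]
    refine Finset.sum_eq_zero fun j hj => ?_
    rw [Finset.mem_Icc] at hj
    rw [lintegral_congr_ae (g := fun _ => 0) _, lintegral_zero]
    filter_upwards [h.valid] with p hp
    rw [Set.indicator_of_notMem, mul_zero]
    simpa using hp.rem hj.1 hj.2

lemma integral_nextLaw {n : ℕ} {μ : Measure (ℕ → ℝ)} (h : IsLaw (n+1) μ) {f : (ℕ → ℝ) → ℝ}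
    (hf : Measurable f) (C : ℝ) (hC : ∀ p, Valid n p → |f p| ≤ C) :
    ∫ p, f p ∂nextLaw (n+1) μ = ∫ p, ∑ j ∈ Finset.Icc 1 (n+1), wt (n+1) j p * f (rem j p) ∂μ := by
  have hp := h.prob
  have hi := integ h.next hf C hC
  have hle : ∀ j ∈ Finset.Icc 1 (n+1),
      (μ.withDensity (fun p => ENNReal.ofReal (wt (n+1) j p))).map (rem j) ≤ nextLaw (n+1) μ := by
    intro j hj
    unfold nextLaw
    exact Finset.single_le_sum (f := fun j => (μ.withDensity (fun p => ENNReal.ofReal (wt (n+1) j p))).map (rem j)) (fun _ _ => Measure.zero_le _) hj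
  have hI : ∀ j ∈ Finset.Icc 1 (n+1), Integrable (fun p => wt (n+1) j p * f (rem j p)) μ := by
    intro j hj
    rw [Finset.mem_Icc] at hj
    refine integ h ((measurable_wt _ _).mul (hf.comp (measurable_rem j))) (2 * C) fun p hp => ?_
    rw [abs_mul, abs_of_nonneg (hp.wt_nonneg j)]
    have h1 := hp.wt_le hj.1 hj.2
    have h2 := hp.gap_le_one (j-1)
    have h3 := hp.gap_le_one j
    have := hC _ (hp.rem hj.1 hj.2)
    exact mul_le_mul (by linarith) this (abs_nonneg _) (by norm_num)
  rw [integral_finsetSum _ hI]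
  unfold nextLaw
  rw [integral_finsetSum_measure (fun j hj => hi.mono_measure (hle j hj))]
  refine Finset.sum_congr rfl fun j hj => ?_
  rw [integral_map (measurable_rem j).aemeasurable hf.aestronglyMeasurable]
  rw [integral_withDensity_eq_integral_toReal_smul (by fun_prop) (by simp)]
  refine integral_congr_ae ?_
  filter_upwards [h.valid] with p hp
  simp [ENNReal.toReal_ofReal (hp.wt_nonneg j)]

noncomputable def G (q n : ℕ) (p : ℕ → ℝ) : ℝ := ∑ i ∈ Finset.range (n+1), gap p i ^ q

@[fun_prop]
lemma measurable_G (q n : ℕ) : Measurable (G q n) := by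
  unfold G; fun_prop

lemma gap_rem (j : ℕ) (p : ℕ → ℝ) (i : ℕ) : gap (rem (j+1) p) i =
    if i < j then gap p i else if i = j then gap p j + gap p (j+1) else gap p (i+1) := by
  simp only [gap, rem]
  split_ifs <;> first | omega | rfl | (subst_vars; ring) | (exfalso; omega)

lemma sum_rem {n j : ℕ} (h1 : 1 ≤ j) (h2 : j ≤ n) (p : ℕ → ℝ) (f : ℝ → ℝ) :
    ∑ i ∈ Finset.range n, f (gap (rem j p) i) = ∑ i ∈ Finset.range (n+1), f (gap p i)
      + (f (gap p (j-1) + gap p j) - f (gap p (j-1)) - f (gap p j)) := by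
  obtain ⟨a, rfl⟩ : ∃ a, j = a + 1 := ⟨j - 1, by omega⟩
  obtain ⟨b, rfl⟩ : ∃ b, n = a + 1 + b := ⟨n - a - 1, by omega⟩
  rw [show a + 1 + b + 1 = a + 1 + 1 + b by ring, Finset.sum_range_add, Finset.sum_range_succ,
    Finset.sum_range_add, Finset.sum_range_succ _ (a+1), Finset.sum_range_succ _ a]
  have e1 : ∑ i ∈ Finset.range a, f (gap (rem (a+1) p) i) = ∑ i ∈ Finset.range a, f (gap p i) := by
    refine Finset.sum_congr rfl fun i hi => ?_
    rw [gap_rem, if_pos (Finset.mem_range.1 hi)]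
  have e2 : ∑ i ∈ Finset.range b, f (gap (rem (a+1) p) (a+1+i)) =
      ∑ i ∈ Finset.range b, f (gap p (a+1+1+i)) := by
    refine Finset.sum_congr rfl fun i hi => ?_
    rw [gap_rem, if_neg (by omega), if_neg (by omega)]
    congr 2; ring
  rw [e1, e2, gap_rem, if_neg (by omega), if_pos rfl]
  simp only [Nat.add_sub_cancel]
  ring

lemma G_rem {n j : ℕ} (h1 : 1 ≤ j) (h2 : j ≤ n+1) (p : ℕ → ℝ) (q : ℕ) :
    G q n (rem j p) = G q (n+1) p
      + ((gap p (j-1) + gap p j)^q - gap p (j-1)^q - gap p j^q) :=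
  sum_rem h1 h2 p (fun x => x^q)

lemma Valid.G_nonneg {n : ℕ} {p : ℕ → ℝ} (h : Valid n p) (q : ℕ) : 0 ≤ G q n p :=
  Finset.sum_nonneg fun i _ => pow_nonneg (h.gap_nonneg i) q

lemma Valid.G_le_one {n : ℕ} {p : ℕ → ℝ} (h : Valid n p) {q : ℕ} (hq : q ≠ 0) : G q n p ≤ 1 := by
  rw [← h.sum_gap]
  exact Finset.sum_le_sum fun i _ => pow_le_of_le_one (h.gap_nonneg i) (h.gap_le_one i) hq

noncomputable def M (n : ℕ) (p : ℕ → ℝ) : ℝ := (G 8 n p) ^ (1/8 : ℝ)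

@[fun_prop]
lemma measurable_M (n : ℕ) : Measurable (M n) := by
  unfold M; fun_prop

lemma Valid.M_nonneg {n : ℕ} {p : ℕ → ℝ} (h : Valid n p) : 0 ≤ M n p :=
  Real.rpow_nonneg (h.G_nonneg 8) _

lemma Valid.M_pow {n : ℕ} {p : ℕ → ℝ} (h : Valid n p) : M n p ^ 8 = G 8 n p := by
  unfold M
  rw [← Real.rpow_natCast, ← Real.rpow_mul (h.G_nonneg 8)]; norm_num

lemma Valid.gap_le_M {n : ℕ} {p : ℕ → ℝ} (h : Valid n p) (i : ℕ) : gap p i ≤ M n p := by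
  by_cases hi : i ≤ n
  · have : gap p i ^ 8 ≤ M n p ^ 8 := by
      rw [h.M_pow]
      exact Finset.single_le_sum (f := fun i => gap p i ^ 8)
        (fun i _ => pow_nonneg (h.gap_nonneg i) 8) (Finset.mem_range.2 (by omega))
    exact le_of_pow_le_pow_left₀ (by norm_num) h.M_nonneg this
  · have : gap p i = 0 := by
      unfold gap; rw [h.one i (by omega), h.one (i+1) (by omega)]; simp
    rw [this]; exact h.M_nonneg

lemma Valid.M_le_one {n : ℕ} {p : ℕ → ℝ} (h : Valid n p) : M n p ≤ 1 :=
  Real.rpow_le_one (h.G_nonneg 8) (h.G_le_one (by norm_num)) (by norm_num)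

lemma Valid.A_le_M {n : ℕ} {p : ℕ → ℝ} (h : Valid n p) : G 2 n p ≤ M n p := by
  have : G 2 n p ≤ ∑ i ∈ Finset.range (n+1), M n p * gap p i := by
    refine Finset.sum_le_sum fun i _ => ?_
    rw [pow_two]
    exact mul_le_mul_of_nonneg_right (h.gap_le_M i) (h.gap_nonneg i)
  rwa [← Finset.mul_sum, h.sum_gap, mul_one] at this

/-! ### exchangeable pair expectations -/

noncomputable def hh (μ : Measure (ℕ → ℝ)) (n w α β a b : ℕ) : ℝ :=
  ∫ p, gap p a ^ α * gap p b ^ β * G 2 n p ^ w ∂μ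

lemma hh_integrable {n : ℕ} {μ : Measure (ℕ → ℝ)} (h : IsLaw n μ) (w α β a b : ℕ) :
    Integrable (fun p => gap p a ^ α * gap p b ^ β * G 2 n p ^ w) μ := by
  refine integ h (by fun_prop) 1 fun p hp => ?_
  have h1 := pow_nonneg (hp.gap_nonneg a) α
  have h2 := pow_nonneg (hp.gap_nonneg b) β
  have h3 := pow_nonneg (hp.G_nonneg 2) w
  have h1' := pow_le_one₀ (n := α) (hp.gap_nonneg a) (hp.gap_le_one a)
  have h2' := pow_le_one₀ (n := β) (hp.gap_nonneg b) (hp.gap_le_one b)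
  have h3' := pow_le_one₀ (n := w) (hp.G_nonneg 2) (hp.G_le_one two_ne_zero)
  rw [abs_of_nonneg (by positivity)]
  exact mul_le_one₀ (mul_le_one₀ h1' h2 h2') h3 h3'

lemma hh_nonneg {n : ℕ} {μ : Measure (ℕ → ℝ)} (h : IsLaw n μ) (w α β a b : ℕ) :
    0 ≤ hh μ n w α β a b := by
  refine integral_nonneg_of_ae ?_
  filter_upwards [h.valid] with p hp
  have h1 := pow_nonneg (hp.gap_nonneg a) α
  have h2 := pow_nonneg (hp.gap_nonneg b) β
  have h3 := pow_nonneg (hp.G_nonneg 2) w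
  simp only [Pi.zero_apply]
  positivity

lemma hh_comm (μ : Measure (ℕ → ℝ)) (n w α β a b : ℕ) :
    hh μ n w α β a b = hh μ n w β α b a := by
  unfold hh
  congr 1; ext p; ring

lemma sum_swap_range {n b b' : ℕ} (hb : b < n) (hb' : b' < n) (f : ℕ → ℝ) :
    ∑ i ∈ Finset.range n, f (Equiv.swap b b' i) = ∑ i ∈ Finset.range n, f i := by
  refine Finset.sum_equiv (Equiv.swap b b') ?_ (fun _ _ => rfl)
  intro i
  simp only [Finset.mem_range]
  rcases eq_or_ne i b with rfl | h3
  · rw [Equiv.swap_apply_left]; omega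
  rcases eq_or_ne i b' with rfl | h4
  · rw [Equiv.swap_apply_right]; omega
  rw [Equiv.swap_apply_of_ne_of_ne h3 h4]

lemma hh_swap {lo hi n : ℕ} {μ : Measure (ℕ → ℝ)} (h : Inv lo hi μ) (hn : hi ≤ n)
    (w α β : ℕ) {a b b' : ℕ} (hab : a ≠ b) (hab' : a ≠ b')
    (h1 : lo ≤ b) (h2 : b ≤ hi) (h3 : lo ≤ b') (h4 : b' ≤ hi) :
    hh μ n w α β a b = hh μ n w α β a b' := by
  have := h.good h3 h4 h1 h2
    (fun g => g a ^ α * g b ^ β * (∑ i ∈ Finset.range (n+1), g i ^ 2) ^ w) (by fun_prop)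
  simp only [Function.comp, Equiv.swap_apply_right, Equiv.swap_apply_of_ne_of_ne hab' hab] at this
  unfold hh G
  rw [← this]
  congr 1; ext p
  rw [sum_swap_range (by omega) (by omega) (fun i => gap p i ^ 2)]

lemma hh_eq {n : ℕ} {μ : Measure (ℕ → ℝ)} (h : IsLaw (n+1) μ) (w α β : ℕ) {a b : ℕ}
    (ha : a ∈ Finset.Icc 1 n) (hb : b ∈ Finset.Icc 1 n) (hab : a ≠ b) :
    ((n : ℝ) - 1) * hh μ (n+1) w α β a b =
      ∑ b' ∈ (Finset.Icc 1 n).erase a, hh μ (n+1) w α β a b' := by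
  have hn : 1 ≤ n := by rw [Finset.mem_Icc] at ha; omega
  rw [Finset.sum_congr rfl (g := fun _ => hh μ (n+1) w α β a b)]
  · rw [Finset.sum_const, Finset.card_erase_of_mem ha, nsmul_eq_mul]
    simp [Nat.cast_sub hn]
  · intro b' hb'
    rw [Finset.mem_erase, Finset.mem_Icc] at hb'
    rw [Finset.mem_Icc] at hb
    exact (hh_swap h.inv (by simp) w α β hab hb'.1.symm hb.1 (by simpa using hb.2) hb'.2.1
      (by simpa using hb'.2.2)).symm

lemma hh_le {n : ℕ} {μ : Measure (ℕ → ℝ)} (h : IsLaw (n+1) μ) (w α β : ℕ) {a b : ℕ}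
    (hb : b ∈ Finset.Icc 1 n) (hab : a ≠ b) :
    ((n : ℝ) - 1) * hh μ (n+1) w α β a b ≤
      ∑ b' ∈ Finset.Icc 1 n, hh μ (n+1) w α β a b' := by
  by_cases ha : a ∈ Finset.Icc 1 n
  · rw [hh_eq h w α β ha hb hab]
    exact Finset.sum_le_sum_of_subset_of_nonneg (Finset.erase_subset _ _)
      fun b' _ _ => hh_nonneg h _ _ _ _ _
  · rw [Finset.sum_congr rfl (g := fun _ => hh μ (n+1) w α β a b)]
    · rw [Finset.sum_const, nsmul_eq_mul]
      simp only [Nat.card_Icc, Nat.add_sub_cancel]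
      have := hh_nonneg h w α β a b
      linarith
    · intro b' hb'
      have : a ≠ b' := by rintro rfl; exact ha hb'
      rw [Finset.mem_Icc] at hb' hb
      exact (hh_swap h.inv (by simp) w α β hab this hb.1 (by simpa using hb.2) hb'.1
        (by simpa using hb'.2)).symm

end Greedy

namespace Greedy

lemma Valid.G_one {n : ℕ} {p : ℕ → ℝ} (h : Valid n p) : G 1 n p = 1 := by
  unfold G; simpa using h.sum_gap

lemma G_integrable {n : ℕ} {μ : Measure (ℕ → ℝ)} (h : IsLaw n μ) {α β : ℕ} (hα : α ≠ 0) (hβ : β ≠ 0)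
    (w : ℕ) : Integrable (fun p => G α n p * G β n p * G 2 n p ^ w) μ := by
  refine integ h (by fun_prop) 1 fun p hp => ?_
  have h1 := hp.G_nonneg α
  have h2 := hp.G_nonneg β
  have h3 := pow_nonneg (hp.G_nonneg 2) w
  have h1' := hp.G_le_one hα
  have h2' := hp.G_le_one hβ
  have h3' := pow_le_one₀ (n := w) (hp.G_nonneg 2) (hp.G_le_one two_ne_zero)
  rw [abs_of_nonneg (by positivity)]
  exact mul_le_one₀ (mul_le_one₀ h1' h2 h2') h3 h3'

/-- the anchor index of the pair `(j-1, j)` -/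
def anc (j : ℕ) : ℕ := if j = 1 then 0 else j

lemma sum_anc {n : ℕ} (f : ℕ → ℝ) (hf : ∀ i, 0 ≤ f i) :
    ∑ j ∈ Finset.Icc 1 (n+1), f (anc j) ≤ ∑ i ∈ Finset.range (n+2), f i := by
  rw [← Finset.sum_image (s := Finset.Icc 1 (n+1)) (g := anc) (f := f)]
  · refine Finset.sum_le_sum_of_subset_of_nonneg ?_ fun i _ _ => hf i
    intro i hi
    simp only [Finset.mem_image, Finset.mem_Icc, anc] at hi
    obtain ⟨a, ha, rfl⟩ := hi
    simp only [Finset.mem_range]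
    split_ifs <;> omega
  · intro a ha b hb hab
    simp only [Finset.coe_Icc, Set.mem_Icc, anc] at ha hb hab
    split_ifs at hab <;> omega

lemma pair_aux {n : ℕ} {μ : Measure (ℕ → ℝ)} (h : IsLaw (n+1) μ) (hn : 2 ≤ n) (w : ℕ) {α β : ℕ}
    (hα : α ≠ 0) (hβ : β ≠ 0) :
    ((n:ℝ) - 1) * ∑ j ∈ Finset.Icc 1 (n+1),
      (if j = 1 then hh μ (n+1) w α β 0 1 else hh μ (n+1) w α β j (j-1)) ≤
      ∫ p, G α (n+1) p * G β (n+1) p * G 2 (n+1) p ^ w ∂μ := by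
  have h1 : ∀ j ∈ Finset.Icc 1 (n+1),
      ((n:ℝ) - 1) * (if j = 1 then hh μ (n+1) w α β 0 1 else hh μ (n+1) w α β j (j-1)) ≤
        ∑ b' ∈ Finset.Icc 1 n, hh μ (n+1) w α β (anc j) b' := by
    intro j hj
    rw [Finset.mem_Icc] at hj
    unfold anc
    split_ifs with h0
    · exact hh_le h w α β (by rw [Finset.mem_Icc]; omega) (by omega)
    · exact hh_le h w α β (by rw [Finset.mem_Icc]; omega) (by omega)
  rw [Finset.mul_sum]
  refine (Finset.sum_le_sum h1).trans ?_
  unfold hh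
  have hI := fun a b => hh_integrable h w α β a b
  calc _ = ∫ p, ∑ j ∈ Finset.Icc 1 (n+1), ∑ b' ∈ Finset.Icc 1 n,
      gap p (anc j) ^ α * gap p b' ^ β * G 2 (n+1) p ^ w ∂μ := by
        rw [integral_finsetSum _ fun j _ => integrable_finsetSum _ fun b _ => hI _ _]
        refine Finset.sum_congr rfl fun j _ => ?_
        rw [integral_finsetSum _ fun b _ => hI _ _]
    _ ≤ _ := by
        refine integral_mono_ae (integrable_finsetSum _ fun j _ => integrable_finsetSum _ fun b _ => hI _ _)
          (G_integrable h hα hβ w) ?_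
        filter_upwards [h.valid] with p hp
        simp_rw [← Finset.sum_mul]
        refine mul_le_mul_of_nonneg_right ?_ (pow_nonneg (hp.G_nonneg 2) w)
        simp_rw [← Finset.mul_sum]
        rw [← Finset.sum_mul]
        refine mul_le_mul (sum_anc (fun i => gap p i ^ α) fun i => pow_nonneg (hp.gap_nonneg i) _) ?_
          (Finset.sum_nonneg fun i _ => pow_nonneg (hp.gap_nonneg i) _) (hp.G_nonneg α)
        refine Finset.sum_le_sum_of_subset_of_nonneg ?_ fun i _ _ => pow_nonneg (hp.gap_nonneg i) _
        intro i hi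
        simp only [Finset.mem_Icc] at hi
        simp only [Finset.mem_range]; omega

lemma pair_le {n : ℕ} {μ : Measure (ℕ → ℝ)} (h : IsLaw (n+1) μ) (hn : 2 ≤ n) (w : ℕ) {α β : ℕ}
    (hα : α ≠ 0) (hβ : β ≠ 0) :
    ((n:ℝ) - 1) * ∑ j ∈ Finset.Icc 1 (n+1),
      (hh μ (n+1) w α β (j-1) j + hh μ (n+1) w β α (j-1) j) ≤
      2 * ∫ p, G α (n+1) p * G β (n+1) p * G 2 (n+1) p ^ w ∂μ := by
  have h1 := pair_aux h hn w hα hβ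
  have h2 := pair_aux h hn w hβ hα
  have e : ∫ p, G β (n+1) p * G α (n+1) p * G 2 (n+1) p ^ w ∂μ =
      ∫ p, G α (n+1) p * G β (n+1) p * G 2 (n+1) p ^ w ∂μ := by
    congr 1; ext p; ring
  rw [e] at h2
  rw [two_mul]
  refine le_trans (le_of_eq ?_) (add_le_add h1 h2)
  rw [← mul_add, ← Finset.sum_add_distrib]
  congr 1
  refine Finset.sum_congr rfl fun j _ => ?_
  split_ifs with h0
  · subst h0; rfl
  · rw [hh_comm μ (n+1) w α β j, hh_comm μ (n+1) w β α j, add_comm]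

lemma pairs_integrable {n : ℕ} {μ : Measure (ℕ → ℝ)} (h : IsLaw (n+1) μ) (s : Finset ℕ) (c : ℝ) (w α β : ℕ) :
    Integrable (fun p => ∑ j ∈ s, c * (gap p (j-1) ^ α * gap p j ^ β * G 2 (n+1) p ^ w
      + gap p (j-1) ^ β * gap p j ^ α * G 2 (n+1) p ^ w)) μ :=
  integrable_finsetSum _ fun j _ =>
    (((hh_integrable h w α β (j-1) j).add (hh_integrable h w β α (j-1) j)).const_mul c)

lemma pairs_integral {n : ℕ} {μ : Measure (ℕ → ℝ)} (h : IsLaw (n+1) μ) (s : Finset ℕ) (c : ℝ) (w α β : ℕ) :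
    ∫ p, ∑ j ∈ s, c * (gap p (j-1) ^ α * gap p j ^ β * G 2 (n+1) p ^ w
      + gap p (j-1) ^ β * gap p j ^ α * G 2 (n+1) p ^ w) ∂μ =
    c * ∑ j ∈ s, (hh μ (n+1) w α β (j-1) j + hh μ (n+1) w β α (j-1) j) := by
  rw [integral_finsetSum _ fun j _ => by
    exact (((hh_integrable h w α β (j-1) j).add (hh_integrable h w β α (j-1) j)).const_mul c), Finset.mul_sum]
  refine Finset.sum_congr rfl fun j _ => ?_
  rw [integral_const_mul, integral_add (hh_integrable h w α β (j-1) j) (hh_integrable h w β α (j-1) j)]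
  rfl

/-- expected value after one step, power sums -/
lemma integral_next_G {n : ℕ} {μ : Measure (ℕ → ℝ)} (h : IsLaw (n+1) μ) {q : ℕ} (hq : q ≠ 0) :
    ∫ p, G q n p ∂nextLaw (n+1) μ = ∫ p, (G q (n+1) p + ∑ j ∈ Finset.Icc 1 (n+1), wt (n+1) j p *
      ((gap p (j-1) + gap p j)^q - gap p (j-1)^q - gap p j^q)) ∂μ := by
  rw [integral_nextLaw h (measurable_G q n) 1]
  · congr 1; ext p
    rw [← one_mul (G q (n+1) p), ← sum_wt (n := n+1) (p := p) (by omega), Finset.sum_mul,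
      ← Finset.sum_add_distrib]
    refine Finset.sum_congr rfl fun j hj => ?_
    rw [Finset.mem_Icc] at hj
    rw [G_rem hj.1 hj.2]; ring
  · intro p hp
    rw [abs_of_nonneg (hp.G_nonneg q)]
    exact hp.G_le_one hq

lemma pow8_aux' {x y : ℝ} (hx : 0 ≤ x) (hxy : x ≤ y) :
    (x+y) * ((x+y)^8 - x^8 - y^8) ≤ 2048 * (x^8*y + x*y^8) := by
  have hy : 0 ≤ y := hx.trans hxy
  have h1 : (x+y)^8 - x^8 - y^8 ≤ 1024 * (x * y^7) := by
    have key : ∀ k ≤ 6, x^(k+1) * y^(7-k) ≤ x*y^7 := by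
      intro k hk
      have : x^k ≤ y^k := pow_le_pow_left₀ hx hxy k
      calc x^(k+1) * y^(7-k) = x * x^k * y^(7-k) := by ring
        _ ≤ x * y^k * y^(7-k) := by gcongr
        _ = x * y^(k + (7-k)) := by rw [pow_add]; ring
        _ = x * y^7 := by congr 2; omega
    have a1 := key 1 (by norm_num)
    have a2 := key 2 (by norm_num)
    have a3 := key 3 (by norm_num)
    have a4 := key 4 (by norm_num)
    have a5 := key 5 (by norm_num)
    have a6 := key 6 (by norm_num)
    norm_num at a1 a2 a3 a4 a5 a6
    have := mul_nonneg hx (pow_nonneg hy 7)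
    have e : (x+y)^8 - x^8 - y^8 = 8*(x*y^7) + 28*(x^2*y^6) + 56*(x^3*y^5)+70*(x^4*y^4)+56*(x^5*y^3)+28*(x^6*y^2)+8*(x^7*y) := by ring
    rw [e]; linarith
  have h0 : 0 ≤ 1024 * (x * y^7) := by positivity
  have h2 : 0 ≤ x^8*y := by positivity
  calc (x+y) * ((x+y)^8 - x^8 - y^8) ≤ (x+y) * (1024 * (x * y^7)) := by
        apply mul_le_mul_of_nonneg_left h1; linarith
    _ ≤ (2*y) * (1024 * (x * y^7)) := by
        apply mul_le_mul_of_nonneg_right _ h0; linarith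
    _ ≤ _ := by nlinarith

lemma pow8_aux {x y : ℝ} (hx : 0 ≤ x) (hy : 0 ≤ y) :
    (x+y) * ((x+y)^8 - x^8 - y^8) ≤ 2048 * (x^8*y + x*y^8) := by
  rcases le_total x y with h | h
  · exact pow8_aux' hx h
  · have := pow8_aux' hy h
    rw [add_comm y x] at this
    linarith

lemma pow8_nonneg {x y : ℝ} (hx : 0 ≤ x) (hy : 0 ≤ y) : 0 ≤ (x+y)^8 - x^8 - y^8 := by
  have e : (x+y)^8 - x^8 - y^8 = 8*(x*y^7) + 28*(x^2*y^6) + 56*(x^3*y^5)+70*(x^4*y^4)+56*(x^5*y^3)+28*(x^6*y^2)+8*(x^7*y) := by ring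
  rw [e]; positivity

lemma step_G8 {n : ℕ} {μ : Measure (ℕ → ℝ)} (h : IsLaw (n+1) μ) (hn : 2 ≤ n) :
    ((n:ℝ) - 1) * ∫ p, G 8 n p ∂nextLaw (n+1) μ ≤
      ((n:ℝ) - 1 + 4096) * ∫ p, G 8 (n+1) p ∂μ := by
  have hI := fun α β a b => hh_integrable h 0 α β a b
  have hG : Integrable (G 8 (n+1)) μ := by
    refine integ h (by fun_prop) 1 fun p hp => ?_
    rw [abs_of_nonneg (hp.G_nonneg 8)]
    exact hp.G_le_one (by norm_num)
  have hP := pair_le h hn 0 (α := 8) (β := 1) (by norm_num) (by norm_num)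
  have e : ∫ p, G 8 (n+1) p * G 1 (n+1) p * G 2 (n+1) p ^ 0 ∂μ = ∫ p, G 8 (n+1) p ∂μ := by
    refine integral_congr_ae ?_
    filter_upwards [h.valid] with p hp
    rw [hp.G_one]; ring
  rw [e] at hP
  have hS : Integrable (fun p => ∑ j ∈ Finset.Icc 1 (n+1), 2048 *
        (gap p (j-1) ^ 8 * gap p j ^ 1 * G 2 (n+1) p ^ 0 + gap p (j-1) ^ 1 * gap p j ^ 8 * G 2 (n+1) p ^ 0)) μ :=
    pairs_integrable h _ _ _ _ _
  have key : ∫ p, G 8 n p ∂nextLaw (n+1) μ ≤ ∫ p, G 8 (n+1) p ∂μ + 2048 * ∑ j ∈ Finset.Icc 1 (n+1),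
      (hh μ (n+1) 0 8 1 (j-1) j + hh μ (n+1) 0 1 8 (j-1) j) := by
    rw [integral_next_G h (by norm_num)]
    calc _ ≤ ∫ p, (G 8 (n+1) p + ∑ j ∈ Finset.Icc 1 (n+1), 2048 *
        (gap p (j-1) ^ 8 * gap p j ^ 1 * G 2 (n+1) p ^ 0 + gap p (j-1) ^ 1 * gap p j ^ 8 * G 2 (n+1) p ^ 0)) ∂μ := by
          refine integral_mono_of_nonneg ?_ (hG.add hS) ?_
          · filter_upwards [h.valid] with p hp
            refine add_nonneg (hp.G_nonneg 8) (Finset.sum_nonneg fun j hj => ?_)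
            exact mul_nonneg (hp.wt_nonneg j) (pow8_nonneg (hp.gap_nonneg _) (hp.gap_nonneg _))
          · filter_upwards [h.valid] with p hp
            refine add_le_add le_rfl (Finset.sum_le_sum fun j hj => ?_)
            rw [Finset.mem_Icc] at hj
            have := pow8_aux (hp.gap_nonneg (j-1)) (hp.gap_nonneg j)
            refine (mul_le_mul_of_nonneg_right (hp.wt_le hj.1 hj.2) (pow8_nonneg (hp.gap_nonneg _) (hp.gap_nonneg _))).trans ?_
            simpa using this
      _ = _ := by
          rw [integral_add hG hS, pairs_integral h]
  have hn' : (0:ℝ) ≤ (n:ℝ) - 1 := by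
    have : (2:ℝ) ≤ n := by exact_mod_cast hn
    linarith
  nlinarith [mul_le_mul_of_nonneg_left key hn']


lemma M_integrable {n : ℕ} {μ : Measure (ℕ → ℝ)} (h : IsLaw n μ) (k : ℕ) :
    Integrable (fun p => M n p ^ k) μ := by
  refine integ h (by fun_prop) 1 fun p hp => ?_
  rw [abs_of_nonneg (pow_nonneg hp.M_nonneg k)]
  exact pow_le_one₀ hp.M_nonneg hp.M_le_one

lemma G_int {n : ℕ} {μ : Measure (ℕ → ℝ)} (h : IsLaw n μ) {q : ℕ} (hq : q ≠ 0) (k : ℕ) :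
    Integrable (fun p => G q n p ^ k) μ := by
  refine integ h (by fun_prop) 1 fun p hp => ?_
  rw [abs_of_nonneg (pow_nonneg (hp.G_nonneg q) k)]
  exact pow_le_one₀ (hp.G_nonneg q) (hp.G_le_one hq)

lemma G_int1 {n : ℕ} {μ : Measure (ℕ → ℝ)} (h : IsLaw n μ) {q : ℕ} (hq : q ≠ 0) :
    Integrable (fun p => G q n p) μ := by
  simpa using G_int h hq 1

/-- pointwise bound for a single neighbour list -/
lemma Valid.sum_erase {n : ℕ} {p : ℕ → ℝ} (h : Valid (n+1) p) {a : ℕ} (ha : a ∈ Finset.Icc 1 n) :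
    ∑ b ∈ (Finset.Icc 1 n).erase a, gap p b = 1 - gap p 0 - gap p (n+1) - gap p a := by
  have h1 := h.sum_gap
  rw [Finset.sum_range_succ, Finset.sum_range_succ'] at h1
  have h2 : ∑ b ∈ Finset.Icc 1 n, gap p b = ∑ i ∈ Finset.range n, gap p (i+1) := by
    rw [Finset.range_eq_Ico, Finset.sum_Ico_add' (fun i => gap p i) 0 n 1]
    rfl
  have h3 := Finset.sum_erase_add _ (fun b => gap p b) ha
  linarith

lemma Valid.sum_sq_ge {n : ℕ} {p : ℕ → ℝ} (h : Valid (n+1) p) (hn : 2 ≤ n) :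
    2 * G 2 (n+1) p - 6 * M (n+1) p ^ 2 ≤
      ∑ j ∈ Finset.Icc 2 n, (gap p (j-1) ^ 2 + gap p j ^ 2) := by
  obtain ⟨m, rfl⟩ : ∃ m, n = m + 2 := ⟨n - 2, by omega⟩
  have h2 : ∑ j ∈ Finset.Icc 2 (m+2), (gap p (j-1) ^ 2 + gap p j ^ 2) =
      ∑ i ∈ Finset.range (m+1), (gap p (i+1) ^ 2 + gap p (i+2) ^ 2) := by
    rw [Finset.range_eq_Ico]
    have := Finset.sum_Ico_add' (fun j => (gap p (j-1) ^ 2 + gap p j ^ 2)) 0 (m+1) 2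
    simp only [zero_add] at this
    rw [show Finset.Icc 2 (m+2) = Finset.Ico 2 (m+1+2) from rfl, ← this]
    rfl
  rw [h2, Finset.sum_add_distrib]
  have e1 : G 2 (m+2+1) p = ∑ i ∈ Finset.range (m+1), gap p (i+1) ^ 2 + gap p 0 ^ 2 + gap p (m+2)^2 + gap p (m+3)^2 := by
    unfold G
    rw [Finset.sum_range_succ, Finset.sum_range_succ, Finset.sum_range_succ']
  have e2 : G 2 (m+2+1) p = ∑ i ∈ Finset.range (m+1), gap p (i+2) ^ 2 + gap p 1 ^ 2 + gap p 0^2 + gap p (m+3)^2 := by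
    unfold G
    rw [Finset.sum_range_succ, Finset.sum_range_succ', Finset.sum_range_succ']
  have hb : ∀ i, gap p i ^ 2 ≤ M (m+2+1) p ^ 2 := fun i => pow_le_pow_left₀ (h.gap_nonneg i) (h.gap_le_M i) 2
  have := hb 0; have := hb 1; have := hb (m+2); have := hb (m+3)
  linarith

lemma Valid.sum_pairs_le {n : ℕ} {p : ℕ → ℝ} (h : Valid (n+1) p) (hn : 2 ≤ n) :
    ∑ j ∈ Finset.Icc 2 n, (gap p (j-1) ^ 2 + gap p j ^ 2) ≤ 2 * G 2 (n+1) p := by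
  obtain ⟨m, rfl⟩ : ∃ m, n = m + 2 := ⟨n - 2, by omega⟩
  have h2 : ∑ j ∈ Finset.Icc 2 (m+2), (gap p (j-1) ^ 2 + gap p j ^ 2) =
      ∑ i ∈ Finset.range (m+1), (gap p (i+1) ^ 2 + gap p (i+2) ^ 2) := by
    rw [Finset.range_eq_Ico]
    have := Finset.sum_Ico_add' (fun j => (gap p (j-1) ^ 2 + gap p j ^ 2)) 0 (m+1) 2
    simp only [zero_add] at this
    rw [show Finset.Icc 2 (m+2) = Finset.Ico 2 (m+1+2) from rfl, ← this]
    rfl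
  rw [h2, Finset.sum_add_distrib]
  have e1 : G 2 (m+2+1) p = ∑ i ∈ Finset.range (m+1), gap p (i+1) ^ 2 + gap p 0 ^ 2 + gap p (m+2)^2 + gap p (m+3)^2 := by
    unfold G
    rw [Finset.sum_range_succ, Finset.sum_range_succ, Finset.sum_range_succ']
  have e2 : G 2 (m+2+1) p = ∑ i ∈ Finset.range (m+1), gap p (i+2) ^ 2 + gap p 1 ^ 2 + gap p 0^2 + gap p (m+3)^2 := by
    unfold G
    rw [Finset.sum_range_succ, Finset.sum_range_succ', Finset.sum_range_succ']
  have hb : ∀ i, 0 ≤ gap p i ^ 2 := fun i => sq_nonneg _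
  have := hb 0; have := hb 1; have := hb (m+2); have := hb (m+3)
  linarith

lemma step_A {n : ℕ} {μ : Measure (ℕ → ℝ)} (h : IsLaw (n+1) μ) (hn : 2 ≤ n) :
    ((n:ℝ) + 1) * ∫ p, G 2 (n+1) p ∂μ - 12 * ∫ p, M (n+1) p ^ 2 ∂μ ≤
      ((n:ℝ) - 1) * ∫ p, G 2 n p ∂nextLaw (n+1) μ := by
  have hG : Integrable (fun p => G 2 (n+1) p) μ := G_int1 h (by norm_num)
  have hM := M_integrable h 2
  have hn' : (0:ℝ) ≤ (n:ℝ) - 1 := by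
    have : (2:ℝ) ≤ n := by exact_mod_cast hn
    linarith
  have hE : ∀ j ∈ Finset.Icc 2 n, ((n:ℝ)-1) * (hh μ (n+1) 0 2 1 (j-1) j + hh μ (n+1) 0 1 2 (j-1) j) =
      ∫ p, (gap p (j-1) ^ 2 * (1 - gap p 0 - gap p (n+1) - gap p (j-1)) +
        gap p j ^ 2 * (1 - gap p 0 - gap p (n+1) - gap p j)) ∂μ := by
    intro j hj
    rw [Finset.mem_Icc] at hj
    have m1 : j - 1 ∈ Finset.Icc 1 n := by rw [Finset.mem_Icc]; omega
    have m2 : j ∈ Finset.Icc 1 n := by rw [Finset.mem_Icc]; omega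
    rw [hh_comm _ _ _ 1 2, mul_add, hh_eq h 0 2 1 m1 m2 (by omega), hh_eq h 0 2 1 m2 m1 (by omega)]
    unfold hh
    rw [← integral_finsetSum _ fun b _ => hh_integrable h 0 2 1 (j-1) b,
      ← integral_finsetSum _ fun b _ => hh_integrable h 0 2 1 j b,
      ← integral_add (integrable_finsetSum _ fun b _ => hh_integrable h 0 2 1 (j-1) b)
        (integrable_finsetSum _ fun b _ => hh_integrable h 0 2 1 j b)]
    refine integral_congr_ae ?_
    filter_upwards [h.valid] with p hp
    simp only [pow_zero, mul_one, pow_one]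
    rw [← Finset.mul_sum, ← Finset.mul_sum, hp.sum_erase m1, hp.sum_erase m2]
  have hI : ∀ j, Integrable (fun p => (gap p (j-1) ^ 2 * (1 - gap p 0 - gap p (n+1) - gap p (j-1)) +
        gap p j ^ 2 * (1 - gap p 0 - gap p (n+1) - gap p j))) μ := by
    intro j
    have : ∀ a, Integrable (fun p => gap p a ^ 2 * (1 - gap p 0 - gap p (n+1) - gap p a)) μ := by
      intro a
      refine integ h (by fun_prop) (1 * 4) fun p hp => ?_
      rw [abs_mul]
      have g1 := hp.gap_nonneg 0; have g2 := hp.gap_nonneg (n+1); have g3 := hp.gap_nonneg a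
      have g4 := hp.gap_le_one 0; have g5 := hp.gap_le_one (n+1); have g6 := hp.gap_le_one a
      refine mul_le_mul ?_ ?_ (abs_nonneg _) (by norm_num)
      · rw [abs_of_nonneg (by positivity)]; exact pow_le_one₀ g3 g6
      · rw [abs_le]; constructor <;> linarith
    exact (this _).add (this _)
  have key : ∫ p, G 2 (n+1) p ∂μ + 1 * ∑ j ∈ Finset.Icc 2 n,
      (hh μ (n+1) 0 2 1 (j-1) j + hh μ (n+1) 0 1 2 (j-1) j) ≤ ∫ p, G 2 n p ∂nextLaw (n+1) μ := by
    rw [integral_next_G h (by norm_num), ← pairs_integral h, ← integral_add hG (pairs_integrable h _ _ _ _ _)]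
    refine integral_mono_ae (hG.add (pairs_integrable h _ _ _ _ _)) ?_ ?_
    · refine hG.add (integrable_finsetSum _ fun j hj => ?_)
      rw [Finset.mem_Icc] at hj
      refine integ h (by fun_prop) (2 * 2) fun p hp => ?_
      have g1 := hp.gap_nonneg (j-1); have g2 := hp.gap_nonneg j
      have g4 := hp.gap_le_one (j-1); have g5 := hp.gap_le_one j
      have g6 := hp.wt_le hj.1 hj.2
      have g7 := hp.wt_nonneg j
      rw [abs_mul, abs_of_nonneg g7]
      have e : (gap p (j-1) + gap p j)^2 - gap p (j-1)^2 - gap p j^2 = 2 * (gap p (j-1) * gap p j) := by ring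
      rw [e, abs_of_nonneg (by positivity)]
      refine mul_le_mul (by linarith) ?_ (by positivity) (by norm_num)
      nlinarith [mul_le_one₀ g4 g2 g5]
    · filter_upwards [h.valid] with p hp
      refine add_le_add le_rfl ?_
      refine le_trans (Finset.sum_le_sum (g := fun j => wt (n+1) j p * ((gap p (j-1) + gap p j)^2 - gap p (j-1)^2 - gap p j^2)) fun j hj => ?_)
        (Finset.sum_le_sum_of_subset_of_nonneg (Finset.Icc_subset_Icc (by omega) (by omega)) fun j _ _ => ?_)
      · rw [Finset.mem_Icc] at hj
        rw [wt_eq hj.1 (by omega)]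
        apply le_of_eq; ring
      · have e : (gap p (j-1) + gap p j)^2 - gap p (j-1)^2 - gap p j^2 = 2 * (gap p (j-1) * gap p j) := by ring
        rw [e]
        exact mul_nonneg (hp.wt_nonneg j) (mul_nonneg (by norm_num) (mul_nonneg (hp.gap_nonneg _) (hp.gap_nonneg _)))
  have key2 : 2 * ∫ p, G 2 (n+1) p ∂μ - 12 * ∫ p, M (n+1) p ^ 2 ∂μ ≤ ((n:ℝ)-1) * ∑ j ∈ Finset.Icc 2 n,
      (hh μ (n+1) 0 2 1 (j-1) j + hh μ (n+1) 0 1 2 (j-1) j) := by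
    rw [Finset.mul_sum, Finset.sum_congr rfl hE, ← integral_finsetSum _ fun j _ => hI j,
      ← integral_const_mul, ← integral_const_mul, ← integral_sub (hG.const_mul 2) (hM.const_mul 12)]
    refine integral_mono_ae ((hG.const_mul 2).sub (hM.const_mul 12)) (integrable_finsetSum _ fun j _ => hI j) ?_
    filter_upwards [h.valid] with p hp
    have b1 := hp.sum_sq_ge hn
    have b2 := hp.sum_pairs_le hn
    have b3 := hp.A_le_M
    have b4 : ∑ j ∈ Finset.Icc 2 n, (1 - 3 * M (n+1) p) * (gap p (j-1)^2 + gap p j ^2) ≤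
      ∑ j ∈ Finset.Icc 2 n, (gap p (j-1) ^ 2 * (1 - gap p 0 - gap p (n+1) - gap p (j-1)) +
        gap p j ^ 2 * (1 - gap p 0 - gap p (n+1) - gap p j)) := by
      refine Finset.sum_le_sum fun j _ => ?_
      have g1 := hp.gap_le_M 0; have g2 := hp.gap_le_M (n+1)
      have g3 := hp.gap_le_M (j-1); have g4 := hp.gap_le_M j
      nlinarith [mul_nonneg (sq_nonneg (gap p (j-1))) (show 0 ≤ 3 * M (n+1) p - gap p 0 - gap p (n+1) - gap p (j-1) by linarith),
        mul_nonneg (sq_nonneg (gap p j)) (show 0 ≤ 3 * M (n+1) p - gap p 0 - gap p (n+1) - gap p j by linarith)]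
    rw [← Finset.mul_sum] at b4
    have b5 : M (n+1) p * ∑ j ∈ Finset.Icc 2 n, (gap p (j-1)^2 + gap p j ^2) ≤ M (n+1) p * (2 * M (n+1) p) :=
      mul_le_mul_of_nonneg_left (by linarith) hp.M_nonneg
    nlinarith
  have := mul_le_mul_of_nonneg_left key hn'
  linarith

lemma step_A2 {n : ℕ} {μ : Measure (ℕ → ℝ)} (h : IsLaw (n+1) μ) (hn : 2 ≤ n) :
    ((n:ℝ) - 1) * ∫ p, G 2 n p ^ 2 ∂nextLaw (n+1) μ ≤
      ((n:ℝ) + 3) * ∫ p, G 2 (n+1) p ^ 2 ∂μ + ((n:ℝ) - 1) * (20 * ∫ p, M (n+1) p ^ 4 ∂μ) := by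
  have hG : Integrable (fun p => G 2 (n+1) p ^ 2) μ := G_int h (by norm_num) 2
  have hM := M_integrable h 4
  have hn' : (0:ℝ) ≤ (n:ℝ) - 1 := by
    have : (2:ℝ) ≤ n := by exact_mod_cast hn
    linarith
  have hP := pair_le h hn 1 (α := 2) (β := 1) (by norm_num) (by norm_num)
  have e : ∫ p, G 2 (n+1) p * G 1 (n+1) p * G 2 (n+1) p ^ 1 ∂μ = ∫ p, G 2 (n+1) p ^ 2 ∂μ := by
    refine integral_congr_ae ?_
    filter_upwards [h.valid] with p hp
    rw [hp.G_one]; ring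
  rw [e] at hP
  have hS := pairs_integrable h (Finset.Icc 1 (n+1)) 2 1 2 1
  have hGS : Integrable (fun p => G 2 (n+1) p ^ 2 + ∑ j ∈ Finset.Icc 1 (n+1), 2 *
      (gap p (j-1) ^ 2 * gap p j ^ 1 * G 2 (n+1) p ^ 1
      + gap p (j-1) ^ 1 * gap p j ^ 2 * G 2 (n+1) p ^ 1)) μ := hG.add hS
  have key : ∫ p, G 2 n p ^ 2 ∂nextLaw (n+1) μ ≤ ∫ p, G 2 (n+1) p ^ 2 ∂μ + 2 * ∑ j ∈ Finset.Icc 1 (n+1),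
      (hh μ (n+1) 1 2 1 (j-1) j + hh μ (n+1) 1 1 2 (j-1) j) + 20 * ∫ p, M (n+1) p ^ 4 ∂μ := by
    rw [integral_nextLaw h (by fun_prop) 1, ← pairs_integral h, ← integral_add hG hS, ← integral_const_mul,
      ← integral_add hGS (hM.const_mul 20)]
    · refine integral_mono_of_nonneg ?_ (hGS.add (hM.const_mul 20)) ?_
      · filter_upwards [h.valid] with p hp
        exact Finset.sum_nonneg fun j _ => mul_nonneg (hp.wt_nonneg j) (sq_nonneg _)
      · filter_upwards [h.valid] with p hp
        have hM0 := hp.M_nonneg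
        have hA0 := hp.G_nonneg 2
        have b : ∀ j ∈ Finset.Icc 1 (n+1), wt (n+1) j p * G 2 n (rem j p) ^ 2 ≤
            wt (n+1) j p * G 2 (n+1) p ^ 2 + 2 * (gap p (j-1) ^ 2 * gap p j ^ 1 * G 2 (n+1) p ^ 1
      + gap p (j-1) ^ 1 * gap p j ^ 2 * G 2 (n+1) p ^ 1) + wt (n+1) j p * (4 * M (n+1) p ^ 4) +
            (if j = 1 then 4 * M (n+1) p ^ 4 else 0) + (if j = n+1 then 4 * M (n+1) p ^ 4 else 0) := by
          intro j hj
          rw [Finset.mem_Icc] at hj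
          rw [G_rem hj.1 hj.2]
          have x0 := hp.gap_nonneg (j-1)
          have y0 := hp.gap_nonneg j
          have x1 := hp.gap_le_M (j-1)
          have y1 := hp.gap_le_M j
          have A1 := hp.A_le_M
          have w0 := hp.wt_nonneg j
          have wl := hp.wt_le hj.1 hj.2
          have we : 2 ≤ j → j ≤ n → wt (n+1) j p = (gap p (j-1) + gap p j)/2 := fun h1 h2 => wt_eq h1 (by omega)
          have hbad : ¬ (2 ≤ j ∧ j ≤ n) → j ≠ 1 → j ≠ n+1 → False := by omega
          clear hj
          generalize gap p (j-1) = x at *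
          generalize gap p j = y at *
          generalize G 2 (n+1) p = A at *
          generalize M (n+1) p = m at *
          generalize wt (n+1) j p = w at *
          have hxy : x * y ≤ m * m := mul_le_mul x1 y1 y0 hM0
          have hxy0 : 0 ≤ x * y := mul_nonneg x0 y0
          have h4 : (x*y)*(x*y) ≤ (m*m)*(m*m) := mul_le_mul hxy hxy hxy0 (by positivity)
          have h4w := mul_le_mul_of_nonneg_left h4 w0
          have hA : A * (x*y) ≤ m * (m*m) := mul_le_mul A1 hxy hxy0 hM0
          have hA0' : 0 ≤ A * (x*y) := mul_nonneg hA0 hxy0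
          have m4 : 0 ≤ m^4 := by positivity
          have main : w * (4 * (A * (x*y))) ≤ 2 * (x+y) * (A * (x*y)) + (if j = 1 then 4 * m ^ 4 else 0) + (if j = n+1 then 4 * m ^ 4 else 0) := by
            have c1 : w * (4 * (A * (x*y))) ≤ (x+y) * (4 * (A * (x*y))) := mul_le_mul_of_nonneg_right wl (by positivity)
            have c2 : (x + y) * (A * (x*y)) ≤ (2 * m) * (m * (m*m)) := mul_le_mul (by linarith) hA hA0' (by linarith)
            split_ifs with d1 d2 d2
            · nlinarith
            · nlinarith
            · nlinarith
            · by_cases hj2 : 2 ≤ j ∧ j ≤ n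
              · rw [we hj2.1 hj2.2]; apply le_of_eq; ring
              · exact (hbad hj2 d1 d2).elim
          nlinarith
        refine (Finset.sum_le_sum b).trans ?_
        simp only [Finset.sum_add_distrib, ← Finset.sum_mul, sum_wt (n := n+1) (by omega) p, Finset.sum_ite_eq']
        rw [if_pos (by rw [Finset.mem_Icc]; omega), if_pos (by rw [Finset.mem_Icc]; omega)]
        have m4 : 0 ≤ M (n+1) p^4 := by positivity
        simp only [← Finset.mul_sum, ← Finset.sum_add_distrib]
        linarith
    · intro p hp
      rw [abs_of_nonneg (pow_nonneg (hp.G_nonneg 2) 2)]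
      exact pow_le_one₀ (hp.G_nonneg 2) (hp.G_le_one (by norm_num))
  nlinarith [mul_le_mul_of_nonneg_left key hn']

end Greedy

namespace Greedy

noncomputable def law (N : ℕ) (μ : Measure (ℕ → ℝ)) : ℕ → Measure (ℕ → ℝ)
  | 0 => μ
  | k+1 => nextLaw (N-k) (law N μ k)

lemma isLaw_law {N : ℕ} {μ : Measure (ℕ → ℝ)} (h : IsLaw N μ) (k : ℕ) (hk : k ≤ N) :
    IsLaw (N-k) (law N μ k) := by
  induction k with
  | zero => exact h
  | succ k ih =>
    have := ih (by omega)
    obtain ⟨a, ha⟩ : ∃ a, N - k = a + 1 := ⟨N - k - 1, by omega⟩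
    have e : N - (k+1) = a := by omega
    rw [law, e, ha]
    rw [ha] at this
    exact this.next

/-- deterministic iteration -/
lemma seq_g {m : ℕ} {δ : ℝ} (hδ : 0 < δ) {N : ℝ} (hN : 4 ≤ δ * N) (hm : δ * N ≤ N - m)
    {g : ℕ → ℝ} (g0 : ∀ k, k ≤ m → 0 ≤ g k)
    (hg : ∀ k < m, (N - k - 2) * g (k+1) ≤ (N - k - 2 + 4096) * g k) :
    ∀ k ≤ m, g k ≤ Real.exp (8192 / δ) * g 0 := by
  have hN0 : 0 < N := by
    by_contra h; push Not at h; nlinarith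
  have h1 : ∀ k ≤ m, g k ≤ Real.exp (8192 / (δ * N) * k) * g 0 := by
    intro k
    induction k with
    | zero => intro _; simp
    | succ k ih =>
      intro hk
      have ih := ih (by omega)
      have hg := hg k (by omega)
      have hkm : (k:ℝ) + 1 ≤ m := by exact_mod_cast hk
      set n := N - k - 2 with hn
      have hn2 : δ * N / 2 ≤ n := by rw [hn]; linarith
      have hn0 : 0 < n := by linarith
      have g1 : g (k+1) ≤ (1 + 8192 / (δ * N)) * g k := by
        have : (n + 4096) / n ≤ 1 + 8192 / (δ * N) := by
          rw [add_div, div_self hn0.ne']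
          gcongr 1 + ?_
          rw [div_le_div_iff₀ hn0 (by linarith)]; linarith
        calc g (k+1) = n * g (k+1) / n := by field_simp
          _ ≤ (n + 4096) * g k / n := by gcongr
          _ = (n + 4096) / n * g k := by ring
          _ ≤ _ := mul_le_mul_of_nonneg_right this (g0 k (by omega))
      have he : 1 + 8192 / (δ * N) ≤ Real.exp (8192 / (δ * N)) := by
        have := Real.add_one_le_exp (8192 / (δ * N)); linarith
      calc g (k+1) ≤ (1 + 8192 / (δ * N)) * g k := g1
        _ ≤ Real.exp (8192 / (δ * N)) * (Real.exp (8192 / (δ * N) * k) * g 0) := by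
          apply mul_le_mul he ih (g0 k (by omega)) (Real.exp_pos _).le
        _ = _ := by
          rw [← mul_assoc, ← Real.exp_add]; congr 2; push_cast; ring
  intro k hk
  refine (h1 k hk).trans (mul_le_mul_of_nonneg_right ?_ (g0 0 (by omega)))
  rw [Real.exp_le_exp]
  have hkm : (k:ℝ) ≤ m := by exact_mod_cast hk
  have : (k:ℝ) ≤ N := by nlinarith
  calc 8192 / (δ * N) * k ≤ 8192 / (δ * N) * N := by gcongr
    _ = 8192 / δ := by field_simp

lemma seq_a {m : ℕ} {N e : ℝ} (hm : 4 ≤ N - m) (he : 0 ≤ e)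
    {a m2 : ℕ → ℝ} (h2 : ∀ k < m, N * m2 k ≤ e) (h20 : ∀ k < m, 0 ≤ m2 k)
    (ha : ∀ k < m, (N - k) * a k - 12 * m2 k ≤ (N - k - 2) * a (k+1)) :
    ∀ k ≤ m, N * (N - 1) * a 0 - 12 * e * k ≤ (N - k) * (N - k - 1) * a k := by
  intro k
  induction k with
  | zero => intro _; simp
  | succ k ih =>
    intro hk
    have ih := ih (by omega)
    have ha := ha k (by omega)
    have h2 := h2 k (by omega)
    have h20 := h20 k (by omega)
    have hkm : (k:ℝ) + 1 ≤ m := by exact_mod_cast hk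
    have := mul_le_mul_of_nonneg_left ha (show 0 ≤ N - k - 1 by linarith)
    have h3 : (N - k - 1) * m2 k ≤ N * m2 k := by
      have : (0:ℝ) ≤ k := k.cast_nonneg
      gcongr; linarith
    push_cast
    nlinarith

def DD (n : ℝ) : ℝ := (n+2)*(n+1)*n*(n-1)

lemma seq_c {m : ℕ} {N e : ℝ} (hm : 4 ≤ N - m) (he : 0 ≤ e)
    {c m4 : ℕ → ℝ} (h4 : ∀ k < m, N^3 * m4 k ≤ e)
    (hc : ∀ k < m, (N - k - 2) * c (k+1) ≤ (N - k + 2) * c k + (N - k - 2) * (20 * m4 k)) :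
    ∀ k ≤ m, DD (N - k) * c k ≤ DD N * (c 0 + 20 * (e / N^3) * k) := by
  have hm0 : (0:ℝ) ≤ m := m.cast_nonneg
  have hN : 4 ≤ N := by linarith
  intro k
  induction k with
  | zero => intro _; simp
  | succ k ih =>
    intro hk
    have ih := ih (by omega)
    have hc := hc k (by omega)
    have h4 := h4 k (by omega)
    have hkm : (k:ℝ) + 1 ≤ m := by exact_mod_cast hk
    have hk0 : (0:ℝ) ≤ k := k.cast_nonneg
    have h4' : m4 k ≤ e / N^3 := by rw [le_div_iff₀ (by positivity)]; linarith
    have he' : 0 ≤ e / N^3 := by positivity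
    have p1 : 0 ≤ N - k - 1 := by linarith
    have p2 : 0 ≤ N - k := by linarith
    have p3 : 0 ≤ N - k + 1 := by linarith
    have p4 : 0 ≤ N - k - 2 := by linarith
    have hD : DD (N - k - 1) ≤ DD N := by
      unfold DD
      have : N - k - 1 - 1 ≤ N - 1 := by linarith
      have : N - k - 1 + 2 ≤ N + 2 := by linarith
      have : N - k - 1 + 1 ≤ N + 1 := by linarith
      have : N - k - 1 ≤ N := by linarith
      have : 0 ≤ N - k - 1 - 1 := by linarith
      have : 0 ≤ N - k - 1 + 1 := by linarith
      gcongr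
    have hD0 : 0 ≤ DD (N - k - 1) := by
      unfold DD
      have : 0 ≤ N - k - 1 - 1 := by linarith
      positivity
    have e1 : DD (N - (k+1:ℕ)) * c (k+1) ≤ DD (N - k) * c k + DD (N - k - 1) * (20 * m4 k) := by
      have := mul_le_mul_of_nonneg_left hc (show 0 ≤ (N - k + 1) * (N - k) * (N - k - 1) by positivity)
      unfold DD
      push_cast
      nlinarith
    have e2 : DD (N - k - 1) * (20 * m4 k) ≤ DD N * (20 * (e / N^3)) :=
      (mul_le_mul_of_nonneg_left (by linarith) hD0).trans (mul_le_mul_of_nonneg_right hD (by positivity))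
    calc _ ≤ _ := e1
      _ ≤ DD N * (c 0 + 20 * (e / N^3) * k) + DD N * (20 * (e / N^3)) := add_le_add ih e2
      _ = _ := by push_cast; ring

lemma final_var {N n e a c a0 c0 k : ℝ} (hN : 1 ≤ N) (hn : 2 ≤ n) (he : 1 / N ≤ e) (he1 : e ≤ 1)
    (hk0 : 0 ≤ k) (hk : k ≤ N) (ha0 : 2 / (N+2) ≤ a0) (hc0 : N^2 * c0 ≤ 4 + 48 / N)
    (ha : N * (N - 1) * a0 - 12 * e * k ≤ n * (n-1) * a)
    (hc : DD n * c ≤ DD N * (c0 + 20 * (e / N^3) * k)) (hcn : 0 ≤ c) :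
    N^2 * c - 4 * (N^2 / (n * (n-1))) * (N * a) + 4 * (N^2 / (n*(n-1)))^2 ≤
      (N^2 / (n*(n-1)))^2 * (284 * e) := by
  have hN0 : 0 < N := by linarith
  have he0 : 0 < e := lt_of_lt_of_le (by positivity) he
  have hn1 : 0 < n * (n-1) := mul_pos (by linarith) (by linarith)
  set r := N^2 / (n*(n-1)) with hr
  have hr0 : 0 < r := by positivity
  have hrn : r * (n * (n-1)) = N^2 := div_mul_cancel₀ _ hn1.ne'
  have hu : N * (1/N) = 1 := by field_simp
  set u := 1 / N with hudef
  have hu0 : 0 < u := by positivity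
  -- lower bound on a
  have A1 : r * (2 - 18 * e) ≤ N * a := by
    have b1 : 2 - 6 * u ≤ (N-1) * a0 := by
      have : (N-1) * (2 / (N+2)) ≤ (N-1) * a0 := mul_le_mul_of_nonneg_left ha0 (by linarith)
      refine le_trans ?_ this
      rw [← mul_div_assoc (N-1) 2 (N+2), le_div_iff₀ (by linarith)]
      nlinarith
    have b2 : N^2 * (N * a) = r * (N * (n * (n-1) * a)) := by rw [← hrn]; ring
    have b3 : N * (N * (N-1) * a0 - 12 * e * k) ≤ N * (n * (n-1) * a) := mul_le_mul_of_nonneg_left ha hN0.le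
    have b4 : N * (N * (2 - 18 * e)) ≤ (N * (N * (N-1) * a0 - 12 * e * k)) := by
      apply mul_le_mul_of_nonneg_left _ hN0.le
      have := mul_le_mul_of_nonneg_left b1 hN0.le
      have := mul_le_mul_of_nonneg_left hk he0.le
      have := mul_le_mul_of_nonneg_left he hN0.le
      nlinarith
    have b5 := mul_le_mul_of_nonneg_left (b4.trans b3) hr0.le
    rw [← b2] at b5
    have : N^2 * (r * (2 - 18*e)) ≤ N^2 * (N * a) := by nlinarith
    exact le_of_mul_le_mul_left this (by positivity)
  have C1 : N^2 * c ≤ r^2 * (4 + 212 * e) := by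
    have d1 : (n * (n-1))^2 * c ≤ DD n * c := by
      apply mul_le_mul_of_nonneg_right _ hcn
      unfold DD
      nlinarith
    have d2 : DD N ≤ N^4 * (1 + 2 * u) := by
      unfold DD
      have : N^4 * (1 + 2 * u) = N^4 + 2 * N^3 * (N * u) := by ring
      rw [this, hu]; nlinarith
    have d3 : N^2 * (c0 + 20 * (e / N^3) * k) ≤ 4 + 68 * e := by
      have : N^2 * (20 * (e / N^3) * k) ≤ 20 * e := by
        have : N^2 * (20 * (e / N^3) * k) = 20 * e * (k / N) := by field_simp
        rw [this]
        have : k / N ≤ 1 := by rw [div_le_one hN0]; exact hk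
        nlinarith
      have : 48 / N = 48 * u := by rw [hudef]; ring
      nlinarith
    have hDN : 0 ≤ DD N := by
      unfold DD
      have : 0 ≤ N - 1 := by linarith
      positivity
    have d4 : N^2 * ((n * (n-1))^2 * c) ≤ N^4 * ((1 + 2 * e) * (4 + 68 * e)) := by
      calc N^2 * ((n * (n-1))^2 * c) ≤ N^2 * (DD N * (c0 + 20 * (e / N^3) * k)) := by
            apply mul_le_mul_of_nonneg_left (d1.trans hc); positivity
        _ = DD N * (N^2 * (c0 + 20 * (e / N^3) * k)) := by ring
        _ ≤ DD N * (4 + 68 * e) := mul_le_mul_of_nonneg_left d3 hDN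
        _ ≤ N^4 * (1 + 2 * e) * (4 + 68 * e) := by
            apply mul_le_mul_of_nonneg_right _ (by linarith)
            refine d2.trans (mul_le_mul_of_nonneg_left (by linarith) (by positivity))
        _ = _ := by ring
    have d5 : (1 + 2 * e) * (4 + 68 * e) ≤ 4 + 212 * e := by nlinarith
    have d6 : N^4 * (N^2 * c) ≤ N^4 * (r^2 * (4 + 212 * e)) := by
      have := mul_le_mul_of_nonneg_left d4 (sq_nonneg r)
      have e1 : r^2 * (N^2 * ((n * (n-1))^2 * c)) = (r * (n*(n-1)))^2 * (N^2*c) := by ring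
      rw [e1, hrn] at this
      have e2 : r^2 * (N^4 * ((1 + 2 * e) * (4 + 68 * e))) ≤ N^4 * (r^2 * (4 + 212*e)) := by
        have := mul_le_mul_of_nonneg_left d5 (show 0 ≤ r^2 * N^4 by positivity)
        linarith
      have e3 : (N^2)^2 = N^4 := by ring
      rw [e3] at this
      exact this.trans e2
    exact le_of_mul_le_mul_left d6 (by positivity)
  nlinarith [mul_le_mul_of_nonneg_left A1 hr0.le]

/-- Pointwise AM-GM integrated. -/
lemma amgm {α : Type*} [MeasurableSpace α] {μ : Measure α} [IsProbabilityMeasure μ] {f : α → ℝ}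
    (hf : Integrable f μ) (hf2 : Integrable (fun x => f x ^ 2) μ) {s : ℝ} (hs : 0 < s) :
    ∫ x, f x ∂μ ≤ s + (∫ x, f x ^ 2 ∂μ) / s := by
  calc ∫ x, f x ∂μ ≤ ∫ x, (s + f x ^ 2 / s) ∂μ := by
        refine integral_mono hf ((integrable_const s).add (hf2.div_const s)) fun x => ?_
        have : f x * s ≤ s * s + f x ^ 2 := by nlinarith [sq_nonneg (f x - s), sq_nonneg (f x + s), sq_nonneg s, sq_nonneg (f x)]
        have h2 : f x ≤ (s * s + f x ^ 2) / s := by rw [le_div_iff₀ hs]; exact this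
        refine h2.trans (le_of_eq ?_)
        field_simp
    _ = _ := by
        rw [integral_add (integrable_const s) (hf2.div_const s), integral_div]; simp

set_option maxHeartbeats 1000000 in
theorem moments {δ : ℝ} (hδ : 0 < δ) (hδ1 : δ ≤ 1) : ∃ C : ℝ, 1 ≤ C ∧ ∀ (N m : ℕ) (μ : Measure (ℕ → ℝ)),
    IsLaw N μ → (N:ℝ)^7 * ∫ p, G 8 N p ∂μ ≤ 80640 → 2 / ((N:ℝ)+2) ≤ ∫ p, G 2 N p ∂μ →
    (N:ℝ)^2 * ∫ p, G 2 N p ^ 2 ∂μ ≤ 4 + 48 / N → δ * N ≤ N - m → 4 ≤ δ * N → C ≤ √N →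
    ∀ k ≤ m, N * ∫ p, M (N-k) p ^ 2 ∂law N μ k ≤ C / √N ∧
      ∫ p, (N * G 2 (N-k) p - 2 * (N^2 / (((N:ℝ)-k)*((N:ℝ)-k-1)))) ^ 2 ∂law N μ k ≤ C / √N := by
  set K := Real.exp (8192 / δ) * 80640 with hK
  have hK0 : 0 < K := by positivity
  set C1 := K + 2 with hC1
  have hδ2 : 1 ≤ 1 / δ := by rw [le_div_iff₀ hδ]; linarith
  refine ⟨(2/δ^2)^2 * (284 * C1), ?_, ?_⟩
  · have : (2/δ^2)^2 = 4 * (1/δ)^4 := by field_simp; ring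
    rw [this]
    have := one_le_pow₀ hδ2 (n := 4)
    nlinarith
  intro N m μ hμ i8 i2 i4 hm hN hs
  have hC1' : C1 ≤ (2/δ^2)^2 * (284 * C1) := by
    have : (2/δ^2)^2 = 4 * (1/δ)^4 := by field_simp; ring
    rw [this]
    have := one_le_pow₀ hδ2 (n := 4)
    nlinarith
  have hN4 : (4:ℝ) ≤ N := by nlinarith
  have hN0 : (0:ℝ) < N := by linarith
  set s := √(N:ℝ) with hsdef
  have hs0 : 0 < s := Real.sqrt_pos.2 hN0
  have hss : s * s = N := Real.mul_self_sqrt hN0.le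
  set e := C1 / s with hedef
  have he1 : e ≤ 1 := by rw [hedef, div_le_one hs0]; linarith
  have hs1 : 1 ≤ s := by nlinarith
  have he0 : 0 ≤ e := by positivity
  have hmN : m ≤ N := by
    have : (m:ℝ) ≤ N := by nlinarith
    exact_mod_cast this
  have hm4 : (4:ℝ) ≤ N - m := by linarith
  have hL := fun k (hk : k ≤ m) => isLaw_law hμ k (by omega)
  -- rewrite steps
  have hstep : ∀ k < m, ∃ a, N - k = a + 1 ∧ N - (k+1) = a ∧ 2 ≤ a ∧ ((a:ℝ) = N - k - 1) := by
    intro k hk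
    have h5 : m + 4 ≤ N := by
      have : (m:ℝ) + 4 ≤ N := by linarith
      exact_mod_cast this
    refine ⟨N - k - 1, by omega, by omega, by omega, ?_⟩
    rw [Nat.cast_sub (by omega), Nat.cast_sub (by omega)]; simp
  have hg : ∀ k ≤ m, ∫ p, G 8 (N-k) p ∂law N μ k ≤ Real.exp (8192 / δ) * ∫ p, G 8 (N-0) p ∂law N μ 0 := by
    refine seq_g hδ hN hm (g := fun k => ∫ p, G 8 (N-k) p ∂law N μ k) ?_ ?_
    · intro k hk
      refine integral_nonneg_of_ae ?_
      filter_upwards [(hL k hk).valid] with p hp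
      exact hp.G_nonneg 8
    · intro k hk
      obtain ⟨a, e1, e2, e3, e4⟩ := hstep k hk
      have h := hL k hk.le
      simp only [law, e2, e1]
      rw [e1] at h
      have := step_G8 h e3
      rw [e4] at this
      convert this using 2 <;> ring
  have hg' : ∀ k ≤ m, (N:ℝ)^7 * ∫ p, G 8 (N-k) p ∂law N μ k ≤ K := by
    intro k hk
    have := mul_le_mul_of_nonneg_left (hg k hk) (show (0:ℝ) ≤ N^7 by positivity)
    have h2 := mul_le_mul_of_nonneg_left i8 (Real.exp_pos (8192/δ)).le
    simp only [law, Nat.sub_zero] at this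
    rw [hK]; linarith
  have h4 : ∀ k ≤ m, (N:ℝ)^3 * ∫ p, M (N-k) p ^ 4 ∂law N μ k ≤ (1 + K) / s := by
    intro k hk
    have h := hL k hk
    have := h.prob
    have h1 := amgm (M_integrable h 4) (by simpa [← pow_mul] using M_integrable h 8) (s := 1 / (N^3 * s)) (by positivity)
    have h2 : ∫ p, (M (N-k) p ^ 4)^2 ∂law N μ k = ∫ p, G 8 (N-k) p ∂law N μ k := by
      refine integral_congr_ae ?_
      filter_upwards [h.valid] with p hp
      rw [← hp.M_pow]; ring
    rw [h2] at h1
    have h3 := mul_le_mul_of_nonneg_left h1 (show (0:ℝ) ≤ N^3 by positivity)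
    refine h3.trans ?_
    have h5 := hg' k hk
    set I := ∫ p, G 8 (N-k) p ∂law N μ k
    have : (N:ℝ)^3 * (1 / (N^3 * s) + I / (1 / (N^3 * s))) = 1 / s + N^6 * s * I := by field_simp
    rw [this, add_div]
    gcongr
    rw [le_div_iff₀ hs0]
    calc N^6 * s * I * s = (s * s) * N^6 * I := by ring
      _ = N^7 * I := by rw [hss]; ring
      _ ≤ K := h5
  have h2 : ∀ k ≤ m, (N:ℝ) * ∫ p, M (N-k) p ^ 2 ∂law N μ k ≤ e := by
    intro k hk
    have h := hL k hk
    have := h.prob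
    have h1 := amgm (M_integrable h 2) (by simpa [← pow_mul] using M_integrable h 4) (s := 1 / (N * s)) (by positivity)
    have e2 : ∫ p, (M (N-k) p ^ 2)^2 ∂law N μ k = ∫ p, M (N-k) p ^ 4 ∂law N μ k := by
      congr 1; ext p; ring
    rw [e2] at h1
    refine (mul_le_mul_of_nonneg_left h1 hN0.le).trans ?_
    have h5 := h4 k hk
    set I := ∫ p, M (N-k) p ^ 4 ∂law N μ k
    have : (N:ℝ) * (1 / (N * s) + I / (1 / (N * s))) = 1 / s + (N^3 * I) * (s / N) := by field_simp
    rw [this]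
    have h6 : (N^3 * I) * (s / N) ≤ (1+K) / s * (s/N) := mul_le_mul_of_nonneg_right h5 (by positivity)
    have h7 : (1+K) / s * (s/N) = (1+K)/N := by field_simp
    have h8 : (1+K)/N ≤ (1+K)/s := by
      apply div_le_div_of_nonneg_left (by linarith) hs0; rw [← hss]; nlinarith
    have : e = 1 / s + (1+K)/s := by rw [hedef, hC1]; field_simp; ring
    rw [this]; linarith
  have he4 : (1+K)/s ≤ e := by rw [hedef, hC1]; exact div_le_div_of_nonneg_right (by linarith) hs0.le
  intro k hk
  constructor
  · refine (h2 k hk).trans ?_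
    rw [hedef]; gcongr
  have ha := seq_a (a := fun k => ∫ p, G 2 (N-k) p ∂law N μ k) (m2 := fun k => ∫ p, M (N-k) p ^ 2 ∂law N μ k)
    hm4 he0 (fun k hk => h2 k hk.le) (fun k _ => integral_nonneg fun p => sq_nonneg _) (by
      intro k hk
      obtain ⟨a, e1, e2, e3, e4⟩ := hstep k hk
      have h := hL k hk.le
      simp only [law, e2, e1]
      rw [e1] at h
      have := step_A h e3
      rw [e4] at this
      convert this using 2 <;> ring) k hk
  have hc := seq_c (c := fun k => ∫ p, G 2 (N-k) p ^ 2 ∂law N μ k) (m4 := fun k => ∫ p, M (N-k) p ^ 4 ∂law N μ k)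
    hm4 he0 (fun k hk => (h4 k hk.le).trans he4) (by
      intro k hk
      obtain ⟨a, e1, e2, e3, e4⟩ := hstep k hk
      have h := hL k hk.le
      simp only [law, e2, e1]
      rw [e1] at h
      have := step_A2 h e3
      rw [e4] at this
      convert this using 2 <;> ring) k hk
  have hkm : (k:ℝ) ≤ m := by exact_mod_cast hk
  simp only [law, Nat.sub_zero] at ha hc
  have he2 : 1 / (N:ℝ) ≤ e := by
    rw [hedef]
    exact div_le_div₀ (by linarith) (by linarith) hs0 (by rw [← hss]; nlinarith)
  have hfin := final_var (N := N) (n := N - k) (e := e) (by linarith) (by linarith) he2 he1 k.cast_nonneg (by linarith)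
    i2 i4 ha hc (integral_nonneg fun p => sq_nonneg _)
  have h := hL k hk
  have := h.prob
  have I1 := G_int1 h (q := 2) (by norm_num)
  have I2 := G_int h (q := 2) (by norm_num) 2
  set r := (N:ℝ)^2 / (((N:ℝ)-k)*((N:ℝ)-k-1)) with hr
  have ev : ∫ p, (N * G 2 (N-k) p - 2 * r) ^ 2 ∂law N μ k =
      N^2 * ∫ p, G 2 (N-k) p ^ 2 ∂law N μ k - 4 * r * (N * ∫ p, G 2 (N-k) p ∂law N μ k) + 4 * r^2 := by
    have : ∀ p, (N * G 2 (N-k) p - 2 * r) ^ 2 = N^2 * G 2 (N-k) p ^ 2 - (4 * r * N) * G 2 (N-k) p + 4 * r^2 := by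
      intro p; ring
    simp_rw [this]
    have i1 : Integrable (fun p => (N:ℝ)^2 * G 2 (N-k) p ^ 2 - (4 * r * N) * G 2 (N-k) p) (law N μ k) :=
      (I2.const_mul _).sub (I1.const_mul _)
    rw [integral_add i1 (integrable_const _), integral_sub (I2.const_mul _) (I1.const_mul _),
      integral_const_mul, integral_const_mul]
    simp; ring
  rw [ev]
  refine hfin.trans ?_
  have hr2 : r ≤ 2 / δ^2 := by
    have q1 : δ * N ≤ N - k := by linarith
    have q2 : δ * N / 2 ≤ N - k - 1 := by linarith
    have q0 : (0:ℝ) ≤ N - k := by linarith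
    rw [hr]
    calc (N:ℝ)^2 / (((N:ℝ)-k)*((N:ℝ)-k-1)) ≤ N^2 / ((δ * N) * (δ * N / 2)) := by
          gcongr
      _ = 2 / δ^2 := by field_simp
  have hr0 : 0 ≤ r := by
    rw [hr]
    have : (0:ℝ) ≤ N - k := by linarith
    have : (0:ℝ) ≤ N - k - 1 := by linarith
    positivity
  rw [mul_div_assoc, mul_div_assoc]
  gcongr

end Greedy

namespace Greedy

def Sec (N : ℕ) : Set (Fin N → ℝ) := {x | Valid N (pos N x)}

lemma measurable_pos (N : ℕ) : Measurable (pos N) := by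
  refine measurable_pi_lambda _ fun j => ?_
  unfold pos
  split_ifs <;> fun_prop

lemma measurableSet_sec (N : ℕ) : MeasurableSet (Sec N) :=
  (measurable_pos N) (measurableSet_valid N)

lemma pos_succ {N : ℕ} (x : Fin N → ℝ) (i : Fin N) : pos N x (i+1) = x i := by
  unfold pos; simp

lemma pos_big {N : ℕ} (x : Fin N → ℝ) {j : ℕ} (h : N < j) : pos N x j = 1 := by
  unfold pos
  rw [if_neg (by omega), dif_neg (by omega)]

lemma pos_zero {N : ℕ} (x : Fin N → ℝ) : pos N x 0 = 0 := by
  unfold pos; simp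

lemma sec_iff {N : ℕ} (x : Fin N → ℝ) : x ∈ Sec N ↔ StrictMono x ∧ ∀ i, x i ∈ Set.Ioo (0:ℝ) 1 := by
  constructor
  · intro h
    have h : Valid N (pos N x) := h
    refine ⟨fun i j hij => ?_, fun i => ?_⟩
    · rw [← pos_succ x i, ← pos_succ x j]
      exact h.lt_of_lt (by have := Fin.lt_def.1 hij; omega) (by omega)
    · rw [← pos_succ x i]
      constructor
      · rw [← pos_zero x]
        exact h.lt_of_lt (by omega) (by omega)
      · rw [← pos_big x (Nat.lt_succ_self N)]
        exact h.lt_of_lt (by omega) (by omega)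
  · rintro ⟨h1, h2⟩
    refine ⟨pos_zero x, fun j hj => pos_big x hj, fun i hi => ?_⟩
    rcases Nat.eq_zero_or_pos i with rfl | hi0
    · rw [pos_zero]
      by_cases hN : 0 < N
      · have := pos_succ x ⟨0, hN⟩
        simp only at this
        rw [this]; exact (h2 _).1
      · rw [pos_big x (by omega)]; norm_num
    · obtain ⟨i, rfl⟩ : ∃ a, i = a + 1 := ⟨i - 1, by omega⟩
      have e := pos_succ x ⟨i, by omega⟩
      simp only at e
      rw [e]
      by_cases hN : i + 1 < N
      · have := pos_succ x ⟨i+1, hN⟩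
        simp only at this
        rw [this]; exact h1 (by simp [Fin.lt_def])
      · rw [pos_big x (by omega)]; exact (h2 _).2

instance (N : ℕ) : IsProbabilityMeasure (unifCube N) := by
  unfold unifCube
  have : IsProbabilityMeasure ((volume : Measure ℝ).restrict (Set.Icc 0 1)) := ⟨by simp⟩
  infer_instance

lemma unifCube_eq (N : ℕ) : unifCube N = (volume : Measure (Fin N → ℝ)).restrict (Set.univ.pi fun _ => Set.Icc 0 1) := by
  unfold unifCube
  rw [volume_pi, Measure.restrict_pi_pi]

noncomputable def eta (N : ℕ) : Measure (Fin N → ℝ) := (volume : Measure (Fin N → ℝ)).restrict (Sec N)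

lemma eta_eq (N : ℕ) : eta N = (unifCube N).restrict (Sec N) := by
  rw [unifCube_eq, Measure.restrict_restrict (measurableSet_sec N), eta]
  congr 1
  symm
  rw [Set.inter_eq_left]
  intro x hx i _
  exact Set.Ioo_subset_Icc_self (((sec_iff x).1 hx).2 i)

noncomputable def nu (N : ℕ) : Measure (Fin N → ℝ) := (Nat.factorial N : ℝ≥0∞) • eta N

def permEquiv {N : ℕ} (σ : Equiv.Perm (Fin N)) : (Fin N → ℝ) ≃ᵐ (Fin N → ℝ) where
  toFun x := x ∘ σ
  invFun x := x ∘ σ.symm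
  left_inv x := by ext i; simp
  right_inv x := by ext i; simp
  measurable_toFun := by
    refine measurable_pi_lambda _ fun i => ?_
    exact measurable_pi_apply _
  measurable_invFun := by
    refine measurable_pi_lambda _ fun i => ?_
    exact measurable_pi_apply _

lemma map_perm {N : ℕ} (σ : Equiv.Perm (Fin N)) : (unifCube N).map (permEquiv σ) = unifCube N := by
  unfold unifCube
  refine (Measure.pi_eq fun s hs => ?_).symm
  rw [MeasurableEquiv.map_apply]
  have : (permEquiv σ) ⁻¹' (Set.univ.pi s) = Set.univ.pi (fun i => s (σ.symm i)) := by
    ext x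
    simp only [Set.mem_preimage, Set.mem_univ_pi]
    constructor
    · intro h i
      have := h (σ.symm i)
      simpa [permEquiv] using this
    · intro h i
      have := h (σ i)
      simpa [permEquiv] using this
  rw [this, Measure.pi_pi]
  exact Equiv.prod_comp σ.symm (fun i => volume.restrict (Set.Icc (0:ℝ) 1) (s i))

lemma ae_inj (N : ℕ) : ∀ᵐ x ∂unifCube N, Function.Injective x := by
  have : ∀ i j : Fin N, i ≠ j → ∀ᵐ x ∂unifCube N, x i ≠ x j := by
    intro i j hij
    rw [unifCube_eq]
    refine ae_restrict_of_ae ?_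
    rw [ae_iff]
    let L : (Fin N → ℝ) →ₗ[ℝ] ℝ := (LinearMap.proj i : (Fin N → ℝ) →ₗ[ℝ] ℝ) - (LinearMap.proj j : (Fin N → ℝ) →ₗ[ℝ] ℝ)
    have h := Measure.addHaar_submodule (volume : Measure (Fin N → ℝ)) (LinearMap.ker L) (by
      intro h
      have : (Pi.single i 1 : Fin N → ℝ) ∈ LinearMap.ker L := by rw [h]; trivial
      simp [L, hij.symm] at this)
    convert h using 2
    ext x
    simp [L, sub_eq_zero]
  have h2 : ∀ᵐ x ∂unifCube N, ∀ i j : Fin N, i ≠ j → x i ≠ x j := by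
    rw [ae_all_iff]; intro i
    rw [ae_all_iff]; intro j
    by_cases h : i = j
    · filter_upwards with x; intro h'; exact absurd h h'
    · filter_upwards [this i j h] with x hx; intro _; exact hx
  filter_upwards [h2] with x hx i j hij
  by_contra h
  exact hx i j h hij

lemma ae_Ioo (N : ℕ) : ∀ᵐ x ∂unifCube N, ∀ i, x i ∈ Set.Ioo (0:ℝ) 1 := by
  rw [ae_all_iff]; intro i
  have h1 : ∀ᵐ y ∂(volume : Measure ℝ).restrict (Set.Icc 0 1), y ∈ Set.Ioo (0:ℝ) 1 := by
    rw [← Measure.restrict_congr_set Ioo_ae_eq_Icc]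
    exact ae_restrict_mem measurableSet_Ioo
  unfold unifCube
  exact Measure.tendsto_eval_ae_ae.eventually h1

end Greedy

namespace Greedy

lemma unifCube_sum (N : ℕ) : unifCube N = Measure.sum fun σ : Equiv.Perm (Fin N) => (eta N).map (permEquiv σ).symm := by
  set B : Equiv.Perm (Fin N) → Set (Fin N → ℝ) := fun σ => (permEquiv σ) ⁻¹' (Sec N) with hB
  have hd : Pairwise (Function.onFun Disjoint B) := by
    intro σ τ hst
    refine Set.disjoint_left.2 fun x h1 h2 => hst ?_
    have h1 : (x ∘ σ) ∈ Sec N := h1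
    have h2 : (x ∘ τ) ∈ Sec N := h2
    have h3 := Tuple.unique_monotone ((sec_iff _).1 h1).1.monotone ((sec_iff _).1 h2).1.monotone
    have hinj : Function.Injective x := by
      have := ((sec_iff _).1 h1).1.injective
      intro a b hab
      have h5 : (x ∘ σ) (σ.symm a) = (x ∘ σ) (σ.symm b) := by simpa using hab
      simpa using this h5
    ext1 i
    exact hinj (congrFun h3 i)
  have hm : ∀ σ, MeasurableSet (B σ) := fun σ => (permEquiv σ).measurable (measurableSet_sec N)
  have hU : ∀ᵐ x ∂unifCube N, x ∈ ⋃ σ, B σ := by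
    filter_upwards [ae_inj N, ae_Ioo N] with x h1 h2
    rw [Set.mem_iUnion]
    refine ⟨Tuple.sort x, ?_⟩
    show x ∘ Tuple.sort x ∈ Sec N
    rw [sec_iff]
    exact ⟨(Tuple.monotone_sort x).strictMono_of_injective (h1.comp (Tuple.sort x).injective), fun i => h2 _⟩
  rw [← Measure.restrict_eq_self_of_ae_mem hU, Measure.restrict_iUnion hd hm]
  congr 1
  ext1 σ
  have : eta N = ((unifCube N).restrict (B σ)).map (permEquiv σ) := by
    rw [eta_eq, ← Measure.restrict_map (permEquiv σ).measurable (measurableSet_sec N), map_perm]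
  rw [this, Measure.map_map (permEquiv σ).symm.measurable (permEquiv σ).measurable]
  simp

instance (N : ℕ) : IsFiniteMeasure (eta N) := by
  rw [eta_eq]; infer_instance

instance (N : ℕ) : IsFiniteMeasure (nu N) := by
  constructor
  rw [nu, Measure.smul_apply, smul_eq_mul]
  exact ENNReal.mul_lt_top (by simp) (measure_lt_top _ _)

lemma unif_prod_eq {β : Type*} [MeasurableSpace β] {N : ℕ} (κ : Measure β) [IsProbabilityMeasure κ]
    (E : Set ((Fin N → ℝ) × β)) (hE : ∀ (σ : Equiv.Perm (Fin N)) x b, (x ∘ σ, b) ∈ E ↔ (x, b) ∈ E) :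
    ((unifCube N).prod κ) E = ((nu N).prod κ) E := by
  have h1 : ∀ σ : Equiv.Perm (Fin N), (((eta N).map (permEquiv σ).symm).prod κ) E = ((eta N).prod κ) E := by
    intro σ
    have h2 := Measure.map_prod_map (eta N) κ (permEquiv σ).symm.measurable (measurable_id)
    rw [Measure.map_id] at h2
    rw [h2]
    have h3 : Prod.map (permEquiv σ).symm id = ((permEquiv σ).symm.prodCongr (MeasurableEquiv.refl β)) := rfl
    rw [h3, MeasurableEquiv.map_apply]
    congr 1
    ext ⟨x, b⟩
    exact hE σ.symm x b
  rw [unifCube_sum, Measure.prod_sum_left, Measure.sum_fintype, Measure.coe_finsetSum, Finset.sum_apply]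
  simp only [h1]
  rw [nu, Measure.prod_smul_left, Measure.smul_apply]
  simp [Fintype.card_perm]

lemma unif_eq {N : ℕ} (E : Set (Fin N → ℝ)) (hE : ∀ (σ : Equiv.Perm (Fin N)) x, (x ∘ σ) ∈ E ↔ x ∈ E) :
    (unifCube N) E = (nu N) E := by
  have h1 : ∀ σ : Equiv.Perm (Fin N), ((eta N).map (permEquiv σ).symm) E = (eta N) E := by
    intro σ
    rw [MeasurableEquiv.map_apply]
    congr 1
    ext x
    exact hE σ.symm x
  rw [unifCube_sum, Measure.sum_fintype, Measure.coe_finsetSum, Finset.sum_apply]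
  simp only [h1]
  rw [nu, Measure.smul_apply]
  simp [Fintype.card_perm]

instance (N : ℕ) : IsProbabilityMeasure (nu N) := by
  constructor
  rw [← unif_eq Set.univ (by simp)]
  simp

lemma ae_nu (N : ℕ) : ∀ᵐ x ∂nu N, x ∈ Sec N := by
  refine Measure.ae_smul_measure ?_ _
  exact ae_restrict_mem (measurableSet_sec N)

lemma valid_rfl' {N : ℕ} {p : ℕ → ℝ} (h : Valid N p) {i : ℕ} (h1 : 1 ≤ i) (h2 : i ≤ N) : Valid N (rfl' i p) := by
  have ha := h.lt (i-1) (by omega)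
  have hb := h.lt i h2
  rw [show i - 1 + 1 = i by omega] at ha
  refine ⟨?_, fun j hj => ?_, fun j hj => ?_⟩
  · simp only [rfl', Function.update_apply]; rw [if_neg (by omega)]; exact h.zero
  · simp only [rfl', Function.update_apply]; rw [if_neg (by omega)]; exact h.one j hj
  · have := h.lt j hj
    simp only [rfl', Function.update_apply]
    split_ifs with h3 h4 h4
    · omega
    · subst h3; linarith
    · subst h4; simp only [Nat.add_sub_cancel] at *; linarith
    · exact this

/-- reflection in coordinates -/
noncomputable def TT {N : ℕ} (i : Fin N) (x : Fin N → ℝ) : Fin N → ℝ :=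
  Function.update x i (pos N x i + pos N x (i+2) - x i)

lemma rfl_pos {N : ℕ} (i : Fin N) (x : Fin N → ℝ) : rfl' (i+1) (pos N x) = pos N (TT i x) := by
  ext j
  simp only [rfl', Function.update_apply]
  split_ifs with h
  · subst h
    rw [pos_succ, pos_succ]
    simp [TT]
  · rcases Nat.eq_zero_or_pos j with rfl | hj
    · rw [pos_zero, pos_zero]
    · by_cases h3 : N < j
      · rw [pos_big _ h3, pos_big _ h3]
      · obtain ⟨k, rfl⟩ : ∃ k : Fin N, j = k + 1 := ⟨⟨j-1, by omega⟩, by simp; omega⟩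
        rw [pos_succ, pos_succ, TT, Function.update_of_ne]
        intro hk; exact h (by rw [hk])

lemma measurable_TT {N : ℕ} (i : Fin N) : Measurable (TT i) := by
  unfold TT
  have h : ∀ j, Measurable fun x => pos N x j := fun j => (measurable_pi_apply j).comp (measurable_pos N)
  have := h i
  have := h (i+2)
  refine measurable_pi_lambda _ fun k => ?_
  by_cases hk : k = i
  · subst hk; simp only [Function.update_self]; fun_prop
  · simp only [Function.update_of_ne hk]; fun_prop

lemma pos_update {N : ℕ} (i : Fin N) (x : Fin N → ℝ) (v : ℝ) {j : ℕ} (hj : j ≠ i + 1) :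
    pos N (Function.update x i v) j = pos N x j := by
  rcases Nat.eq_zero_or_pos j with rfl | hj0
  · rw [pos_zero, pos_zero]
  · by_cases h3 : N < j
    · rw [pos_big _ h3, pos_big _ h3]
    · obtain ⟨k, rfl⟩ : ∃ k : Fin N, j = k + 1 := ⟨⟨j-1, by omega⟩, by simp; omega⟩
      rw [pos_succ, pos_succ, Function.update_of_ne]
      intro hk; exact hj (by rw [hk])

lemma map_TT {N : ℕ} (i : Fin N) : (volume : Measure (Fin N → ℝ)).map (TT i) = volume := by
  refine Measure.ext_of_lintegral _ fun f hf => ?_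
  rw [lintegral_map hf (measurable_TT i)]
  refine lintegral_eq_of_lmarginal_eq (μ := fun _ => volume) {i} (hf.comp (measurable_TT i)) hf ?_
  rw [lmarginal_singleton, lmarginal_singleton]
  ext x
  have h1 : ∀ v, TT i (Function.update x i v) = Function.update x i (pos N x i + pos N x (i+2) - v) := by
    intro v
    rw [TT, pos_update _ _ _ (by omega), pos_update _ _ _ (by omega)]
    simp
  simp only [Function.comp, h1]
  exact lintegral_sub_left_eq_self (fun v => f (Function.update x i v)) _

lemma TT_invol {N : ℕ} (i : Fin N) (x : Fin N → ℝ) : TT i (TT i x) = x := by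
  conv_lhs => rw [TT]
  rw [show pos N (TT i x) i = pos N x i from pos_update _ _ _ (by omega),
    show pos N (TT i x) (i+2) = pos N x (i+2) from pos_update _ _ _ (by omega)]
  simp [TT]

lemma map_TT_nu {N : ℕ} (i : Fin N) : (nu N).map (TT i) = nu N := by
  have hs : (TT i) ⁻¹' (Sec N) = Sec N := by
    have h1 : ∀ x, x ∈ Sec N → TT i x ∈ Sec N := by
      intro x hx
      have hx : Valid N (pos N x) := hx
      show Valid N (pos N (TT i x))
      rw [← rfl_pos]
      exact valid_rfl' hx (by omega) (by omega)
    ext x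
    refine ⟨fun h => ?_, h1 x⟩
    have := h1 _ h
    rwa [TT_invol] at this
  rw [nu, Measure.map_smul]
  congr 1
  rw [eta]
  nth_rewrite 1 [← hs]
  rw [← Measure.restrict_map (measurable_TT i) (measurableSet_sec N), map_TT]

noncomputable def mu0 (N : ℕ) : Measure (ℕ → ℝ) := (nu N).map (pos N)

lemma mu0_inv (N : ℕ) : Inv 0 N (mu0 N) := by
  intro i h0 h1
  obtain ⟨k, rfl⟩ : ∃ k : Fin N, i = k + 1 := ⟨⟨i-1, by omega⟩, by simp; omega⟩
  rw [mu0, Measure.map_map (measurable_rfl' _) (measurable_pos N)]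
  have : rfl' (k+1) ∘ pos N = pos N ∘ TT k := by
    ext1 x; exact rfl_pos k x
  rw [this, ← Measure.map_map (measurable_pos N) (measurable_TT k), map_TT_nu]

lemma mu0_law (N : ℕ) : IsLaw N (mu0 N) := by
  refine ⟨?_, ?_, ?_⟩
  · exact Measure.isProbabilityMeasure_map (measurable_pos N).aemeasurable
  · rw [mu0, ae_map_iff (measurable_pos N).aemeasurable (measurableSet_valid N)]
    exact ae_nu N
  · exact (mu0_inv N).weaken (by omega) (by omega)

end Greedy

namespace Greedy

lemma ms_tail (N : ℕ) (s u : ℝ) : MeasurableSet {p : ℕ → ℝ | s < gap p 0 ∧ u < gap p N} := by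
  have h0 := measurable_gap 0
  have h1 := measurable_gap N
  exact (measurableSet_lt measurable_const h0).inter (measurableSet_lt measurable_const h1)

lemma tail {N : ℕ} (hN : 1 ≤ N) {s u : ℝ} (hs : 0 ≤ s) (hu : 0 ≤ u) :
    mu0 N {p | s < gap p 0 ∧ u < gap p N} = ENNReal.ofReal (1 - s - u) ^ N := by
  have hm : MeasurableSet {p : ℕ → ℝ | s < gap p 0 ∧ u < gap p N} := by
    have h0 := measurable_gap 0
    have h1 := measurable_gap N
    exact (measurableSet_lt measurable_const h0).inter (measurableSet_lt measurable_const h1)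
  rw [mu0, Measure.map_apply (measurable_pos N) hm]
  have h1 : nu N (pos N ⁻¹' {p | s < gap p 0 ∧ u < gap p N}) = nu N {x | ∀ i, x i ∈ Set.Ioo s (1 - u)} := by
    refine measure_congr ?_
    filter_upwards [ae_nu N] with x hx
    have hx : Valid N (pos N x) := hx
    have hmono := ((sec_iff x).1 hx).1.monotone
    refine propext ?_
    have e0 : gap (pos N x) 0 = x ⟨0, hN⟩ := by
      have := pos_succ x ⟨0, hN⟩
      simp only at this
      rw [gap, this, pos_zero, sub_zero]
    have eN : gap (pos N x) N = 1 - x ⟨N-1, by omega⟩ := by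
      have := pos_succ x ⟨N-1, by omega⟩
      simp only [show N - 1 + 1 = N by omega] at this
      rw [gap, this, pos_big x (by omega)]
    show (s < gap (pos N x) 0 ∧ u < gap (pos N x) N) ↔ ∀ i, x i ∈ Set.Ioo s (1 - u)
    rw [e0, eN]
    constructor
    · rintro ⟨h1, h2⟩ i
      have a1 : x ⟨0, hN⟩ ≤ x i := hmono (by simp [Fin.le_def])
      have a2 : x i ≤ x ⟨N-1, by omega⟩ := hmono (by simp only [Fin.le_def]; omega)
      constructor <;> linarith
    · intro h
      have b1 := h ⟨0, hN⟩
      have b2 := h ⟨N-1, by omega⟩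
      exact ⟨b1.1, by linarith [b2.2]⟩
  rw [h1, ← unif_eq]
  · have : {x : Fin N → ℝ | ∀ i, x i ∈ Set.Ioo s (1 - u)} = Set.univ.pi fun _ => Set.Ioo s (1-u) := by
      ext x; simp
    rw [this, unifCube, Measure.pi_pi]
    rw [Measure.restrict_apply measurableSet_Ioo, Set.inter_eq_left.2]
    · simp [sub_right_comm]
    · intro v hv
      exact ⟨by linarith [hv.1], by linarith [hv.2]⟩
  · intro σ x
    constructor
    · intro h i
      simpa using h (σ.symm i)
    · intro h i
      exact h (σ i)

lemma layer (q : ℕ) {g : ℝ} (hg : 0 ≤ g) :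
    ENNReal.ofReal (g ^ (q+1)) = ∫⁻ s in Set.Ioi (0:ℝ), ENNReal.ofReal ((q+1) * s ^ q) * (if s < g then 1 else 0) := by
  have h1 : ∀ s : ℝ, ENNReal.ofReal ((q+1) * s ^ q) * (if s < g then (1:ℝ≥0∞) else 0)
      = (Set.Iio g).indicator (fun s => ENNReal.ofReal ((q+1) * s ^ q)) s := by
    intro s
    by_cases h : s < g <;> simp [h]
  simp only [h1]
  rw [setLIntegral_indicator measurableSet_Iio, Set.inter_comm, Set.Ioi_inter_Iio]
  rw [← ofReal_integral_eq_lintegral_ofReal]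
  · congr 1
    rw [← integral_Ioc_eq_integral_Ioo, ← intervalIntegral.integral_of_le hg, intervalIntegral.integral_const_mul, integral_pow]
    have : ((q:ℝ)+1) ≠ 0 := by positivity
    field_simp
    simp
  · have : Continuous fun s : ℝ => ((q:ℝ)+1) * s ^ q := by fun_prop
    exact (this.integrableOn_Icc (a := 0) (b := g)).mono_set Set.Ioo_subset_Icc_self
  · filter_upwards [ae_restrict_mem measurableSet_Ioo] with s hs
    have := hs.1
    positivity

noncomputable def II (a b : ℕ) : ℝ := ∫ s in (0:ℝ)..1, s ^ a * (1 - s) ^ b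

lemma II_zero (b : ℕ) : II 0 b = 1 / (b+1) := by
  unfold II
  simp only [pow_zero, one_mul]
  rw [intervalIntegral.integral_comp_sub_left (fun s => s ^ b) 1, integral_pow]
  simp

lemma II_succ (a b : ℕ) : II (a+1) b = (a+1) / (b+1) * II a (b+1) := by
  have h : ∫ s in (0:ℝ)..1, ((a+1) * (s ^ a * (1 - s) ^ (b+1)) - (b+1) * (s ^ (a+1) * (1 - s) ^ b)) =
      (fun s : ℝ => s ^ (a+1) * (1 - s) ^ (b+1)) 1 - (fun s : ℝ => s ^ (a+1) * (1 - s) ^ (b+1)) 0 := by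
    refine intervalIntegral.integral_eq_sub_of_hasDerivAt (f := fun s : ℝ => s ^ (a+1) * (1 - s) ^ (b+1)) (fun s _ => ?_) ?_
    · have h1 := (hasDerivAt_pow (a+1) s).mul (((hasDerivAt_id s).const_sub 1).pow (b+1))
      refine HasDerivAt.congr_deriv h1 ?_
      simp
      ring
    · apply Continuous.intervalIntegrable; fun_prop
  rw [intervalIntegral.integral_sub, intervalIntegral.integral_const_mul, intervalIntegral.integral_const_mul] at h
  · have : ((b:ℝ)+1) ≠ 0 := by positivity
    simp only [ne_eq, Nat.add_eq_zero_iff, one_ne_zero, and_false, not_false_eq_true, sub_self, zero_pow, zero_mul, mul_zero] at h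
    change (a+1) * II a (b+1) - (b+1) * II (a+1) b = 0 at h
    field_simp
    linarith
  · apply Continuous.intervalIntegrable; fun_prop
  · apply Continuous.intervalIntegrable; fun_prop

lemma II_one (b : ℕ) : II 1 b = 1 / ((b+1) * (b+2)) := by
  rw [II_succ 0 b, II_zero]
  push_cast
  field_simp
  ring

lemma II_le (a : ℕ) : ∀ b : ℕ, II a b ≤ (Nat.factorial a) / ((b:ℝ)+1) ^ (a+1) := by
  induction a with
  | zero => intro b; rw [II_zero]; simp
  | succ a ih =>
    intro b
    rw [II_succ]
    have h1 := ih (b+1)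
    push_cast at h1
    have h2 : (Nat.factorial a : ℝ) / ((b:ℝ)+1+1) ^ (a+1) ≤ (Nat.factorial a : ℝ) / ((b:ℝ)+1) ^ (a+1) := by
      gcongr; linarith
    calc ((a:ℝ)+1) / (b+1) * II a (b+1) ≤ ((a:ℝ)+1) / (b+1) * ((Nat.factorial a : ℝ) / ((b:ℝ)+1) ^ (a+1)) := by
          gcongr; exact h1.trans h2
      _ = _ := by
          rw [Nat.factorial_succ]; push_cast
          field_simp
          ring

lemma II_nonneg (a b : ℕ) : 0 ≤ II a b := by
  unfold II
  refine intervalIntegral.integral_nonneg (by norm_num) fun s hs => ?_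
  have := hs.1
  have : 0 ≤ 1 - s := by linarith [hs.2]
  positivity

lemma beta_l (q N : ℕ) (hN : 1 ≤ N) : ∫⁻ s in Set.Ioi (0:ℝ), ENNReal.ofReal ((q+1) * s ^ q) * ENNReal.ofReal (1 - s) ^ N
    = ENNReal.ofReal ((q+1) * II q N) := by
  have h1 : ∀ s ∈ Set.Ioi (0:ℝ), ENNReal.ofReal ((q+1) * s ^ q) * ENNReal.ofReal (1 - s) ^ N
      = (Set.Iic 1).indicator (fun s => ENNReal.ofReal ((q+1) * (s ^ q * (1-s)^N))) s := by
    intro s hs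
    have hs : 0 < s := hs
    by_cases h : s ≤ 1
    · rw [Set.indicator_of_mem (by exact h), ← ENNReal.ofReal_pow (by linarith), ← ENNReal.ofReal_mul (by positivity), mul_assoc]
    · rw [Set.indicator_of_notMem (by exact h), ENNReal.ofReal_of_nonpos (p := 1 - s) (by linarith [not_le.1 h]), zero_pow (by omega), mul_zero]
  rw [setLIntegral_congr_fun measurableSet_Ioi h1, setLIntegral_indicator measurableSet_Iic, Set.inter_comm, Set.Ioi_inter_Iic]
  rw [← ofReal_integral_eq_lintegral_ofReal]
  · congr 1
    rw [← intervalIntegral.integral_of_le (by norm_num), intervalIntegral.integral_const_mul]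
    rfl
  · have : Continuous fun s : ℝ => ((q:ℝ)+1) * (s ^ q * (1-s)^N) := by fun_prop
    exact (this.integrableOn_Icc (a := 0) (b := 1)).mono_set Set.Ioc_subset_Icc_self
  · filter_upwards [ae_restrict_mem measurableSet_Ioc] with s hs
    have := hs.1
    have : 0 ≤ 1 - s := by linarith [hs.2]
    positivity

lemma mom1 {N : ℕ} (hN : 1 ≤ N) (q : ℕ) : ∫ p, gap p 0 ^ (q+1) ∂mu0 N = (q+1) * II q N := by
  have hL := mu0_law N
  have := hL.prob
  have hg : ∀ᵐ p ∂mu0 N, 0 ≤ gap p 0 ∧ 0 < gap p N := by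
    filter_upwards [hL.valid] with p hp
    exact ⟨hp.gap_nonneg 0, sub_pos.2 (hp.lt N le_rfl)⟩
  have hm0 := measurable_gap 0
  rw [integral_eq_lintegral_of_nonneg_ae (by filter_upwards [hg] with p hp; exact pow_nonneg hp.1 _)
    (hm0.pow_const _).aestronglyMeasurable]
  have h1 : ∫⁻ p, ENNReal.ofReal (gap p 0 ^ (q+1)) ∂mu0 N =
      ∫⁻ p, (∫⁻ s in Set.Ioi (0:ℝ), ENNReal.ofReal ((q+1) * s ^ q) * (if s < gap p 0 then 1 else 0)) ∂mu0 N := by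
    refine lintegral_congr_ae ?_
    filter_upwards [hg] with p hp
    exact layer q hp.1
  rw [h1, lintegral_lintegral_swap]
  · have h2 : ∀ s ∈ Set.Ioi (0:ℝ), ∫⁻ p, ENNReal.ofReal ((q+1) * s ^ q) * (if s < gap p 0 then 1 else 0) ∂mu0 N
        = ENNReal.ofReal ((q+1) * s ^ q) * ENNReal.ofReal (1 - s) ^ N := by
      intro s hs
      have hs : 0 < s := hs
      rw [lintegral_const_mul _ (Measurable.ite (measurableSet_lt measurable_const hm0) measurable_const measurable_const)]
      congr 1
      have t := tail hN hs.le le_rfl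
      rw [sub_zero] at t
      rw [← t]
      rw [← lintegral_indicator_one (ms_tail N s 0)]
      refine lintegral_congr_ae ?_
      filter_upwards [hg] with p hp
      by_cases h : s < gap p 0 <;> simp [h, hp.2]
    rw [setLIntegral_congr_fun measurableSet_Ioi h2, beta_l q N hN, ENNReal.toReal_ofReal]
    have := II_nonneg q N
    positivity
  · apply Measurable.aemeasurable
    apply Measurable.mul
    · fun_prop
    · exact Measurable.ite (measurableSet_lt measurable_snd (hm0.comp measurable_fst)) measurable_const measurable_const

lemma mom2 {N : ℕ} (hN : 1 ≤ N) : ∫ p, gap p 0 ^ 2 * gap p N ^ 2 ∂mu0 N ≤ (2 * II 1 N) ^ 2 := by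
  have hL := mu0_law N
  have := hL.prob
  have hg : ∀ᵐ p ∂mu0 N, 0 ≤ gap p 0 ∧ 0 ≤ gap p N := by
    filter_upwards [hL.valid] with p hp
    exact ⟨hp.gap_nonneg 0, hp.gap_nonneg N⟩
  have hm0 := measurable_gap 0
  have hmN := measurable_gap N
  rw [integral_eq_lintegral_of_nonneg_ae (by filter_upwards [hg] with p hp; positivity)
    (Measurable.aestronglyMeasurable (by fun_prop))]
  refine ENNReal.toReal_le_of_le_ofReal (by positivity) ?_
  have hw : Measurable fun s : ℝ => ENNReal.ofReal (((1:ℕ)+1) * s ^ 1) := by fun_prop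
  have hi : Measurable fun z : (ℕ → ℝ) × ℝ => ENNReal.ofReal (((1:ℕ)+1) * z.2 ^ 1) * (if z.2 < gap z.1 0 then (1:ℝ≥0∞) else 0) :=
    Measurable.mul (by fun_prop) (Measurable.ite (measurableSet_lt measurable_snd (hm0.comp measurable_fst)) measurable_const measurable_const)
  have hj : Measurable fun z : (ℕ → ℝ) × ℝ => ENNReal.ofReal (((1:ℕ)+1) * z.2 ^ 1) * (if z.2 < gap z.1 N then (1:ℝ≥0∞) else 0) :=
    Measurable.mul (by fun_prop) (Measurable.ite (measurableSet_lt measurable_snd (hmN.comp measurable_fst)) measurable_const measurable_const)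
  have h1 : ∫⁻ p, ENNReal.ofReal (gap p 0 ^ 2 * gap p N ^ 2) ∂mu0 N =
      ∫⁻ p, (∫⁻ s in Set.Ioi (0:ℝ), ∫⁻ u in Set.Ioi (0:ℝ),
        (ENNReal.ofReal (((1:ℕ)+1) * s ^ 1) * (if s < gap p 0 then 1 else 0)) *
        (ENNReal.ofReal (((1:ℕ)+1) * u ^ 1) * (if u < gap p N then 1 else 0))) ∂mu0 N := by
    refine lintegral_congr_ae ?_
    filter_upwards [hg] with p hp
    rw [ENNReal.ofReal_mul (by positivity), layer 1 hp.1, layer 1 hp.2]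
    rw [lintegral_lintegral_mul]
    · exact (hi.comp (measurable_const.prodMk measurable_id : Measurable fun s : ℝ => (p, s))).aemeasurable
    · exact (hj.comp (measurable_const.prodMk measurable_id : Measurable fun s : ℝ => (p, s))).aemeasurable
  rw [h1, lintegral_lintegral_swap]
  · have h2 : ∀ s ∈ Set.Ioi (0:ℝ), ∫⁻ p, (∫⁻ u in Set.Ioi (0:ℝ),
        (ENNReal.ofReal (((1:ℕ)+1) * s ^ 1) * (if s < gap p 0 then 1 else 0)) *
        (ENNReal.ofReal (((1:ℕ)+1) * u ^ 1) * (if u < gap p N then 1 else 0))) ∂mu0 N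
        ≤ ∫⁻ u in Set.Ioi (0:ℝ), (ENNReal.ofReal (((1:ℕ)+1) * s ^ 1) * ENNReal.ofReal (1 - s) ^ N)
          * (ENNReal.ofReal (((1:ℕ)+1) * u ^ 1) * ENNReal.ofReal (1 - u) ^ N) := by
      intro s hs
      have hs : 0 < s := hs
      rw [lintegral_lintegral_swap]
      · refine setLIntegral_mono' measurableSet_Ioi fun u hu => ?_
        have hu : 0 < u := hu
        have e : ∀ p : ℕ → ℝ, (ENNReal.ofReal (((1:ℕ)+1) * s ^ 1) * (if s < gap p 0 then 1 else 0)) *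
          (ENNReal.ofReal (((1:ℕ)+1) * u ^ 1) * (if u < gap p N then 1 else 0)) =
          (ENNReal.ofReal (((1:ℕ)+1) * s ^ 1) * ENNReal.ofReal (((1:ℕ)+1) * u ^ 1)) *
            {p : ℕ → ℝ | s < gap p 0 ∧ u < gap p N}.indicator 1 p := by
          intro p
          by_cases h : s < gap p 0 <;> by_cases h' : u < gap p N <;> simp [h, h']
        simp only [e]
        have hms := ms_tail N s u
        rw [lintegral_const_mul _ (measurable_one.indicator hms), lintegral_indicator_one hms, tail hN hs.le hu.le]
        have : ENNReal.ofReal (1 - s - u) ≤ ENNReal.ofReal (1 - s) * ENNReal.ofReal (1 - u) := by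
          by_cases hsu : 1 - s - u ≤ 0
          · rw [ENNReal.ofReal_of_nonpos hsu]; exact zero_le
          · push Not at hsu
            rw [← ENNReal.ofReal_mul (by linarith)]
            apply ENNReal.ofReal_le_ofReal
            nlinarith [mul_pos hs hu]
        calc _ ≤ (ENNReal.ofReal (((1:ℕ)+1) * s ^ 1) * ENNReal.ofReal (((1:ℕ)+1) * u ^ 1)) * (ENNReal.ofReal (1 - s) * ENNReal.ofReal (1 - u)) ^ N := by gcongr
          _ = _ := by rw [mul_pow]; ring
      · apply Measurable.aemeasurable
        apply Measurable.mul
        · exact hi.comp (measurable_fst.prodMk measurable_const : Measurable fun z : (ℕ → ℝ) × ℝ => (z.1, s))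
        · exact hj
    refine (setLIntegral_mono' measurableSet_Ioi h2).trans ?_
    rw [lintegral_lintegral_mul, beta_l 1 N hN, ← ENNReal.ofReal_mul (by have := II_nonneg 1 N; positivity)]
    · apply ENNReal.ofReal_le_ofReal
      push_cast
      apply le_of_eq; ring
    · fun_prop
    · fun_prop
  · apply Measurable.aemeasurable
    apply Measurable.lintegral_prod_right' (f := fun z : ((ℕ → ℝ) × ℝ) × ℝ =>
        (ENNReal.ofReal (((1:ℕ)+1) * z.1.2 ^ 1) * (if z.1.2 < gap z.1.1 0 then 1 else 0)) *
        (ENNReal.ofReal (((1:ℕ)+1) * z.2 ^ 1) * (if z.2 < gap z.1.1 N then 1 else 0)))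
    apply Measurable.mul
    · exact hi.comp measurable_fst
    · exact hj.comp ((measurable_fst.comp measurable_fst).prodMk measurable_snd)

lemma gap_mom {N : ℕ} {i : ℕ} (hi : i ≤ N) (q : ℕ) : ∫ p, gap p i ^ q ∂mu0 N = ∫ p, gap p 0 ^ q ∂mu0 N := by
  have := (mu0_inv N).good (le_refl 0) (Nat.zero_le _) (Nat.zero_le i) hi (fun g => g 0 ^ q) (by fun_prop)
  simpa using this

lemma gap_int {N : ℕ} (i q : ℕ) : Integrable (fun p => gap p i ^ q) (mu0 N) := by
  simpa using hh_integrable (mu0_law N) 0 q 0 i i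

lemma G_mom (N q : ℕ) : ∫ p, G q N p ∂mu0 N = (N+1) * ∫ p, gap p 0 ^ q ∂mu0 N := by
  unfold G
  rw [integral_finsetSum _ fun i _ => gap_int i q,
    Finset.sum_congr rfl fun i hi => gap_mom (N := N) (by have := Finset.mem_range.1 hi; omega) q]
  simp

lemma m8 {N : ℕ} (hN : 1 ≤ N) : (N:ℝ)^7 * ∫ p, G 8 N p ∂mu0 N ≤ 80640 := by
  rw [G_mom, mom1 hN 7]
  have h := II_le 7 N
  rw [show (Nat.factorial 7 : ℝ) = 5040 by norm_num [Nat.factorial]] at h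
  have h0 : (0:ℝ) ≤ N := by positivity
  have h2 : (N:ℝ)^7 ≤ ((N:ℝ)+1)^7 := by gcongr; linarith
  calc (N:ℝ)^7 * ((N+1) * (((7:ℕ)+1) * II 7 N)) ≤ ((N:ℝ)+1)^7 * ((N+1) * (((7:ℕ)+1) * (5040 / ((N:ℝ)+1)^8))) := by
        have := II_nonneg 7 N
        gcongr
    _ = 40320 := by push_cast; field_simp; norm_num
    _ ≤ _ := by norm_num

lemma m2 {N : ℕ} (hN : 1 ≤ N) : 2 / ((N:ℝ)+2) ≤ ∫ p, G 2 N p ∂mu0 N := by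
  rw [G_mom, mom1 hN 1, II_one]
  apply le_of_eq
  push_cast
  field_simp
  norm_num

lemma off {N : ℕ} (hN : 1 ≤ N) {i j : ℕ} (hi : i ≤ N) (hj : j ≤ N) (hij : i ≠ j) :
    hh (mu0 N) N 0 2 2 i j = hh (mu0 N) N 0 2 2 0 N := by
  have hs : ∀ {a b b' : ℕ}, a ≠ b → a ≠ b' → b ≤ N → b' ≤ N → hh (mu0 N) N 0 2 2 a b = hh (mu0 N) N 0 2 2 a b' :=
    fun h1 h2 h3 h4 => hh_swap (mu0_inv N) le_rfl 0 2 2 h1 h2 (Nat.zero_le _) h3 (Nat.zero_le _) h4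
  rw [hh_comm (mu0 N) N 0 2 2 0 N]
  by_cases h : i = N
  · subst h
    exact hs hij (by omega) hj (by omega)
  · rw [hs hij h hj le_rfl, hh_comm]
    exact hs (Ne.symm h) (by omega) hi (by omega)

lemma m4 {N : ℕ} (hN : 1 ≤ N) : (N:ℝ)^2 * ∫ p, G 2 N p ^ 2 ∂mu0 N ≤ 4 + 48 / N := by
  have e1 : ∀ p, G 2 N p ^ 2 = ∑ i ∈ Finset.range (N+1), ∑ j ∈ Finset.range (N+1), gap p i ^ 2 * gap p j ^ 2 * G 2 N p ^ 0 := by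
    intro p
    rw [sq, G, Finset.sum_mul_sum]
    simp
  have hI := fun i j => hh_integrable (mu0_law N) 0 2 2 i j
  have e2 : ∫ p, G 2 N p ^ 2 ∂mu0 N = ∑ i ∈ Finset.range (N+1), ∑ j ∈ Finset.range (N+1), hh (mu0 N) N 0 2 2 i j := by
    simp only [e1]
    rw [integral_finsetSum _ fun i _ => integrable_finsetSum _ fun j _ => hI i j]
    refine Finset.sum_congr rfl fun i _ => ?_
    rw [integral_finsetSum _ fun j _ => hI i j]
    rfl
  have hd : ∀ i ≤ N, hh (mu0 N) N 0 2 2 i i ≤ 24 / ((N:ℝ)+1)^4 := by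
    intro i hi
    have : hh (mu0 N) N 0 2 2 i i = ∫ p, gap p i ^ 4 ∂mu0 N := by
      unfold hh; congr 1; ext p; ring
    rw [this, gap_mom hi, mom1 hN 3]
    have h := II_le 3 N
    rw [show (Nat.factorial 3 : ℝ) = 6 by norm_num [Nat.factorial]] at h
    calc (((3:ℕ):ℝ)+1) * II 3 N ≤ (((3:ℕ):ℝ)+1) * (6 / ((N:ℝ)+1)^4) := by gcongr
      _ = _ := by push_cast; ring
  have ho : ∀ i ≤ N, ∀ j ≤ N, i ≠ j → hh (mu0 N) N 0 2 2 i j ≤ 4 / ((N:ℝ)+1)^4 := by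
    intro i hi j hj hij
    rw [off hN hi hj hij]
    have : hh (mu0 N) N 0 2 2 0 N = ∫ p, gap p 0 ^ 2 * gap p N ^ 2 ∂mu0 N := by
      unfold hh; congr 1; ext p; ring
    rw [this]
    refine (mom2 hN).trans ?_
    rw [II_one]
    rw [show (4:ℝ) / ((N:ℝ)+1)^4 = (2 * (1 / (((N:ℝ)+1)*((N:ℝ)+1))))^2 by field_simp; norm_num]
    gcongr
    norm_num
  have e3 : ∫ p, G 2 N p ^ 2 ∂mu0 N ≤ ∑ i ∈ Finset.range (N+1), ∑ j ∈ Finset.range (N+1), (4 / ((N:ℝ)+1)^4 + if i = j then 24 / ((N:ℝ)+1)^4 else 0) := by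
    rw [e2]
    refine Finset.sum_le_sum fun i hi => Finset.sum_le_sum fun j hj => ?_
    have hi := Finset.mem_range.1 hi
    have hj := Finset.mem_range.1 hj
    have : 0 ≤ 4 / ((N:ℝ)+1)^4 := by positivity
    split_ifs with h
    · subst h; linarith [hd i (by omega)]
    · linarith [ho i (by omega) j (by omega) h]
  have e4 : ∑ i ∈ Finset.range (N+1), ∑ j ∈ Finset.range (N+1), (4 / ((N:ℝ)+1)^4 + if i = j then 24 / ((N:ℝ)+1)^4 else 0)
      = 4 / ((N:ℝ)+1)^2 + 24 / ((N:ℝ)+1)^3 := by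
    simp only [Finset.sum_add_distrib, Finset.sum_ite_eq, Finset.sum_const, Finset.card_range]
    rw [Finset.sum_congr rfl fun i hi => if_pos hi]
    simp
    field_simp
  rw [e4] at e3
  have hN' : (1:ℝ) ≤ N := by exact_mod_cast hN
  have b1 : (N:ℝ)^2 * (4 / ((N:ℝ)+1)^2) ≤ 4 := by
    rw [mul_div_assoc', div_le_iff₀ (by positivity)]; nlinarith
  have b2 : (N:ℝ)^2 * (24 / ((N:ℝ)+1)^3) ≤ 48 / N := by
    rw [mul_div_assoc', div_le_div_iff₀ (by positivity) (by positivity)]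
    have : (N:ℝ)^3 ≤ ((N:ℝ)+1)^3 := by gcongr; linarith
    nlinarith
  calc (N:ℝ)^2 * ∫ p, G 2 N p ^ 2 ∂mu0 N ≤ (N:ℝ)^2 * (4 / ((N:ℝ)+1)^2 + 24 / ((N:ℝ)+1)^3) := by gcongr
    _ ≤ _ := by rw [mul_add]; linarith

end Greedy

namespace Greedy

noncomputable def UU : Measure ℝ := volume.restrict (Set.Icc 0 1)

instance : IsProbabilityMeasure UU := ⟨by simp [UU]⟩

lemma UU_eq : UU = volume.restrict (Set.Ioc 0 1) := by
  rw [UU, ← Measure.restrict_congr_set Ioc_ae_eq_Icc]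

noncomputable def pd (n : ℕ) (z : (ℕ → ℝ) × ℝ) : ℝ := |z.1 (idx n z.1 z.2) - z.2|
noncomputable def rm (n : ℕ) (z : (ℕ → ℝ) × ℝ) : ℕ → ℝ := rem (idx n z.1 z.2) z.1

lemma measurable_idx (n : ℕ) : Measurable fun z : (ℕ → ℝ) × ℝ => idx n z.1 z.2 := by
  unfold idx
  simp only [Finset.card_filter]
  refine measurable_const.add (Finset.measurable_fun_sum _ fun j _ => ?_)
  refine Measurable.ite (measurableSet_lt ?_ ?_) measurable_const measurable_const
  · fun_prop
  · fun_prop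

lemma measurable_pd (n : ℕ) : Measurable (pd n) := by
  have h : Measurable fun w : ((ℕ → ℝ) × ℝ) × ℕ => |w.1.1 w.2 - w.1.2| :=
    measurable_from_prod_countable_left fun j => by simp only; fun_prop
  exact h.comp (measurable_id.prodMk (measurable_idx n))

lemma measurable_rm (n : ℕ) : Measurable (rm n) := by
  have h : Measurable fun w : ((ℕ → ℝ) × ℝ) × ℕ => rem w.2 w.1.1 :=
    measurable_from_prod_countable_left fun j => (measurable_rem j).comp measurable_fst
  exact h.comp (measurable_id.prodMk (measurable_idx n))

lemma mid_zero (n : ℕ) (p : ℕ → ℝ) : mid n p 0 = 0 := by simp [mid]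
lemma mid_n {n : ℕ} (hn : 1 ≤ n) (p : ℕ → ℝ) : mid n p n = 1 := by
  rw [mid, if_neg (by omega), if_pos le_rfl]

lemma cells {n : ℕ} (hn : 1 ≤ n) {p : ℕ → ℝ} (h : Valid n p) (φ : ℕ → ℝ → ℝ≥0∞) :
    ∫⁻ v, φ (idx n p v) v ∂UU = ∑ j ∈ Finset.Icc 1 n, ∫⁻ v in Set.Ioc (mid n p (j-1)) (mid n p j), φ j v := by
  have key : ∀ m ≤ n, ∫⁻ v in Set.Ioc (mid n p 0) (mid n p m), φ (idx n p v) v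
      = ∑ j ∈ Finset.Icc 1 m, ∫⁻ v in Set.Ioc (mid n p (j-1)) (mid n p j), φ j v := by
    intro m
    induction m with
    | zero => simp
    | succ m ih =>
      intro hm
      rw [Finset.sum_Icc_succ_top (by omega), ← ih (by omega),
        ← Set.Ioc_union_Ioc_eq_Ioc (h.mid_mono (Nat.zero_le m)) (h.mid_mono (Nat.le_succ m)),
        lintegral_union measurableSet_Ioc (Set.Ioc_disjoint_Ioc_of_le le_rfl)]
      congr 1
      simp only [Nat.add_sub_cancel]
      refine setLIntegral_congr_fun measurableSet_Ioc fun v hv => ?_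
      rw [h.idx_eq (j := m+1) (by omega) hm (by simpa using hv)]
  rw [UU_eq, ← key n le_rfl, mid_zero, mid_n hn]

lemma cells_wt {n : ℕ} (hn : 1 ≤ n) {p : ℕ → ℝ} (h : Valid n p) (f : (ℕ → ℝ) → ℝ≥0∞) :
    ∫⁻ v, f (rm n (p, v)) ∂UU = ∑ j ∈ Finset.Icc 1 n, ENNReal.ofReal (wt n j p) * f (rem j p) := by
  have := cells hn h (fun j _ => f (rem j p))
  simp only [rm]
  rw [this]
  refine Finset.sum_congr rfl fun j _ => ?_
  rw [setLIntegral_const, Real.volume_Ioc, mul_comm, wt]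

lemma abs_int {a b c : ℝ} (h1 : a ≤ c) (h2 : c ≤ b) :
    ∫⁻ v in Set.Ioc a b, ENNReal.ofReal |c - v| = ENNReal.ofReal ((c-a)^2/2 + (b-c)^2/2) := by
  have hc : Continuous fun v : ℝ => |c - v| := by fun_prop
  rw [← ofReal_integral_eq_lintegral_ofReal]
  · congr 1
    rw [← intervalIntegral.integral_of_le (h1.trans h2),
      ← intervalIntegral.integral_add_adjacent_intervals (hc.intervalIntegrable a c) (hc.intervalIntegrable c b)]
    congr 1
    · have : ∫ v in a..c, |c - v| = ∫ v in a..c, (c - v) := by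
        refine intervalIntegral.integral_congr fun v hv => ?_
        rw [Set.uIcc_of_le h1] at hv
        exact abs_of_nonneg (by linarith [hv.2])
      rw [this, intervalIntegral.integral_comp_sub_left (fun v => v) c, integral_id]
      ring
    · have : ∫ v in c..b, |c - v| = ∫ v in c..b, (v - c) := by
        refine intervalIntegral.integral_congr fun v hv => ?_
        rw [Set.uIcc_of_le h2] at hv
        rw [abs_of_nonpos (by linarith [hv.1])]; ring
      rw [this, intervalIntegral.integral_comp_sub_right (fun v => v) c, integral_id]
      ring
  · exact (hc.integrableOn_Icc (a := a) (b := b)).mono_set Set.Ioc_subset_Icc_self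
  · filter_upwards with v; exact abs_nonneg _

lemma mid_left {n : ℕ} {p : ℕ → ℝ} (h : Valid n p) {j : ℕ} (h1 : 1 ≤ j) (h2 : j ≤ n) :
    p j - mid n p (j-1) = if j = 1 then gap p 0 else gap p (j-1) / 2 := by
  split_ifs with hj
  · subst hj; simp [mid, gap, h.zero]
  · rw [mid, if_neg (by omega), if_neg (by omega), gap, show j - 1 + 1 = j by omega]; ring

lemma mid_right {n : ℕ} {p : ℕ → ℝ} (h : Valid n p) {j : ℕ} (h1 : 1 ≤ j) (h2 : j ≤ n) :
    mid n p j - p j = if j = n then gap p n else gap p j / 2 := by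
  split_ifs with hj
  · subst hj; rw [mid_n h1, gap, h.one _ (Nat.lt_succ_self j)]
  · rw [mid, if_neg (by omega), if_neg (by omega), gap]; ring

noncomputable def FF (n : ℕ) (p : ℕ → ℝ) : ℝ := ∫ v, pd n (p, v) ∂UU

lemma FF_eq {n : ℕ} (hn : 1 ≤ n) {p : ℕ → ℝ} (h : Valid n p) :
    FF n p = G 2 n p / 4 + (gap p 0 ^ 2 + gap p n ^ 2) / 4 := by
  have hm : Measurable fun v => pd n (p, v) := (measurable_pd n).comp (measurable_const.prodMk measurable_id)
  rw [FF, integral_eq_lintegral_of_nonneg_ae (by filter_upwards with v; exact abs_nonneg _) hm.aestronglyMeasurable]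
  have h1 := cells hn h (fun j v => ENNReal.ofReal |p j - v|)
  have h2 : ∀ v, pd n (p, v) = |p (idx n p v) - v| := fun v => rfl
  simp only [h2]
  rw [h1]
  have h3 : ∀ j ∈ Finset.Icc 1 n, ∫⁻ v in Set.Ioc (mid n p (j-1)) (mid n p j), ENNReal.ofReal |p j - v|
      = ENNReal.ofReal ((gap p (j-1) ^ 2 / 8 + if j = 1 then 3/8 * gap p 0 ^ 2 else 0) +
          (gap p j ^ 2 / 8 + if j = n then 3/8 * gap p n ^ 2 else 0)) := by
    intro j hj
    rw [Finset.mem_Icc] at hj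
    have e1 := mid_left h hj.1 hj.2
    have e2 := mid_right h hj.1 hj.2
    have g0 := h.gap_nonneg 0
    have gn := h.gap_nonneg n
    have gj := h.gap_nonneg j
    have gj' := h.gap_nonneg (j-1)
    rw [abs_int, e1, e2]
    · congr 2
      · split_ifs with h4
        · subst h4; simp; ring
        · ring
      · split_ifs with h4
        · subst h4; ring
        · ring
    · rw [← sub_nonneg, e1]; split_ifs <;> positivity
    · rw [← sub_nonneg, e2]; split_ifs <;> positivity
  rw [Finset.sum_congr rfl h3, ← ENNReal.ofReal_sum_of_nonneg, ENNReal.toReal_ofReal]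
  · rw [Finset.sum_add_distrib, Finset.sum_add_distrib, Finset.sum_add_distrib,
      Finset.sum_ite_eq' (Finset.Icc 1 n) 1, Finset.sum_ite_eq' (Finset.Icc 1 n) n,
      if_pos (by simp [hn]), if_pos (by simp [hn])]
    have a1 : ∑ j ∈ Finset.Icc 1 n, gap p (j-1) ^ 2 / 8 = (G 2 n p - gap p n ^ 2) / 8 := by
      rw [G, Finset.sum_range_succ, ← Finset.sum_div]
      congr 1
      rw [Finset.range_eq_Ico, show Finset.Icc 1 n = Finset.Ico (0+1) (n+1) from rfl, ← Finset.sum_Ico_add']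
      simp
    have a2 : ∑ j ∈ Finset.Icc 1 n, gap p j ^ 2 / 8 = (G 2 n p - gap p 0 ^ 2) / 8 := by
      rw [G, Finset.sum_range_succ', ← Finset.sum_div]
      congr 1
      rw [Finset.range_eq_Ico, show Finset.Icc 1 n = Finset.Ico (0+1) (n+1) from rfl, ← Finset.sum_Ico_add']
      simp
    rw [a1, a2]
    ring
  · refine Finset.sum_nonneg fun j _ => ?_
    split_ifs <;> positivity
  · intro j _
    split_ifs <;> positivity

lemma FF_close {n : ℕ} (hn : 1 ≤ n) {p : ℕ → ℝ} (h : Valid n p) : |FF n p - G 2 n p / 4| ≤ M n p ^ 2 / 2 := by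
  rw [FF_eq hn h]
  have a := h.gap_nonneg 0
  have b := h.gap_nonneg n
  have c := h.gap_le_M 0
  have d := h.gap_le_M n
  rw [abs_of_nonneg (by nlinarith)]
  nlinarith

lemma pd_le {n : ℕ} (hn : 1 ≤ n) {p : ℕ → ℝ} (h : Valid n p) : ∀ᵐ v ∂UU, pd n (p, v) ≤ M n p := by
  rw [UU_eq]
  filter_upwards [ae_restrict_mem measurableSet_Ioc] with v hv
  have hcov : ∀ m, v ≤ mid n p m → ∃ j, 1 ≤ j ∧ j ≤ m ∧ v ∈ Set.Ioc (mid n p (j-1)) (mid n p j) := by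
    intro m
    induction m with
    | zero => intro h0; rw [mid_zero] at h0; linarith [hv.1]
    | succ m ih =>
      intro h1
      by_cases h2 : v ≤ mid n p m
      · obtain ⟨j, a, b, c⟩ := ih h2
        exact ⟨j, a, by omega, c⟩
      · exact ⟨m+1, by omega, le_rfl, by simpa using not_le.1 h2, h1⟩
  obtain ⟨j, a, b, c⟩ := hcov n (by rw [mid_n hn]; exact hv.2)
  rw [pd]
  simp only
  rw [h.idx_eq a b c]
  have e1 := mid_left h a b
  have e2 := mid_right h a b
  have := h.gap_le_M 0
  have := h.gap_le_M n
  have := h.gap_le_M j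
  have := h.gap_le_M (j-1)
  have := h.gap_nonneg j
  have := h.gap_nonneg (j-1)
  have h1 : p j - mid n p (j-1) ≤ M n p := by rw [e1]; split_ifs <;> linarith
  have h2 : mid n p j - p j ≤ M n p := by rw [e2]; split_ifs <;> linarith
  rw [abs_le]
  constructor <;> linarith [c.1, c.2]

lemma pd_int {n : ℕ} (hn : 1 ≤ n) {p : ℕ → ℝ} (h : Valid n p) : Integrable (fun v => pd n (p, v)) UU := by
  have hm : Measurable fun v => pd n (p, v) := (measurable_pd n).comp (measurable_const.prodMk measurable_id)
  refine Integrable.of_bound hm.aestronglyMeasurable (M n p) ?_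
  filter_upwards [pd_le hn h] with v hv
  rwa [Real.norm_eq_abs, abs_of_nonneg (show 0 ≤ pd n (p, v) from abs_nonneg _)]

lemma FF_nonneg (n : ℕ) (p : ℕ → ℝ) : 0 ≤ FF n p := integral_nonneg fun _ => abs_nonneg _

lemma FF_le {n : ℕ} (hn : 1 ≤ n) {p : ℕ → ℝ} (h : Valid n p) : FF n p ≤ M n p := by
  have := integral_mono_ae (pd_int hn h) (integrable_const (M n p)) (pd_le hn h)
  simpa [FF] using this

lemma measurable_FF (n : ℕ) : Measurable (FF n) := by
  unfold FF
  exact ((measurable_pd n).stronglyMeasurable.integral_prod_right').measurable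

end Greedy

namespace Greedy

abbrev Om (N : ℕ) := (Fin N → ℝ) × (Fin N → ℝ)

noncomputable def QQ (N : ℕ) : Measure (Om N) := (nu N).prod (unifCube N)

instance (N : ℕ) : IsProbabilityMeasure (QQ N) := by unfold QQ; infer_instance

noncomputable def upd {N : ℕ} (k : Fin N) (z : Om N × ℝ) : Om N := (z.1.1, Function.update z.1.2 k z.2)

lemma measurable_upd {N : ℕ} (k : Fin N) : Measurable (upd k) := by
  unfold upd
  refine Measurable.prodMk (by fun_prop) (measurable_pi_lambda _ fun j => ?_)
  by_cases h : j = k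
  · subst h; simp only [Function.update_self]; fun_prop
  · simp only [Function.update_of_ne h]; fun_prop

lemma cube_resample {N : ℕ} (k : Fin N) {f : (Fin N → ℝ) → ℝ≥0∞} (hf : Measurable f) :
    ∫⁻ y, (∫⁻ v, f (Function.update y k v) ∂UU) ∂unifCube N = ∫⁻ y, f y ∂unifCube N := by
  have hm : Measurable fun z : (Fin N → ℝ) × ℝ => f (Function.update z.1 k z.2) := by
    refine hf.comp (measurable_pi_lambda _ fun j => ?_)
    by_cases h : j = k
    · subst h; simp only [Function.update_self]; fun_prop
    · simp only [Function.update_of_ne h]; fun_prop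
  unfold unifCube
  refine lintegral_eq_of_lmarginal_eq (μ := fun _ => volume.restrict (Set.Icc (0:ℝ) 1)) {k} hm.lintegral_prod_right' hf ?_
  rw [lmarginal_singleton, lmarginal_singleton]
  ext y
  simp [UU]

lemma QQ_resample {N : ℕ} (k : Fin N) : ((QQ N).prod UU).map (upd k) = QQ N := by
  refine Measure.ext_of_lintegral _ fun f hf => ?_
  have hm : Measurable fun z => f (upd k z) := hf.comp (measurable_upd k)
  rw [lintegral_map hf (measurable_upd k), lintegral_prod _ hm.aemeasurable, QQ,
    lintegral_prod _ (hm.lintegral_prod_right').aemeasurable, lintegral_prod _ hf.aemeasurable]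
  refine lintegral_congr fun x => ?_
  exact cube_resample k (f := fun y => f (x, y)) (hf.comp (measurable_const.prodMk measurable_id))

lemma measurable_ye {N : ℕ} (k : ℕ) : Measurable fun ω : Om N => ye N ω.2 k := by
  unfold ye
  split_ifs <;> fun_prop

lemma measurable_st (N : ℕ) (k : ℕ) : Measurable fun ω : Om N => st N ω k := by
  induction k with
  | zero => exact (measurable_pos N).comp measurable_fst
  | succ k ih =>
    have h : Measurable fun ω : Om N => rm (N-k) (st N ω k, ye N ω.2 k) :=
      (measurable_rm (N-k)).comp (ih.prodMk (measurable_ye k))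
    have e : (fun ω : Om N => st N ω (k+1)) = fun ω : Om N => rm (N-k) (st N ω k, ye N ω.2 k) := by
      ext1 ω; rw [st, rm]
    rw [e]; exact h

lemma measurable_dd (N k : ℕ) : Measurable fun ω : Om N => dd N k ω :=
  (measurable_pd (N-k)).comp ((measurable_st N k).prodMk (measurable_ye k))

lemma ye_upd {N : ℕ} (k : Fin N) (z : Om N × ℝ) {j : ℕ} (hj : j ≠ k) : ye N (upd k z).2 j = ye N z.1.2 j := by
  unfold ye upd
  split_ifs with h
  · simp only
    rw [Function.update_of_ne]
    intro h; exact hj (by rw [← h])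
  · rfl

lemma ye_upd_self {N : ℕ} (k : Fin N) (z : Om N × ℝ) : ye N (upd k z).2 k = z.2 := by
  unfold ye upd
  simp

lemma st_upd {N : ℕ} (k : Fin N) (z : Om N × ℝ) : ∀ j : ℕ, j ≤ k → st N (upd k z) j = st N z.1 j
  | 0, _ => rfl
  | j+1, hj => by
    rw [st, st, st_upd k z j (by omega), ye_upd k z (by omega)]

lemma dd_upd {N : ℕ} (k : Fin N) (z : Om N × ℝ) {j : ℕ} (hj : j < k) : dd N j (upd k z) = dd N j z.1 := by
  rw [dd, dd, st_upd k z j hj.le, ye_upd k z (by omega)]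

lemma dd_upd_self {N : ℕ} (k : Fin N) (z : Om N × ℝ) : dd N k (upd k z) = pd (N-k) (st N z.1 k, z.2) := by
  rw [dd, st_upd k z k le_rfl, ye_upd_self]; rfl

lemma st_upd_succ {N : ℕ} (k : Fin N) (z : Om N × ℝ) : st N (upd k z) (k+1) = rm (N-k) (st N z.1 k, z.2) := by
  rw [st, st_upd k z k le_rfl, ye_upd_self]; rfl

lemma ae_QQ (N : ℕ) : ∀ᵐ ω ∂QQ N, Valid N (pos N ω.1) := by
  have := ae_nu N
  exact Measure.quasiMeasurePreserving_fst.ae this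

lemma map_st (N : ℕ) : ∀ k ≤ N, (QQ N).map (fun ω => st N ω k) = law N (mu0 N) k := by
  intro k
  induction k with
  | zero =>
    intro _
    show (QQ N).map (pos N ∘ Prod.fst) = mu0 N
    rw [← Measure.map_map (measurable_pos N) measurable_fst, QQ, Measure.map_fst_prod]
    simp [mu0]
  | succ k ih =>
    intro hk
    have ih := ih (by omega)
    refine Measure.ext_of_lintegral _ fun f hf => ?_
    have hr : ∀ j, Measurable (rem j) := measurable_rem
    have hf1 : Measurable fun ω : Om N => f (st N ω (k+1)) := hf.comp (measurable_st N (k+1))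
    have hf2 : Measurable fun z : Om N × ℝ => f (st N (upd ⟨k, hk⟩ z) (k+1)) := hf1.comp (measurable_upd _)
    rw [law, lintegral_nextLaw _ _ hf, ← ih, lintegral_map hf (measurable_st N (k+1))]
    conv_lhs => rw [← QQ_resample ⟨k, hk⟩]
    rw [lintegral_map hf1 (measurable_upd _), lintegral_prod _ hf2.aemeasurable]
    rw [Finset.sum_congr rfl fun j _ => lintegral_map (f := fun p => ENNReal.ofReal (wt (N-k) j p) * f (rem j p))
      (Measurable.mul (by fun_prop) (hf.comp (hr j))) (measurable_st N k)]
    rw [← lintegral_finsetSum]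
    · refine lintegral_congr_ae ?_
      filter_upwards [ae_QQ N] with ω hω
      have := cells_wt (show 1 ≤ N - k by omega) (st_valid hω k (by omega)) f
      rw [← this]
      refine lintegral_congr fun v => ?_
      rw [show k + 1 = ((⟨k, hk⟩ : Fin N) : ℕ) + 1 from rfl, st_upd_succ]
    · intro j _
      exact (Measurable.mul (by fun_prop) (hf.comp (hr j)) : Measurable fun p => ENNReal.ofReal (wt (N-k) j p) * f (rem j p)).comp (measurable_st N k)

lemma int_st {N k : ℕ} (hk : k ≤ N) {f : (ℕ → ℝ) → ℝ} (hf : Measurable f) :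
    ∫ ω, f (st N ω k) ∂QQ N = ∫ p, f p ∂law N (mu0 N) k := by
  rw [← map_st N k hk, integral_map (measurable_st N k).aemeasurable hf.aestronglyMeasurable]

/-- martingale part -/
noncomputable def ZZ (N m : ℕ) (ω : Om N) : ℝ := ∑ i ∈ Finset.range m, (dd N i ω - FF (N-i) (st N ω i))

lemma measurable_ZZ (N m : ℕ) : Measurable (ZZ N m) := by
  unfold ZZ
  refine Finset.measurable_fun_sum _ fun i _ => ?_
  exact (measurable_dd N i).sub ((measurable_FF _).comp (measurable_st N i))

lemma dd_le {N k : ℕ} (hk : k < N) : ∀ᵐ ω ∂QQ N, dd N k ω ≤ M (N-k) (st N ω k) := by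
  have hms0 : MeasurableSet {ω : Om N | dd N k ω ≤ M (N-k) (st N ω k)} :=
    measurableSet_le (measurable_dd N k) ((measurable_M _).comp (measurable_st N k))
  have hms : MeasurableSet {z : Om N × ℝ | dd N k (upd ⟨k, hk⟩ z) ≤ M (N-k) (st N (upd ⟨k, hk⟩ z) k)} :=
    (measurable_upd ⟨k, hk⟩) hms0
  rw [← QQ_resample ⟨k, hk⟩, ae_map_iff (measurable_upd _).aemeasurable hms0]
  rw [Measure.ae_prod_iff_ae_ae hms]
  filter_upwards [ae_QQ N] with ω hω
  filter_upwards [pd_le (show 1 ≤ N - k by omega) (st_valid hω k hk.le)] with v hv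
  have h1 := dd_upd_self ⟨k, hk⟩ (ω, v)
  have h2 := st_upd ⟨k, hk⟩ (ω, v) k le_rfl
  simp only at h1
  rw [h1, h2]
  exact hv

lemma DD_bd {N k : ℕ} (hk : k < N) : ∀ᵐ ω ∂QQ N, |dd N k ω - FF (N-k) (st N ω k)| ≤ M (N-k) (st N ω k) := by
  filter_upwards [dd_le hk, ae_QQ N] with ω h1 hω
  have hv := st_valid hω k hk.le
  have h2 := FF_le (show 1 ≤ N - k by omega) hv
  have h3 := FF_nonneg (N-k) (st N ω k)
  have h4 : 0 ≤ dd N k ω := abs_nonneg _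
  rw [abs_le]; constructor <;> linarith

lemma ZZ_bd {N m : ℕ} (hm : m ≤ N) : ∀ᵐ ω ∂QQ N, |ZZ N m ω| ≤ m := by
  have : ∀ᵐ ω ∂QQ N, ∀ k < m, |dd N k ω - FF (N-k) (st N ω k)| ≤ M (N-k) (st N ω k) := by
    rw [ae_all_iff]; intro k
    by_cases h : k < m
    · filter_upwards [DD_bd (show k < N by omega)] with ω hω; intro _; exact hω
    · filter_upwards with ω; intro h'; exact absurd h' h
  filter_upwards [this, ae_QQ N] with ω h hω
  calc |ZZ N m ω| ≤ ∑ i ∈ Finset.range m, |dd N i ω - FF (N-i) (st N ω i)| := Finset.abs_sum_le_sum_abs _ _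
    _ ≤ ∑ i ∈ Finset.range m, (1:ℝ) := by
        refine Finset.sum_le_sum fun i hi => ?_
        have hi := Finset.mem_range.1 hi
        exact (h i hi).trans (st_valid hω i (by omega)).M_le_one
    _ = m := by simp

lemma ZZ_int {N m : ℕ} (hm : m ≤ N) (q : ℕ) : Integrable (fun ω => ZZ N m ω ^ q) (QQ N) := by
  refine Integrable.of_bound ((measurable_ZZ N m).pow_const q).aestronglyMeasurable ((m:ℝ)^q) ?_
  filter_upwards [ZZ_bd hm] with ω h
  rw [norm_pow]
  exact pow_le_pow_left₀ (norm_nonneg _) h q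

lemma M_st_int {N k : ℕ} (hk : k ≤ N) (q : ℕ) : Integrable (fun ω => M (N-k) (st N ω k) ^ q) (QQ N) := by
  refine Integrable.of_bound (((measurable_M _).comp (measurable_st N k)).pow_const q).aestronglyMeasurable 1 ?_
  filter_upwards [ae_QQ N] with ω hω
  have hv := st_valid hω k hk
  rw [norm_pow, Real.norm_eq_abs, abs_of_nonneg hv.M_nonneg]
  exact pow_le_one₀ hv.M_nonneg hv.M_le_one

lemma ZZ_step {N k : ℕ} (hk : k < N) : ∫ ω, ZZ N (k+1) ω ^ 2 ∂QQ N ≤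
    ∫ ω, ZZ N k ω ^ 2 ∂QQ N + ∫ ω, M (N-k) (st N ω k) ^ 2 ∂QQ N := by
  have hI := ZZ_int (show k + 1 ≤ N from hk) 2
  have hI' := hI
  rw [← QQ_resample ⟨k, hk⟩] at hI'
  have hI2 := hI'.comp_measurable (measurable_upd ⟨k, hk⟩)
  have e1 : ∫ ω, ZZ N (k+1) ω ^ 2 ∂QQ N = ∫ ω, (∫ v, ZZ N (k+1) (upd ⟨k, hk⟩ (ω, v)) ^ 2 ∂UU) ∂QQ N := by
    conv_lhs => rw [← QQ_resample ⟨k, hk⟩]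
    rw [integral_map (measurable_upd _).aemeasurable ((measurable_ZZ N (k+1)).pow_const 2).aestronglyMeasurable]
    exact integral_prod _ hI2
  rw [e1, ← integral_add (ZZ_int hk.le 2) (M_st_int hk.le 2)]
  refine integral_mono_ae hI2.integral_prod_left ((ZZ_int hk.le 2).add (M_st_int hk.le 2)) ?_
  filter_upwards [ae_QQ N] with ω hω
  have hv := st_valid hω k hk.le
  have hn : 1 ≤ N - k := by omega
  set p := st N ω k with hp
  set Z := ZZ N k ω with hZ
  have e2 : ∀ v, ZZ N (k+1) (upd ⟨k, hk⟩ (ω, v)) = Z + (pd (N-k) (p, v) - FF (N-k) p) := by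
    intro v
    have h1 := dd_upd_self ⟨k, hk⟩ (ω, v)
    have h2 := st_upd ⟨k, hk⟩ (ω, v) k le_rfl
    simp only at h1 h2
    rw [ZZ, Finset.sum_range_succ, h1, h2, hZ, ZZ]
    congr 1
    refine Finset.sum_congr rfl fun i hi => ?_
    have hi := Finset.mem_range.1 hi
    rw [dd_upd ⟨k, hk⟩ (ω, v) hi, st_upd ⟨k, hk⟩ (ω, v) i hi.le]
  simp only [e2]
  have hmv : Measurable fun v => pd (N-k) (p, v) := (measurable_pd _).comp (measurable_const.prodMk measurable_id)
  have i1 := pd_int hn hv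
  have i2 : Integrable (fun v => (pd (N-k) (p, v) - FF (N-k) p)) UU := i1.sub (integrable_const _)
  have hb : ∀ᵐ v ∂UU, (pd (N-k) (p, v) - FF (N-k) p)^2 ≤ M (N-k) p ^ 2 := by
    filter_upwards [pd_le hn hv] with v h1
    have h2 := FF_le hn hv
    have h3 := FF_nonneg (N-k) p
    have h4 : 0 ≤ pd (N-k) (p, v) := abs_nonneg _
    rw [sq_le_sq, abs_of_nonneg hv.M_nonneg, abs_le]
    constructor <;> linarith
  have i3 : Integrable (fun v => (pd (N-k) (p, v) - FF (N-k) p)^2) UU := by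
    refine Integrable.of_bound ((hmv.sub_const _).pow_const 2).aestronglyMeasurable (M (N-k) p ^ 2) ?_
    filter_upwards [hb] with v h
    rwa [Real.norm_eq_abs, abs_of_nonneg (sq_nonneg _)]
  have e3 : ∀ v, (Z + (pd (N-k) (p, v) - FF (N-k) p))^2 = (Z^2 + 2 * Z * (pd (N-k) (p, v) - FF (N-k) p)) + (pd (N-k) (p, v) - FF (N-k) p)^2 := by
    intro v; ring
  simp only [e3]
  have i4 : Integrable (fun v => Z^2 + 2 * Z * (pd (N-k) (p, v) - FF (N-k) p)) UU := (integrable_const _).add (i2.const_mul _)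
  rw [integral_add i4 i3, integral_add (integrable_const _) (i2.const_mul _), integral_const_mul,
    integral_sub i1 (integrable_const _)]
  have h5 : ∫ v, pd (N-k) (p, v) ∂UU = FF (N-k) p := rfl
  rw [h5]
  have h6 := integral_mono_ae i3 (integrable_const _) hb
  simp only [integral_const, probReal_univ, one_smul, smul_eq_mul] at h6 ⊢
  show _ ≤ Z ^ 2 + M (N-k) p ^ 2
  linarith

lemma ZZ_var {N m : ℕ} (hm : m ≤ N) : ∫ ω, ZZ N m ω ^ 2 ∂QQ N ≤
    ∑ k ∈ Finset.range m, ∫ p, M (N-k) p ^ 2 ∂law N (mu0 N) k := by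
  induction m with
  | zero => simp [ZZ]
  | succ m ih =>
    rw [Finset.sum_range_succ, ← int_st (show m ≤ N by omega) (f := fun p => M (N-m) p ^ 2) ((measurable_M _).pow_const 2)]
    exact (ZZ_step hm).trans (by gcongr; exact ih (by omega))

end Greedy

namespace Greedy

noncomputable def ak (N k : ℕ) : ℝ := 2 * ((N:ℝ)^2 / (((N:ℝ)-k) * ((N:ℝ)-k-1)))

noncomputable def SS (N m : ℕ) : ℝ := ∑ k ∈ Finset.range m, ak N k / (4 * N)

lemma SS_eq {N m : ℕ} (hm : m + 1 ≤ N) : SS N m = (1/2) * (1 / (1 - (m:ℝ)/N) - 1) := by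
  induction m with
  | zero => simp [SS]
  | succ m ih =>
    have h : ((m:ℝ) + 1 + 1) ≤ N := by exact_mod_cast hm
    have ih := ih (by omega)
    rw [SS, Finset.sum_range_succ, ← SS, ih, ak]
    push_cast
    have h1 : (N:ℝ) ≠ 0 := by have : (0:ℝ) ≤ m := by positivity
                              linarith
    have h2 : (N:ℝ) - m ≠ 0 := by intro h'; linarith
    have h3 : (N:ℝ) - m - 1 ≠ 0 := by intro h'; linarith
    have e1 : 1 - (m:ℝ)/N = (N - m) / N := by field_simp
    have e2 : 1 - ((m:ℝ)+1)/N = (N - m - 1) / N := by field_simp; ring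
    rw [e1, e2]
    field_simp
    ring

/-- the error bound -/
noncomputable def RR (N m : ℕ) (ω : Om N) : ℝ :=
  ∑ k ∈ Finset.range m, (|(N:ℝ) * G 2 (N-k) (st N ω k) - ak N k| / (4 * N) + M (N-k) (st N ω k) ^ 2 / 2)

lemma err {N m : ℕ} (hm : m ≤ N) {ω : Om N} (hω : Valid N (pos N ω.1)) :
    |∑ i ∈ Finset.range m, dd N i ω - SS N m| ≤ |ZZ N m ω| + RR N m ω := by
  have e : ∑ i ∈ Finset.range m, dd N i ω - SS N m = ZZ N m ω + ∑ k ∈ Finset.range m, (FF (N-k) (st N ω k) - ak N k / (4*N)) := by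
    rw [ZZ, SS, ← Finset.sum_sub_distrib, ← Finset.sum_add_distrib]
    refine Finset.sum_congr rfl fun i _ => ?_
    ring
  rw [e]
  refine (abs_add_le _ _).trans (add_le_add le_rfl ?_)
  refine (Finset.abs_sum_le_sum_abs _ _).trans (Finset.sum_le_sum fun k hk => ?_)
  have hk := Finset.mem_range.1 hk
  have hv := st_valid hω k (by omega)
  have h1 := FF_close (show 1 ≤ N - k by omega) hv
  have hN : (0:ℝ) < N := by exact_mod_cast (show 0 < N by omega)
  have h2 : FF (N-k) (st N ω k) - ak N k / (4*N) =
      ((N:ℝ) * G 2 (N-k) (st N ω k) - ak N k) / (4 * N) + (FF (N-k) (st N ω k) - G 2 (N-k) (st N ω k) / 4) := by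
    field_simp
    ring
  rw [h2]
  refine (abs_add_le _ _).trans (add_le_add ?_ h1)
  rw [abs_div, abs_of_pos (show (0:ℝ) < 4 * N by positivity)]

lemma A_int {N k : ℕ} (hk : k ≤ N) (c : ℝ) (q : ℕ) : Integrable (fun p => |(N:ℝ) * G 2 (N-k) p - c| ^ q) (law N (mu0 N) k) := by
  refine integ (isLaw_law (mu0_law N) k hk) (Measurable.pow_const (by fun_prop) q) ((N + |c|) ^ q) fun p hp => ?_
  rw [abs_pow, abs_abs]
  have h1 := hp.G_nonneg 2
  have h2 := hp.G_le_one (q := 2) (by norm_num)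
  refine pow_le_pow_left₀ (abs_nonneg _) ?_ q
  refine (abs_sub _ _).trans ?_
  rw [abs_mul, abs_of_nonneg h1, abs_of_nonneg (show (0:ℝ) ≤ N by positivity)]
  have : (N:ℝ) * G 2 (N-k) p ≤ N * 1 := by gcongr
  linarith

lemma core {N m : ℕ} {C : ℝ} (hC : 1 ≤ C) (hN : 1 ≤ N) (hm : m ≤ N)
    (hmom : ∀ k ≤ m, (N:ℝ) * ∫ p, M (N-k) p ^ 2 ∂law N (mu0 N) k ≤ C / √N ∧
      ∫ p, ((N:ℝ) * G 2 (N-k) p - ak N k) ^ 2 ∂law N (mu0 N) k ≤ C / √N) :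
    Integrable (fun ω => |ZZ N m ω| + RR N m ω) (QQ N) ∧
    ∫ ω, (|ZZ N m ω| + RR N m ω) ∂QQ N ≤ 2 * (1 + C) * (1 / √(√N)) := by
  have hN1 : (1:ℝ) ≤ N := by exact_mod_cast hN
  have hs1 : 1 ≤ √(N:ℝ) := Real.one_le_sqrt.2 hN1
  have hs2 : 1 ≤ √(√(N:ℝ)) := Real.one_le_sqrt.2 hs1
  set r := √(√(N:ℝ)) with hr
  have hrr : √(N:ℝ) = r ^ 2 := (Real.sq_sqrt (by positivity)).symm
  have hr0 : 0 < r := by linarith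
  set s := 1 / r with hs
  have hs0 : 0 < s := by positivity
  have hsle : s ≤ 1 := by rw [hs, div_le_one hr0]; exact hs2
  have hCs : C / √(N:ℝ) = C * s ^ 2 := by rw [hrr, hs]; field_simp
  rw [hCs] at hmom
  have hMb : ∀ k ≤ m, ∫ p, M (N-k) p ^ 2 ∂law N (mu0 N) k ≤ C * s ^ 2 / N := by
    intro k hk
    rw [le_div_iff₀ (by positivity), mul_comm]; exact (hmom k hk).1
  have hsum : ∀ (f : ℕ → ℝ) (b : ℝ), 0 ≤ b → (∀ k < m, f k ≤ b / N) → ∑ k ∈ Finset.range m, f k ≤ b := by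
    intro f b hb hf
    calc ∑ k ∈ Finset.range m, f k ≤ ∑ k ∈ Finset.range m, b / N :=
          Finset.sum_le_sum fun k hk => hf k (Finset.mem_range.1 hk)
      _ = (m:ℝ) * (b / N) := by simp
      _ ≤ (N:ℝ) * (b / N) := by gcongr
      _ = b := by field_simp
  -- martingale part
  have iZ : Integrable (fun ω => |ZZ N m ω|) (QQ N) := by simpa using (ZZ_int hm 1).abs
  have iZ2 : Integrable (fun ω => |ZZ N m ω| ^ 2) (QQ N) := by simpa only [sq_abs] using ZZ_int hm 2
  have bZ : ∫ ω, |ZZ N m ω| ∂QQ N ≤ (1 + C) * s := by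
    have h1 := amgm iZ iZ2 hs0
    have h2 : ∫ ω, |ZZ N m ω| ^ 2 ∂QQ N ≤ C * s ^ 2 := by
      simp only [sq_abs]
      refine (ZZ_var hm).trans ?_
      exact hsum _ _ (by positivity) fun k hk => hMb k hk.le
    have h3 : (∫ ω, |ZZ N m ω| ^ 2 ∂QQ N) / s ≤ C * s := by
      rw [div_le_iff₀ hs0]; linarith
    linarith
  -- error part
  have iA : ∀ k < m, Integrable (fun ω => |(N:ℝ) * G 2 (N-k) (st N ω k) - ak N k| / (4 * N)) (QQ N) := by
    intro k hk
    have h := A_int (N := N) (k := k) (by omega) (ak N k) 1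
    rw [← map_st N k (by omega)] at h
    have := h.comp_measurable (measurable_st N k)
    simp only [pow_one] at this
    exact this.div_const _
  have iM : ∀ k < m, Integrable (fun ω => M (N-k) (st N ω k) ^ 2 / 2) (QQ N) := fun k hk =>
    (M_st_int (by omega) 2).div_const _
  have iS : ∀ k ∈ Finset.range m, Integrable (fun ω => |(N:ℝ) * G 2 (N-k) (st N ω k) - ak N k| / (4 * N) + M (N-k) (st N ω k) ^ 2 / 2) (QQ N) :=
    fun k hk => (iA k (Finset.mem_range.1 hk)).add (iM k (Finset.mem_range.1 hk))
  have iR : Integrable (fun ω => RR N m ω) (QQ N) := by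
    unfold RR
    exact integrable_finsetSum _ iS
  have bR : ∫ ω, RR N m ω ∂QQ N ≤ (1 + C) * s := by
    unfold RR
    rw [integral_finsetSum _ iS]
    refine hsum _ _ (by positivity) fun k hk => ?_
    rw [integral_add (iA k hk) (iM k hk), integral_div, integral_div,
      int_st (show k ≤ N by omega) (f := fun p => |(N:ℝ) * G 2 (N-k) p - ak N k|) (by fun_prop),
      int_st (show k ≤ N by omega) (f := fun p => M (N-k) p ^ 2) ((measurable_M _).pow_const 2)]
    have := (isLaw_law (mu0_law N) k (show k ≤ N by omega)).prob
    have i1 := A_int (N := N) (k := k) (by omega) (ak N k) 1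
    simp only [pow_one] at i1
    have h1 := amgm i1 (A_int (N := N) (k := k) (by omega) (ak N k) 2) hs0
    simp only [sq_abs] at h1
    have h2 : (∫ p, ((N:ℝ) * G 2 (N-k) p - ak N k) ^ 2 ∂law N (mu0 N) k) / s ≤ C * s := by
      rw [div_le_iff₀ hs0]; linarith [(hmom k hk.le).2]
    have h3 : (∫ p, |(N:ℝ) * G 2 (N-k) p - ak N k| ∂law N (mu0 N) k) / (4 * N) ≤ ((1 + C) * s) / (4 * N) := by
      gcongr; linarith
    have h4 := hMb k hk.le
    have h5 : C * s ^ 2 / N ≤ C * s / N := by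
      gcongr; nlinarith
    have h6 : ((1 + C) * s) / (4 * N) = (1/4) * ((1 + C) * s / N) := by field_simp
    have h7 : C * s / N ≤ (1 + C) * s / N := by gcongr; linarith
    have h8 : 0 ≤ (1 + C) * s / N := by positivity
    linarith
  refine ⟨iZ.add iR, ?_⟩
  rw [integral_add iZ iR]
  linarith

end Greedy

open Greedy
/-- For the greedy algorithm `closest` with threshold `∞` on `N` uniform offline and
online points, the total matching length `ρ_N(t)` after `⌊tN⌋` arrivals converges in
probability to `(1/2)·(1/(1-t) − 1)` for every fixed `t ∈ [0,1)`. -/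
theorem stmt8 (t : ℝ) (ht : t ∈ Set.Ico (0 : ℝ) 1) (ε : ℝ) (hε : 0 < ε) :
    Filter.Tendsto
      (fun N : ℕ =>
        ((unifCube N).prod (unifCube N))
          {ω | ε < |closestLength ⊤
              (Finset.image ω.1 Finset.univ)
              (fun i => if h : i < N then ω.2 ⟨i, h⟩ else 0)
              ⌊t * N⌋₊
            - (1 / 2) * (1 / (1 - t) - 1)|})
      Filter.atTop (nhds 0) := by
  obtain ⟨ht0, ht1⟩ := ht
  have hδ : 0 < 1 - t := by linarith
  obtain ⟨C, hC, hmom⟩ := moments hδ (by linarith)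
  have hcast : Filter.Tendsto (fun N : ℕ => (N:ℝ)) Filter.atTop Filter.atTop :=
    tendsto_natCast_atTop_atTop
  have hsq : Filter.Tendsto (fun N : ℕ => √(N:ℝ)) Filter.atTop Filter.atTop :=
    Real.tendsto_sqrt_atTop.comp hcast
  have hsq2 : Filter.Tendsto (fun N : ℕ => √(√(N:ℝ))) Filter.atTop Filter.atTop :=
    Real.tendsto_sqrt_atTop.comp hsq
  have hbd : Filter.Tendsto (fun N : ℕ => ENNReal.ofReal ((2 / ε) * (2 * (1 + C) * (1 / √(√(N:ℝ))))))
      Filter.atTop (nhds 0) := by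
    have h1 : Filter.Tendsto (fun N : ℕ => (2 / ε) * (2 * (1 + C) * (1 / √(√(N:ℝ)))))
        Filter.atTop (nhds ((2/ε) * (2 * (1 + C) * 0))) := by
      refine Filter.Tendsto.const_mul _ (Filter.Tendsto.const_mul _ ?_)
      simp only [one_div]
      exact hsq2.inv_tendsto_atTop
    have h2 := ENNReal.tendsto_ofReal h1
    simpa using h2
  have hfl : Filter.Tendsto (fun N : ℕ => (⌊t * (N:ℝ)⌋₊ : ℝ) / N) Filter.atTop (nhds t) :=
    (tendsto_nat_floor_mul_div_atTop ht0).comp hcast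
  have hlim : Filter.Tendsto (fun N : ℕ => (1/2:ℝ) * (1 / (1 - (⌊t * (N:ℝ)⌋₊ : ℝ) / N) - 1))
      Filter.atTop (nhds ((1 / 2) * (1 / (1 - t) - 1))) := by
    refine Filter.Tendsto.const_mul _ (Filter.Tendsto.sub_const ?_ _)
    exact Filter.Tendsto.div tendsto_const_nhds (hfl.const_sub 1) hδ.ne'
  have hclose := (Metric.tendsto_nhds.1 hlim) (ε/2) (by positivity)
  refine tendsto_of_tendsto_of_tendsto_of_le_of_le' tendsto_const_nhds hbd
    (Filter.Eventually.of_forall fun N => zero_le) ?_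
  filter_upwards [hclose, hsq.eventually_ge_atTop C, hcast.eventually_ge_atTop (4 / (1 - t)),
    Filter.eventually_ge_atTop 1] with N hcl hCN h4 hN
  have h4' : 4 ≤ (1 - t) * N := by
    rw [div_le_iff₀ hδ] at h4; linarith
  have hN0 : (0:ℝ) ≤ N := Nat.cast_nonneg N
  set m := ⌊t * (N:ℝ)⌋₊ with hm
  have hmt : (m:ℝ) ≤ t * N := Nat.floor_le (by positivity)
  have hmN : m + 1 ≤ N := by
    have : ((m + 1 : ℕ) : ℝ) ≤ N := by push_cast; linarith
    exact_mod_cast this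
  have hmo := hmom N m (mu0 N) (mu0_law N) (m8 hN) (m2 hN) (m4 hN) (by linarith) h4' hCN
  obtain ⟨hInt, hle⟩ := core hC hN (by omega) (m := m) hmo
  rw [← SS_eq hmN, Real.dist_eq] at hcl
  rw [unif_prod_eq (unifCube N)]
  swap
  · intro σ x b
    have : Finset.image (x ∘ σ) Finset.univ = Finset.image x Finset.univ := by
      ext z
      simp only [Finset.mem_image, Finset.mem_univ, true_and, Function.comp]
      exact ⟨fun ⟨a, h⟩ => ⟨σ a, h⟩, fun ⟨a, h⟩ => ⟨σ.symm a, by simpa using h⟩⟩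
    simp only [Set.mem_ofPred_eq, this]
  have hnn : ∀ ω, 0 ≤ |ZZ N m ω| + RR N m ω := by
    intro ω
    refine add_nonneg (abs_nonneg _) ?_
    unfold RR
    exact Finset.sum_nonneg fun k _ => by positivity
  have hmk := mul_meas_ge_le_integral_of_nonneg (Filter.Eventually.of_forall hnn) hInt (ε/2)
  calc _ ≤ QQ N {ω | ε/2 ≤ |ZZ N m ω| + RR N m ω} := by
        refine measure_mono_ae ?_
        filter_upwards [show ∀ᵐ ω ∂((nu N).prod (unifCube N)), Valid N (pos N ω.1) from ae_QQ N] with ω hω hE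
        change ε < |(closestState ⊤ (Finset.image ω.1 Finset.univ) (ye N ω.2) m).2.2 - _| at hE
        rw [(closestState_eq hω m (by omega)).2] at hE
        have he := err (show m ≤ N by omega) hω
        change ε/2 ≤ |ZZ N m ω| + RR N m ω
        have := abs_sub_le (∑ i ∈ Finset.range m, dd N i ω) (SS N m) ((1 / 2) * (1 / (1 - t) - 1))
        linarith
    _ = ENNReal.ofReal ((QQ N).real {ω | ε/2 ≤ |ZZ N m ω| + RR N m ω}) := by simp
    _ ≤ _ := by
        refine ENNReal.ofReal_le_ofReal ?_
        have h5 := hmk.trans hle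
        rw [← inv_div ε 2, ← div_eq_inv_mul, le_div_iff₀ (by positivity)]
        linarith
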